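/- arXiv:math/0501480 — 8 statements merged into one kernel-verified Lean document; each statement's English description precedes it below -/
import Mathlib

section
/- For n ≥ 4, let K be the kernel of the composition B_n → ℤ → ℤ/n(n-1)ℤ, where the first map is the length homomorphism L (determined by σ_i ↦ 1) and the second is reduction modulo n(n-1). Then K is a finite index subgroup of B_n containing Z = Z(B_n), the map K → Z given by g ↦ z^{L(g)/n(n-1)} (where z = (σ_1⋯σ_{n-1})^n generates Z) is a group homomorphism splitting the central extension 1 → Z → K → K/Z → 1, and consequently K is isomorphic to the external direct product (K/Z) × Z, where K/Z is a finite index subgroup of B_n/Z. In particular, B_n is abstractly commensurable to (K/Z) × ℤ. -/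
/-- The braid relations on `m` generators `σ_1, …, σ_m` (so this presents `B_{m+1}`). -/
def braidRels (m : ℕ) : Set (FreeGroup (Fin m)) :=
  {r | (∃ i j : Fin m, (j : ℕ) = (i : ℕ) + 1 ∧
        r = .of i * .of j * .of i * (.of j * .of i * .of j)⁻¹) ∨
       (∃ i j : Fin m, (i : ℕ) + 1 < (j : ℕ) ∧
        r = .of i * .of j * (.of j * .of i)⁻¹)}

/-- Artin's braid group on `n` strands, presented by generators `σ_1, …, σ_{n-1}`
and the braid relations. -/
abbrev BraidGroup (n : ℕ) : Type := PresentedGroup (braidRels (n - 1))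

/-- The standard generator `σ_i` (indexed by `i : Fin (n-1)`) of the braid group. -/
def σ {n : ℕ} (i : Fin (n - 1)) : BraidGroup n := PresentedGroup.of i

/-- The element `(σ_1 σ_2 ⋯ σ_{n-1})^n`, which generates the center of `B_n` for `n ≥ 3`. -/
def fullTwist (n : ℕ) : BraidGroup n := (List.ofFn (σ (n := n))).prod ^ n

/-- The length homomorphism `L : B_n → ℤ`, `σ_i ↦ 1`. -/
noncomputable def lengthHom (n : ℕ) : BraidGroup n →* Multiplicative ℤ :=
  PresentedGroup.toGroup (f := fun _ => Multiplicative.ofAdd (1 : ℤ))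
    (by rintro r (⟨i, j, -, rfl⟩ | ⟨i, j, -, rfl⟩) <;> simp <;> group)

/-- The kernel `K` of the composition `B_n → ℤ → ℤ/n(n-1)ℤ` of the length
homomorphism with reduction mod `n(n-1)`. -/
noncomputable def lengthKer (n : ℕ) : Subgroup (BraidGroup n) :=
  MonoidHom.ker
    ((AddMonoidHom.toMultiplicative (Int.castAddHom (ZMod (n * (n - 1))))).comp
      (lengthHom n))


/-! ### The positive braid monoid -/

def pRel (m : ℕ) (u v : FreeMonoid (Fin m)) : Prop :=
  (∃ i j : Fin m, (j : ℕ) = (i : ℕ) + 1 ∧ u = .of i * .of j * .of i ∧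
    v = .of j * .of i * .of j) ∨
  (∃ i j : Fin m, (i : ℕ) + 1 < (j : ℕ) ∧ u = .of i * .of j ∧ v = .of j * .of i)

abbrev PM (m : ℕ) : Type := PresentedMonoid (pRel m)

def ps {m : ℕ} (i : Fin m) : PM m := PresentedMonoid.of (pRel m) i

def pAdj {m : ℕ} (i j : Fin m) : Prop := (i : ℕ) + 1 = j ∨ (j : ℕ) + 1 = i

def pFar {m : ℕ} (i j : Fin m) : Prop := (i : ℕ) + 1 < j ∨ (j : ℕ) + 1 < i

theorem pAdj.symm {m : ℕ} {i j : Fin m} (h : pAdj i j) : pAdj j i := Or.symm h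
theorem pFar.symm {m : ℕ} {i j : Fin m} (h : pFar i j) : pFar j i := Or.symm h

theorem pm_braid' {m : ℕ} {i j : Fin m} (h : (j : ℕ) = (i : ℕ) + 1) :
    ps i * ps j * ps i = ps j * ps i * ps j := by
  have := PresentedMonoid.mk_eq_mk_of_rel (rels := pRel m) (Or.inl ⟨i, j, h, rfl, rfl⟩)
  simp only [map_mul] at this
  exact this

theorem pm_comm' {m : ℕ} {i j : Fin m} (h : (i : ℕ) + 1 < (j : ℕ)) :
    ps i * ps j = ps j * ps i := by
  have := PresentedMonoid.mk_eq_mk_of_rel (rels := pRel m) (Or.inr ⟨i, j, h, rfl, rfl⟩)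
  simp only [map_mul] at this
  exact this

theorem pm_comm {m : ℕ} {i j : Fin m} (h : pFar i j) : ps i * ps j = ps j * ps i := by
  rcases h with h | h
  · exact pm_comm' h
  · exact (pm_comm' h).symm

theorem pm_braid {m : ℕ} {i j : Fin m} (h : pAdj i j) :
    ps i * ps j * ps i = ps j * ps i * ps j := by
  rcases h with h | h
  · exact pm_braid' h.symm
  · exact (pm_braid' h.symm).symm

theorem pm_commx {m : ℕ} {i j : Fin m} (h : pFar i j) (x : PM m) :
    ps i * (ps j * x) = ps j * (ps i * x) := by
  rw [← mul_assoc, pm_comm h, mul_assoc]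

theorem pm_braidx {m : ℕ} {i j : Fin m} (h : pAdj i j) (x : PM m) :
    ps i * (ps j * (ps i * x)) = ps j * (ps i * (ps j * x)) := by
  have := congrArg (· * x) (pm_braid h)
  simpa only [mul_assoc] using this

noncomputable def pLen (m : ℕ) : PM m →* Multiplicative ℕ :=
  PresentedMonoid.lift (fun _ => Multiplicative.ofAdd 1) (by
    rintro a b (⟨i, j, -, rfl, rfl⟩ | ⟨i, j, -, rfl, rfl⟩) <;> simp)

noncomputable def ln {m : ℕ} (x : PM m) : ℕ := Multiplicative.toAdd (pLen m x)

@[simp] theorem ln_mul {m : ℕ} (x y : PM m) : ln (x * y) = ln x + ln y := by simp [ln]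
@[simp] theorem ln_one {m : ℕ} : ln (1 : PM m) = 0 := by simp [ln]
@[simp] theorem ln_ps {m : ℕ} (i : Fin m) : ln (ps i) = 1 := rfl
@[simp] theorem ln_pow {m : ℕ} (x : PM m) (k : ℕ) : ln (x ^ k) = k * ln x := by simp [ln]

theorem pm_cases {m : ℕ} (x : PM m) : x = 1 ∨ ∃ i y, x = ps i * y := by
  obtain ⟨u, rfl⟩ := PresentedMonoid.surjective_mk x
  cases u using FreeMonoid.casesOn with
  | one => exact Or.inl rfl
  | of_mul a u => exact Or.inr ⟨a, PresentedMonoid.mk _ u, rfl⟩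

open Classical in
noncomputable def pL {m : ℕ} (i j : Fin m) : PM m :=
  if i = j then 1 else if pAdj i j then ps j * ps i else ps j

theorem pL_self {m : ℕ} (i : Fin m) : pL i i = 1 := by simp [pL]
theorem pL_adj {m : ℕ} {i j : Fin m} (h : pAdj i j) : pL i j = ps j * ps i := by
  have : i ≠ j := by rintro rfl; rcases h with h | h <;> omega
  simp [pL, h, this]
theorem pL_far {m : ℕ} {i j : Fin m} (h : pFar i j) : pL i j = ps j := by
  have h1 : i ≠ j := by rintro rfl; rcases h with h | h <;> omega
  have h2 : ¬ pAdj i j := by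
    intro h'; rcases h with h | h <;> rcases h' with h' | h' <;> omega
  simp [pL, h1, h2]

theorem p_tri {m : ℕ} (i j : Fin m) : i = j ∨ pAdj i j ∨ pFar i j := by
  unfold pAdj pFar
  by_cases h : i = j
  · exact Or.inl h
  · have : (i : ℕ) ≠ j := fun h' => h (Fin.ext h')
    omega

def pG (m N : ℕ) : Prop := ∀ (a b : Fin m) (x y : PM m), ln x < N → ps a * x = ps b * y →
  ∃ w, x = pL a b * w ∧ y = pL b a * w

section cube
variable {m N : ℕ} (G : pG m N) {a b c : Fin m}
include G

theorem pG_cancel {x y : PM m} (h : ln x < N) (e : ps a * x = ps a * y) : x = y := by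
  obtain ⟨w, h1, h2⟩ := G a a x y h e
  simp [pL_self] at h1 h2
  rw [h1, h2]

theorem pG_far {x y : PM m} (hf : pFar a b) (h : ln x < N) (e : ps a * x = ps b * y) :
    ∃ w, x = ps b * w ∧ y = ps a * w := by
  obtain ⟨w, h1, h2⟩ := G a b x y h e
  rw [pL_far hf] at h1
  rw [pL_far hf.symm] at h2
  exact ⟨w, h1, h2⟩

theorem pG_adj {x y : PM m} (hf : pAdj a b) (h : ln x < N) (e : ps a * x = ps b * y) :
    ∃ w, x = ps b * (ps a * w) ∧ y = ps a * (ps b * w) := by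
  obtain ⟨w, h1, h2⟩ := G a b x y h e
  rw [pL_adj hf, mul_assoc] at h1
  rw [pL_adj hf.symm, mul_assoc] at h2
  exact ⟨w, h1, h2⟩

/-- The case where `a` adjacent to `c`, others commute. -/
theorem cube2 (hac : pAdj a c) (hbc : pFar b c) (hab : pFar a b) {w1 w2 : PM m}
    (hN : ln w1 + 2 ≤ N) (e : ps a * (ps c * w1) = ps b * w2) :
    ∃ w, ps c * (ps a * w1) = ps b * w ∧ ps c * w2 = ps a * w := by
  obtain ⟨t, h1, h2⟩ := pG_far G hab (by simp; omega) e
  obtain ⟨s, h3, h4⟩ := pG_far G hbc.symm (by omega) h1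
  refine ⟨ps c * (ps a * s), ?_, ?_⟩
  · rw [h3, pm_commx hab, pm_commx hbc]
  · rw [h2, h4, pm_braidx hac]

theorem cube6 (hac : pAdj a c) (hbc : pFar b c) (hab : pAdj a b) {w1 w2 : PM m}
    (hN : ln w1 + 2 ≤ N) (e : ps a * (ps c * w1) = ps b * w2) :
    ∃ w, ps c * (ps a * w1) = ps b * (ps a * w) ∧ ps c * w2 = ps a * (ps b * w) := by
  obtain ⟨t, h1, h2⟩ := pG_adj G hab (by simp; omega) e
  obtain ⟨s, h3, h4⟩ := pG_far G hbc.symm (by omega) h1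
  have l1 := congrArg ln h1
  simp at l1
  obtain ⟨r, h5, h6⟩ := pG_adj G hac (by omega) h4
  refine ⟨ps c * (ps a * (ps b * r)), ?_, ?_⟩
  · rw [h3, h6, pm_braidx hab, pm_commx hbc r, pm_commx hbc.symm, pm_braidx hac.symm]
  · rw [h2, h5, pm_commx hbc, pm_braidx hac.symm, pm_braidx hab, pm_commx hbc.symm]

theorem cube5 (hac : pAdj a c) (hbc : pAdj b c) (hab : pFar a b) {w1 w2 : PM m}
    (hN : ln w1 + 2 ≤ N) (e : ps a * (ps c * w1) = ps b * (ps c * w2)) :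
    ∃ w, ps c * (ps a * w1) = ps b * w ∧ ps c * (ps b * w2) = ps a * w := by
  have l0 := congrArg ln e
  simp at l0
  obtain ⟨t, h1, h2⟩ := pG_far G hab (by simp; omega) e
  obtain ⟨s, h3, h4⟩ := pG_adj G hbc.symm (by omega) h1
  obtain ⟨s', h5, h6⟩ := pG_adj G hac.symm (by omega) h2
  have l1 := congrArg ln h3
  simp at l1
  have h7 := pG_cancel G (by simp; omega) (h4.symm.trans h6)
  obtain ⟨r, h8, h9⟩ := pG_far G hab.symm (by omega) h7
  refine ⟨ps c * (ps b * (ps a * (ps c * r))), ?_, ?_⟩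
  · rw [h3, h8, pm_commx hab, pm_braidx hac.symm.symm, pm_braidx hbc.symm]
  · rw [h5, h9, pm_commx hab.symm, pm_braidx hbc, pm_braidx hac.symm, pm_commx hab]

theorem cube {u v v' w1 w2 : PM m} (hN : ln v' ≤ N)
    (h1 : u = pL a c * w1) (h2 : v' = pL c a * w1) (h3 : v' = pL c b * w2)
    (h4 : v = pL b c * w2) : ∃ w, u = pL a b * w ∧ v = pL b a * w := by
  have e := h2.symm.trans h3
  have l2 := congrArg ln h2
  have l3 := congrArg ln h3
  rcases p_tri a c with rfl | hac | hac
  · simp [pL_self] at h1 h2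
    exact ⟨w2, by rw [h1, ← h2, h3], h4⟩
  all_goals rcases p_tri b c with rfl | hbc | hbc
  · simp [pL_self] at h3 h4
    exact ⟨w1, h1, by rw [h4, ← h3, h2]⟩
  · rw [pL_adj hac.symm] at e l2 h2
    rw [pL_adj hbc.symm] at e l3
    rw [pL_adj hac] at h1
    rw [pL_adj hbc] at h4
    simp only [mul_assoc, ln_mul, ln_ps] at *
    rcases p_tri a b with rfl | hab | hab
    · have e1 := pG_cancel G (by simp; omega) e
      have e2 := pG_cancel G (by omega) e1
      exact ⟨u, by simp [pL_self], by simp [pL_self, h4, h1, e2]⟩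
    · exfalso
      unfold pAdj at *
      omega
    · rw [pL_far hab, pL_far hab.symm, h1, h4]
      exact cube5 G hac hbc hab (by omega) e
  · rw [pL_adj hac.symm] at e l2 h2
    rw [pL_far hbc.symm] at e l3
    rw [pL_adj hac] at h1
    rw [pL_far hbc] at h4
    simp only [mul_assoc, ln_mul, ln_ps] at *
    rcases p_tri a b with rfl | hab | hab
    · exfalso; unfold pAdj at hac; unfold pFar at hbc; omega
    · rw [pL_adj hab, pL_adj hab.symm, h1, h4]
      simpa only [mul_assoc] using cube6 G hac hbc hab (by omega) e
    · rw [pL_far hab, pL_far hab.symm, h1, h4]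
      exact cube2 G hac hbc hab (by omega) e
  · simp [pL_self] at h3 h4
    exact ⟨w1, h1, by rw [h4, ← h3, h2]⟩
  · rw [pL_far hac.symm] at e l2 h2
    rw [pL_adj hbc.symm] at e l3
    rw [pL_far hac] at h1
    rw [pL_adj hbc] at h4
    simp only [mul_assoc, ln_mul, ln_ps] at *
    rcases p_tri a b with rfl | hab | hab
    · exfalso; unfold pAdj at hbc; unfold pFar at hac; omega
    · rw [pL_adj hab, pL_adj hab.symm, h1, h4]
      obtain ⟨w, e1, e2⟩ := cube6 G hbc hac hab.symm (by omega) e.symm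
      exact ⟨w, by simpa only [mul_assoc] using e2, by simpa only [mul_assoc] using e1⟩
    · rw [pL_far hab, pL_far hab.symm, h1, h4]
      obtain ⟨w, e1, e2⟩ := cube2 G hbc hac hab.symm (by omega) e.symm
      exact ⟨w, e2, e1⟩
  · rw [pL_far hac.symm] at e l2 h2
    rw [pL_far hbc.symm] at e l3
    rw [pL_far hac] at h1
    rw [pL_far hbc] at h4
    simp only [ln_mul, ln_ps] at *
    rcases p_tri a b with rfl | hab | hab
    · have e1 := pG_cancel G (by omega) e
      exact ⟨u, by simp [pL_self], by simp [pL_self, h4, h1, e1]⟩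
    · rw [pL_adj hab, pL_adj hab.symm, h1, h4]
      obtain ⟨w, e1, e2⟩ := pG_adj G hab (by omega) e
      refine ⟨ps c * w, ?_, ?_⟩
      · rw [e1, mul_assoc, pm_commx hbc.symm, pm_commx hac.symm]
      · rw [e2, mul_assoc, pm_commx hac.symm, pm_commx hbc.symm]
    · rw [pL_far hab, pL_far hab.symm, h1, h4]
      obtain ⟨w, e1, e2⟩ := pG_far G hab (by omega) e
      refine ⟨ps c * w, ?_, ?_⟩
      · rw [e1, pm_commx hbc.symm]
      · rw [e2, pm_commx hac.symm]
end cube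

def pT {m : ℕ} (u v : FreeMonoid (Fin m)) : Prop :=
  (u = 1 ∧ v = 1) ∨ ∃ (a b : Fin m) (u0 v0 : FreeMonoid (Fin m)) (w : PM m),
    u = .of a * u0 ∧ v = .of b * v0 ∧
    PresentedMonoid.mk (pRel m) u0 = pL a b * w ∧ PresentedMonoid.mk (pRel m) v0 = pL b a * w

theorem fm_cons_inj {m : ℕ} {a b : Fin m} {u v : FreeMonoid (Fin m)}
    (h : FreeMonoid.of a * u = FreeMonoid.of b * v) : a = b ∧ u = v := by
  have := congrArg FreeMonoid.toList h
  simp at this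
  exact this

theorem ln_mk_of_mul {m : ℕ} (a : Fin m) (u : FreeMonoid (Fin m)) :
    ln (PresentedMonoid.mk (pRel m) (.of a * u)) = ln (PresentedMonoid.mk (pRel m) u) + 1 := by
  rw [map_mul, ln_mul, add_comm]
  rfl

theorem pT_of {m N : ℕ} (G : pG m N) {u v : FreeMonoid (Fin m)} (h : ConGen.Rel (pRel m) u v) :
    ln (PresentedMonoid.mk (pRel m) u) ≤ N + 1 → pT u v := by
  induction h with
  | of x y h =>
    intro _
    right
    rcases h with ⟨i, j, h, rfl, rfl⟩ | ⟨i, j, h, rfl, rfl⟩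
    · refine ⟨i, j, .of j * .of i, .of i * .of j, 1, by simp [mul_assoc], by simp [mul_assoc], ?_, ?_⟩
      · rw [pL_adj (Or.inl h.symm)]; simp; rfl
      · rw [pL_adj (Or.inr h.symm)]; simp; rfl
    · refine ⟨i, j, .of j, .of i, 1, rfl, rfl, ?_, ?_⟩
      · rw [pL_far (Or.inl h)]; simp; rfl
      · rw [pL_far (Or.inr h)]; simp; rfl
  | refl x =>
    intro _
    cases x using FreeMonoid.casesOn with
    | one => exact Or.inl ⟨rfl, rfl⟩
    | of_mul a u => exact Or.inr ⟨a, a, u, u, PresentedMonoid.mk _ u, rfl, rfl, by simp [pL_self], by simp [pL_self]⟩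
  | @symm x y h ih =>
    intro hl
    have e : PresentedMonoid.mk (pRel m) x = PresentedMonoid.mk (pRel m) y :=
      PresentedMonoid.mk_eq_mk_iff.2 h
    rw [← e] at hl
    rcases ih hl with ⟨h1, h2⟩ | ⟨a, b, u0, v0, w, h1, h2, h3, h4⟩
    · exact Or.inl ⟨h2, h1⟩
    · exact Or.inr ⟨b, a, v0, u0, w, h2, h1, h4, h3⟩
  | @trans x y z h h' ih ih' =>
    intro hl
    have e : PresentedMonoid.mk (pRel m) x = PresentedMonoid.mk (pRel m) y :=
      PresentedMonoid.mk_eq_mk_iff.2 h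
    have hl' := hl
    rw [e] at hl'
    rcases ih hl with ⟨h1, h2⟩ | ⟨a, c, u0, v0, w, h1, h2, h3, h4⟩
    · rw [h1, ← h2]; exact ih' hl'
    · rcases ih' hl' with ⟨h1', h2'⟩ | ⟨c', b, u1, v1, w', h1', h2', h3', h4'⟩
      · rw [h2', ← h1']; exact ih hl
      · obtain ⟨rfl, rfl⟩ := fm_cons_inj (h2.symm.trans h1')
        rw [h2, ln_mk_of_mul] at hl'
        obtain ⟨w2, e1, e2⟩ := cube G (by omega) h3 h4 h3' h4'
        exact Or.inr ⟨a, b, u0, v1, w2, h1, h2', e1, e2⟩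
  | @mul w x y z h h' ih ih' =>
    intro hl
    rw [map_mul, ln_mul] at hl
    have e' : PresentedMonoid.mk (pRel m) y = PresentedMonoid.mk (pRel m) z :=
      PresentedMonoid.mk_eq_mk_iff.2 h'
    rcases ih (by omega) with ⟨rfl, rfl⟩ | ⟨a, c, u0, v0, t, h1, h2, h3, h4⟩
    · simpa using ih' (by omega)
    · refine Or.inr ⟨a, c, u0 * y, v0 * z, t * PresentedMonoid.mk (pRel m) y, by rw [h1, mul_assoc], by rw [h2, mul_assoc], ?_, ?_⟩
      · rw [map_mul, h3, mul_assoc]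
      · rw [map_mul, h4, mul_assoc, e']

theorem pG_all (m N : ℕ) : pG m N := by
  induction N with
  | zero => intro a b x y h; omega
  | succ N ih =>
    intro a b x y h e
    obtain ⟨u, rfl⟩ := PresentedMonoid.surjective_mk x
    obtain ⟨v, rfl⟩ := PresentedMonoid.surjective_mk y
    have e' : PresentedMonoid.mk (pRel m) (.of a * u) = PresentedMonoid.mk (pRel m) (.of b * v) := by
      simp only [map_mul]; exact e
    have hT := pT_of ih (PresentedMonoid.mk_eq_mk_iff.1 e') (by rw [ln_mk_of_mul]; omega)
    rcases hT with ⟨h1, _⟩ | ⟨a', b', u0, v0, w, h1, h2, h3, h4⟩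
    · have := congrArg FreeMonoid.toList h1
      simp at this
    · obtain ⟨rfl, rfl⟩ := fm_cons_inj h1
      obtain ⟨rfl, rfl⟩ := fm_cons_inj h2
      exact ⟨w, h3, h4⟩

theorem pm_cancel_ps {m : ℕ} {a : Fin m} {x y : PM m} (e : ps a * x = ps a * y) : x = y :=
  pG_cancel (pG_all m (ln x + 1)) (by omega) e

theorem pm_far {m : ℕ} {a b : Fin m} {x y : PM m} (hf : pFar a b) (e : ps a * x = ps b * y) :
    ∃ w, x = ps b * w ∧ y = ps a * w :=
  pG_far (pG_all m (ln x + 1)) hf (by omega) e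

theorem pm_adj {m : ℕ} {a b : Fin m} {x y : PM m} (hf : pAdj a b) (e : ps a * x = ps b * y) :
    ∃ w, x = ps b * (ps a * w) ∧ y = ps a * (ps b * w) :=
  pG_adj (pG_all m (ln x + 1)) hf (by omega) e

theorem pm_ind {m : ℕ} {C : PM m → Prop} (x : PM m) (h1 : C 1) (h2 : ∀ i y, C y → C (ps i * y)) :
    C x := by
  induction hk : ln x generalizing x with
  | zero =>
    rcases pm_cases x with rfl | ⟨i, y, rfl⟩
    · exact h1
    · simp at hk
  | succ k ih =>
    rcases pm_cases x with rfl | ⟨i, y, rfl⟩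
    · exact h1
    · exact h2 _ _ (ih y (by simp at hk; omega))

theorem pm_cancel {m : ℕ} (a : PM m) {x y : PM m} (e : a * x = a * y) : x = y := by
  induction a using pm_ind with
  | h1 => simpa using e
  | h2 i y ih =>
    rw [mul_assoc, mul_assoc] at e
    exact ih (pm_cancel_ps e)

/-! ### Natural-number indexed generators, the Garside element and the full twist -/

noncomputable def pa (m k : ℕ) : PM m := if h : k < m then ps ⟨k, h⟩ else 1

theorem pa_eq {m k : ℕ} (h : k < m) : pa m k = ps ⟨k, h⟩ := by simp [pa, h]

theorem pa_fin {m : ℕ} (i : Fin m) : pa m i = ps i := by simp [pa]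

theorem pa_comm {m i j : ℕ} (h : i + 1 < j) : pa m i * pa m j = pa m j * pa m i := by
  by_cases hj : j < m
  · rw [pa_eq hj, pa_eq (by omega : i < m)]
    exact pm_comm (Or.inl h)
  · simp [pa, hj]

theorem pa_braid {m i : ℕ} (h : i + 1 < m) :
    pa m i * pa m (i+1) * pa m i = pa m (i+1) * pa m i * pa m (i+1) := by
  rw [pa_eq h, pa_eq (by omega : i < m)]
  exact pm_braid (Or.inl rfl)

theorem ln_pa {m k : ℕ} (h : k < m) : ln (pa m k) = 1 := by rw [pa_eq h]; simp

/-- `a_{k-1} ⋯ a_0` -/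
noncomputable def pc (m : ℕ) : ℕ → PM m
  | 0 => 1
  | k + 1 => pa m k * pc m k

/-- `a_0 ⋯ a_{k-1}` -/
noncomputable def pe (m : ℕ) : ℕ → PM m
  | 0 => 1
  | k + 1 => pe m k * pa m k

/-- `a_1 ⋯ a_k` -/
noncomputable def pf (m : ℕ) : ℕ → PM m
  | 0 => 1
  | k + 1 => pf m k * pa m (k + 1)

noncomputable def pD (m : ℕ) : ℕ → PM m
  | 0 => 1
  | k + 1 => pD m k * pc m (k + 1)

theorem pc_comm {m k j : ℕ} (h : k < j) : pc m k * pa m j = pa m j * pc m k := by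
  induction k with
  | zero => simp [pc]
  | succ k ih => rw [pc, mul_assoc, ih (by omega), ← mul_assoc, pa_comm (by omega), mul_assoc]

theorem pe_comm {m k j : ℕ} (h : k < j) : pe m k * pa m j = pa m j * pe m k := by
  induction k with
  | zero => simp [pe]
  | succ k ih => rw [pe, mul_assoc, pa_comm (by omega), ← mul_assoc, ih (by omega), mul_assoc]

theorem pD_comm {m k j : ℕ} (h : k < j) : pD m k * pa m j = pa m j * pD m k := by
  induction k with
  | zero => simp [pD]
  | succ k ih => rw [pD, mul_assoc, pc_comm (by omega), ← mul_assoc, ih (by omega), mul_assoc]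

theorem ln_pc {m k : ℕ} (h : k ≤ m) : ln (pc m k) = k := by
  induction k with
  | zero => simp [pc]
  | succ k ih => rw [pc, ln_mul, ih (by omega), ln_pa (by omega)]; omega

theorem ln_pe {m k : ℕ} (h : k ≤ m) : ln (pe m k) = k := by
  induction k with
  | zero => simp [pe]
  | succ k ih => rw [pe, ln_mul, ih (by omega), ln_pa (by omega)]

theorem ln_pD {m k : ℕ} (h : k ≤ m) : 2 * ln (pD m k) = k * (k + 1) := by
  induction k with
  | zero => simp [pD]
  | succ k ih => rw [pD, ln_mul, ln_pc (by omega), mul_add, ih (by omega)]; ring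

theorem pcc {m k : ℕ} (h : k < m) : pa m k ∣ pc m k * pc m (k + 1) := by
  induction k with
  | zero => simp [pc]
  | succ k ih =>
    obtain ⟨w, hw⟩ := ih (by omega)
    refine ⟨pa m k * pa m (k+1) * w, ?_⟩
    have : pc m (k+1) * pc m (k+1+1) = pa m k * pa m (k+1) * (pc m k * pc m (k+1)) := by
      rw [pc.eq_2 m (k+1), ← mul_assoc (pa m k * pa m (k+1)), mul_assoc (pa m k), ← pc_comm (by omega : k < k+1)]
      simp only [pc, mul_assoc]
    rw [this, hw]
    simp only [← mul_assoc]
    rw [pa_braid (by omega)]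

theorem pa_dvd_pD {m k j : ℕ} (hk : k ≤ m) (hj : j < k) : pa m j ∣ pD m k := by
  induction k with
  | zero => omega
  | succ k ih =>
    by_cases h : j < k
    · exact (ih (by omega) h).mul_right _
    · obtain rfl : j = k := by omega
      rcases j with _ | j
      · simp [pD, pc]
      · obtain ⟨w, hw⟩ := pcc (m := m) (k := j + 1) (by omega)
        rw [pD, pD, mul_assoc, hw, ← mul_assoc, pD_comm (by omega), mul_assoc]
        exact Dvd.intro _ rfl

theorem pa_cancel {m k : ℕ} {x y : PM m} (h : pa m k * x = pa m k * y) : x = y := pm_cancel _ h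

theorem pa_far {m i j : ℕ} {x : PM m} (hj : j < m) (h : i + 1 < j) (hd : pa m j ∣ pa m i * x) :
    pa m j ∣ x := by
  obtain ⟨y, hy⟩ := hd
  rw [pa_eq hj, pa_eq (by omega : i < m)] at hy
  obtain ⟨w, h1, h2⟩ := pm_far (Or.inl h) hy
  rw [h1, pa_eq hj]
  exact Dvd.intro _ rfl

theorem pc_peel {m k j : ℕ} {x : PM m} (hj : j < m) (h : k < j) (hd : pa m j ∣ pc m k * x) :
    pa m j ∣ x := by
  induction k with
  | zero => simpa [pc] using hd
  | succ k ih =>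
    rw [pc, mul_assoc] at hd
    exact ih (by omega) (pa_far hj (by omega) hd)

theorem pD_peel {m k j : ℕ} {x : PM m} (hj : j < m) (h : k < j) (hd : pa m j ∣ pD m k * x) :
    pa m j ∣ x := by
  induction k generalizing x with
  | zero => simpa [pD] using hd
  | succ k ih =>
    rw [pD, mul_assoc] at hd
    exact pc_peel hj (by omega) (ih (by omega) hd)

theorem pc_lcm {m k : ℕ} {y : PM m} (hk : k < m) (hd : pa m k ∣ pc m k * y) :
    pc m (k + 1) ∣ y := by
  induction k generalizing y with
  | zero => simpa [pc] using hd
  | succ k ih =>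
    obtain ⟨t, ht⟩ := hd
    rw [pc, mul_assoc, pa_eq hk, pa_eq (by omega : k < m)] at ht
    obtain ⟨v, h1, h2⟩ := pm_adj (Or.inl rfl) ht
    rw [← pa_eq, ← pa_eq] at h1
    obtain ⟨y', rfl⟩ := pc_peel (m := m) (k := k) hk (by omega) (Dvd.intro _ h1.symm)
    rw [← mul_assoc, pc_comm (by omega), mul_assoc] at h1
    obtain ⟨y'', rfl⟩ := ih (by omega) (Dvd.intro _ (pa_cancel h1).symm)
    rw [pc.eq_2 m (k+1), ← mul_assoc]
    exact Dvd.intro _ rfl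

theorem pD_lcm {m k : ℕ} {x : PM m} (hk : k ≤ m) (hd : ∀ j < k, pa m j ∣ x) : pD m k ∣ x := by
  induction k with
  | zero => simp [pD]
  | succ k ih =>
    obtain ⟨y, rfl⟩ := ih (by omega) (fun j hj => hd j (by omega))
    rw [pD]
    apply mul_dvd_mul_left
    have h := hd k (by omega)
    apply pc_lcm (by omega)
    rcases k with _ | k
    · simpa [pc, pD] using h
    · rw [pD, mul_assoc] at h
      exact pD_peel (by omega) (by omega) h

/-! The full twist -/

theorem pe_shift {m k i : ℕ} (hk : k ≤ m) (h : i + 2 ≤ k) :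
    pe m k * pa m i = pa m (i + 1) * pe m k := by
  induction k with
  | zero => omega
  | succ k ih =>
    by_cases hi : i + 2 ≤ k
    · rw [pe, mul_assoc, ← pa_comm (by omega), ← mul_assoc, ih (by omega) hi, mul_assoc]
    · obtain rfl : k = i + 1 := by omega
      rw [pe, pe, mul_assoc, mul_assoc, ← mul_assoc (pa m i), pa_braid (by omega)]
      simp only [← mul_assoc]
      rw [pe_comm (by omega)]

theorem pe_pf {m k : ℕ} : pe m (k + 1) = pa m 0 * pf m k := by
  induction k with
  | zero => simp [pe, pf]
  | succ k ih => rw [pe, ih, pf, mul_assoc]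

theorem pe_pe {m k : ℕ} (hk : k + 1 ≤ m) : pe m m * pe m k = pf m k * pe m m := by
  induction k with
  | zero => simp [pe, pf]
  | succ k ih =>
    rw [pe.eq_2 m k, ← mul_assoc, ih (by omega), mul_assoc, pe_shift le_rfl (by omega), pf, mul_assoc]

theorem pe_last (p : ℕ) : pe (p+1) (p+1) ^ 2 * pa (p+1) p = pa (p+1) 0 * pe (p+1) (p+1) ^ 2 := by
  have h1 : pe (p+1) (p+1) ^ 2 = pf (p+1) p * pe (p+1) (p+1) * pa (p+1) p := by
    rw [← pe_pe le_rfl, mul_assoc, ← pe.eq_2, sq]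
  conv_rhs => rw [h1, ← mul_assoc, ← mul_assoc, ← pe_pf]
  rw [sq]

theorem pe_pow {m i j : ℕ} (h : i + j < m) :
    pe m m ^ j * pa m i = pa m (i + j) * pe m m ^ j := by
  induction j with
  | zero => simp
  | succ j ih =>
    rw [pow_succ', mul_assoc, ih (by omega), ← mul_assoc, pe_shift le_rfl (by omega), mul_assoc]
    rfl

noncomputable def pz (m : ℕ) : PM m := pe m m ^ (m + 1)

theorem pz_pa {m i : ℕ} (h : i < m) : pz m * pa m i = pa m i * pz m := by
  obtain ⟨p, rfl⟩ : ∃ p, m = p + 1 := ⟨m - 1, by omega⟩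
  have e : pz (p+1) = pe (p+1) (p+1) ^ i * (pe (p+1) (p+1) ^ 2 * pe (p+1) (p+1) ^ (p - i)) := by
    rw [pz, ← pow_add, ← pow_add]; congr 1; omega
  have h1 : pe (p+1) (p+1) ^ (p-i) * pa (p+1) i = pa (p+1) p * pe (p+1) (p+1) ^ (p-i) := by
    rw [pe_pow (by omega)]; congr 2; omega
  have h2 : pe (p+1) (p+1) ^ i * pa (p+1) 0 = pa (p+1) i * pe (p+1) (p+1) ^ i := by
    rw [pe_pow (by omega)]; congr 2; omega
  rw [e, mul_assoc, mul_assoc, h1, ← mul_assoc (pe (p+1) (p+1) ^ 2), pe_last, mul_assoc,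
    ← mul_assoc, h2]
  simp only [mul_assoc]

theorem pz_comm {m : ℕ} (x : PM m) : pz m * x = x * pz m := by
  induction x using pm_ind with
  | h1 => simp
  | h2 i y ih =>
    rw [← pa_fin, ← mul_assoc, pz_pa i.2, mul_assoc, ih, mul_assoc]

theorem ln_pz (m : ℕ) : ln (pz m) = (m + 1) * m := by rw [pz, ln_pow, ln_pe le_rfl]

theorem pm_eq_one {m : ℕ} {x : PM m} (h : ln x = 0) : x = 1 := by
  rcases pm_cases x with rfl | ⟨i, y, rfl⟩
  · rfl
  · simp at h

theorem pm_eq_ps {m : ℕ} {x : PM m} (h : ln x = 1) : ∃ i, x = ps i := by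
  rcases pm_cases x with rfl | ⟨i, y, rfl⟩
  · simp at h
  · exact ⟨i, by rw [pm_eq_one (x := y) (by simp at h; omega), mul_one]⟩

/-- quasi-central elements -/
def QC {m : ℕ} (p : PM m) : Prop := ∀ i : Fin m, ∃ j : Fin m, ps i * p = p * ps j

theorem QC_step {m : ℕ} {p : PM m} (hp : QC p) {i j : Fin m} (h : pAdj i j) (hd : ps i ∣ p) :
    ps j ∣ p := by
  obtain ⟨q, hq⟩ := hd
  obtain ⟨j', hj'⟩ := hp j
  obtain ⟨i', hi'⟩ := hp i
  rw [hq, mul_assoc, ← hq] at hj'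
  obtain ⟨w, h1, -⟩ := pm_adj h.symm hj'
  have : p = ps j * (w * ps i') := by
    apply pm_cancel_ps (a := i)
    rw [hi']
    conv_lhs => rw [h1]
    simp only [mul_assoc]
  exact Dvd.intro _ this.symm

theorem QC_all {m : ℕ} {p : PM m} (hp : QC p) (h1 : p ≠ 1) : ∀ j < m, pa m j ∣ p := by
  rcases pm_cases p with h | ⟨i, y, hy⟩
  · exact absurd h h1
  have hi : pa m i ∣ p := by rw [pa_fin]; exact Dvd.intro _ hy.symm
  have up : ∀ k, (i : ℕ) + k < m → pa m (i + k) ∣ p := by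
    intro k
    induction k with
    | zero => intro _; exact hi
    | succ k ih =>
      intro hk
      have := ih (by omega)
      rw [pa_eq (by omega)] at this
      rw [pa_eq hk]
      exact QC_step hp (Or.inl rfl) this
  have down : ∀ k, k ≤ (i : ℕ) → pa m (i - k) ∣ p := by
    intro k
    induction k with
    | zero => intro _; exact hi
    | succ k ih =>
      intro hk
      have := ih (by omega)
      rw [pa_eq (by omega)] at this
      rw [pa_eq (by omega)]
      exact QC_step hp (Or.inr (by simp; omega)) this
  intro j hj
  by_cases h : (i : ℕ) ≤ j
  · have := up (j - i) (by omega)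
    rwa [show (i : ℕ) + (j - i) = j by omega] at this
  · have := down (i - j) (by omega)
    rwa [show (i : ℕ) - (i - j) = j by omega] at this

theorem QC_pz (m : ℕ) : QC (pz m) := fun i => ⟨i, (pz_comm _).symm⟩

theorem ps_dvd_pz {m : ℕ} (i : Fin m) : ps i ∣ pz m := by
  rw [← pa_fin]
  refine QC_all (QC_pz m) ?_ i i.2
  intro h
  have := congrArg ln h
  rw [ln_pz, ln_one] at this
  have hi := i.2
  rcases Nat.mul_eq_zero.1 this with h' | h' <;> omega

theorem pm_dvd_pz {m : ℕ} (x : PM m) : ∃ y k, x * y = pz m ^ k := by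
  induction x using pm_ind with
  | h1 => exact ⟨1, 0, by simp⟩
  | h2 i x ih =>
    obtain ⟨y, k, h⟩ := ih
    obtain ⟨d, hd⟩ := ps_dvd_pz i
    have hc : pz m ^ k * ps i = ps i * pz m ^ k := (Commute.pow_left (pz_comm (ps i)) k)
    refine ⟨y * d, k + 1, ?_⟩
    rw [mul_assoc, ← mul_assoc x, h, ← mul_assoc, ← hc, mul_assoc, ← hd, pow_succ]

theorem pzk_comm {m : ℕ} (x : PM m) (k : ℕ) : pz m ^ k * x = x * pz m ^ k :=
  Commute.pow_left (pz_comm x) k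

theorem pm_cancel_right {m : ℕ} (a : PM m) {x y : PM m} (e : x * a = y * a) : x = y := by
  obtain ⟨b, k, h⟩ := pm_dvd_pz a
  apply pm_cancel (pz m ^ k)
  rw [pzk_comm, pzk_comm, ← h, ← mul_assoc, ← mul_assoc, e]

theorem QC_pD (m : ℕ) : QC (pD m m) := by
  intro i
  have : pD m m ∣ ps i * pD m m := by
    apply pD_lcm le_rfl
    intro j hj
    have hjd := pa_dvd_pD le_rfl hj
    have hid := pa_dvd_pD (m := m) le_rfl i.2
    rw [pa_fin] at hid
    rw [pa_eq hj] at *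
    rcases p_tri i ⟨j, hj⟩ with h | h | h
    · rw [← h]; exact Dvd.intro _ rfl
    · obtain ⟨x, hx⟩ := hid
      obtain ⟨y, hy⟩ := hjd
      obtain ⟨w, h1, h2⟩ := pm_adj h (hx.symm.trans hy)
      rw [hy, h2, pm_braidx h]
      rw [← pm_braidx h, pm_braidx h]
      exact Dvd.intro _ rfl
    · obtain ⟨y, hy⟩ := hjd
      rw [hy, pm_commx h]
      exact Dvd.intro _ rfl
  obtain ⟨t, ht⟩ := this
  have l := congrArg ln ht
  simp at l
  obtain ⟨j, rfl⟩ := pm_eq_ps (x := t) (by omega)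
  exact ⟨j, ht⟩

theorem ps_inj_aux {m : ℕ} {i j : Fin m} (h : ps i = ps j) : i = j := by
  rcases p_tri i j with h' | h' | h'
  · exact h'
  · obtain ⟨w, h1, -⟩ := pm_adj (x := 1) (y := 1) h' (by simpa using h)
    have := congrArg ln h1
    simp at this
    omega
  · obtain ⟨w, h1, -⟩ := pm_far (x := 1) (y := 1) h' (by simpa using h)
    have := congrArg ln h1
    simp at this
    omega

theorem QC_pow {m : ℕ} (hm : 0 < m) (p : PM m) (hp : QC p) : ∃ k, p = pD m m ^ k := by
  choose f hf using QC_pD m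
  have finj : Function.Injective f := by
    intro i j hij
    have := hf i
    rw [hij, ← hf j] at this
    exact ps_inj_aux (pm_cancel_right _ this)
  have fsur := Finite.surjective_of_injective finj
  induction hl : ln p using Nat.strong_induction_on generalizing p with
  | _ N ih =>
    by_cases h1 : p = 1
    · exact ⟨0, by simp [h1]⟩
    obtain ⟨q, rfl⟩ := pD_lcm le_rfl (QC_all hp h1)
    have hD := ln_pD (m := m) le_rfl
    have : 0 < m * (m + 1) := by positivity
    have hq : QC q := by
      intro i
      obtain ⟨i, rfl⟩ := fsur i
      obtain ⟨j, hj⟩ := hp i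
      refine ⟨j, pm_cancel (pD m m) ?_⟩
      rw [← mul_assoc, ← hf, mul_assoc, hj, mul_assoc]
    obtain ⟨k, rfl⟩ := ih (ln q) (by simp at hl; omega) q hq rfl
    exact ⟨k + 1, by rw [pow_succ']⟩

theorem pz_eq {m : ℕ} (hm : 0 < m) : pz m = pD m m ^ 2 := by
  obtain ⟨k, hk⟩ := QC_pow hm _ (QC_pz m)
  have l := congrArg ln hk
  rw [ln_pz, ln_pow] at l
  have hD := ln_pD (m := m) le_rfl
  have hpos : 0 < ln (pD m m) := by
    have : 0 < m * (m + 1) := by positivity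
    omega
  have : k = 2 := by
    apply Nat.eq_of_mul_eq_mul_right hpos
    rw [← l, hD]; ring
  rw [hk, this]

/-! Non-centrality of `Δ` through the permutation representation -/

theorem sw_braid (i : ℕ) : Equiv.swap i (i+1) * Equiv.swap (i+1) (i+1+1) * Equiv.swap i (i+1) =
    Equiv.swap (i+1) (i+1+1) * Equiv.swap i (i+1) * Equiv.swap (i+1) (i+1+1) := by
  rw [Equiv.swap_mul_swap_mul_swap (x := i) (y := i+1) (z := i+1+1) (by omega) (by omega),
    Equiv.swap_comm i (i+1), Equiv.swap_comm (i+1) (i+1+1),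
    Equiv.swap_mul_swap_mul_swap (x := i+1+1) (y := i+1) (z := i) (by omega) (by omega),
    Equiv.swap_comm]

theorem sw_comm {i j : ℕ} (h : i + 1 < j) : Equiv.swap i (i+1) * Equiv.swap j (j+1) =
    Equiv.swap j (j+1) * Equiv.swap i (i+1) := by
  apply Equiv.Perm.Disjoint.commute
  intro x
  by_cases hx : x ≤ i + 1
  · right; exact Equiv.swap_apply_of_ne_of_ne (by omega) (by omega)
  · left; exact Equiv.swap_apply_of_ne_of_ne (by omega) (by omega)

def pPerm (m : ℕ) : PM m →* Equiv.Perm ℕ :=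
  PresentedMonoid.lift (rels := pRel m) (fun i : Fin m => Equiv.swap (i : ℕ) ((i : ℕ) + 1)) (by
    rintro a b (⟨i, j, h, rfl, rfl⟩ | ⟨i, j, h, rfl, rfl⟩)
    · simp only [map_mul, FreeMonoid.lift_eval_of]
      rw [h]
      exact sw_braid i
    · simp only [map_mul, FreeMonoid.lift_eval_of]
      exact sw_comm h)

theorem pPerm_pa {m k : ℕ} (h : k < m) : pPerm m (pa m k) = Equiv.swap k (k + 1) := by
  rw [pa_eq h]; rfl

theorem pPerm_pc {m k : ℕ} (h : k ≤ m) : pPerm m (pc m k) 0 = k := by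
  induction k with
  | zero => simp [pc]
  | succ k ih => rw [pc, map_mul, Equiv.Perm.mul_apply, ih (by omega), pPerm_pa (by omega)]; simp

theorem pPerm_pc_fix {m k j : ℕ} (h : k ≤ m) (hj : k < j) : pPerm m (pc m k) j = j := by
  induction k with
  | zero => simp [pc]
  | succ k ih =>
    rw [pc, map_mul, Equiv.Perm.mul_apply, ih (by omega) (by omega), pPerm_pa (by omega)]
    exact Equiv.swap_apply_of_ne_of_ne (by omega) (by omega)

theorem pPerm_pD_fix {m k j : ℕ} (h : k ≤ m) (hj : k < j) : pPerm m (pD m k) j = j := by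
  induction k with
  | zero => simp [pD]
  | succ k ih =>
    rw [pD, map_mul, Equiv.Perm.mul_apply, pPerm_pc_fix h hj, ih (by omega) (by omega)]

theorem pPerm_pD {m k : ℕ} (h : k ≤ m) : pPerm m (pD m k) 0 = k := by
  cases k with
  | zero => simp [pD]
  | succ k =>
    rw [pD, map_mul, Equiv.Perm.mul_apply, pPerm_pc h, pPerm_pD_fix (by omega) (by omega)]

theorem pD_not_central {m : ℕ} (hm : 2 ≤ m) : ¬ ∀ x : PM m, pD m m * x = x * pD m m := by
  intro h
  have h1 := h (pa m 0)
  have h2 := congrArg (fun t => pPerm m t 1) h1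
  simp only [map_mul, Equiv.Perm.mul_apply] at h2
  rw [pPerm_pa (by omega)] at h2
  simp only [zero_add, Equiv.swap_apply_right] at h2
  rw [pPerm_pD le_rfl] at h2
  have h3 : pPerm m (pD m m) 1 = m := by
    have := congrArg (Equiv.swap 0 1) h2
    rw [Equiv.swap_apply_self, Equiv.swap_apply_of_ne_of_ne (by omega) (by omega)] at this
    exact this.symm
  have := (pPerm m (pD m m)).injective (h3.trans (pPerm_pD le_rfl).symm)
  omega

theorem pm_central {m : ℕ} (hm : 2 ≤ m) (x : PM m) (hx : ∀ i, ps i * x = x * ps i) :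
    ∃ k, x = pz m ^ k := by
  obtain ⟨k, rfl⟩ := QC_pow (by omega) x (fun i => ⟨i, hx i⟩)
  have hz := pz_eq (m := m) (by omega)
  rcases Nat.even_or_odd' k with ⟨j, rfl | rfl⟩
  · exact ⟨j, by rw [hz, pow_mul]⟩
  · exfalso
    apply pD_not_central hm
    intro y
    rw [pow_succ, pow_mul, ← hz] at hx
    induction y using pm_ind with
    | h1 => simp
    | h2 i y ih =>
      have : ps i * pD m m = pD m m * ps i := by
        apply pm_cancel (pz m ^ j)
        rw [← mul_assoc, ← mul_assoc, ← hx, pzk_comm, mul_assoc]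
      rw [← mul_assoc, ← this, mul_assoc, ih, mul_assoc]

/-! ### Embedding into the braid group -/

noncomputable instance pzOre (m : ℕ) : OreLocalization.OreSet (Submonoid.powers (pz m)) where
  ore_right_cancel := fun r₁ r₂ s h => ⟨1, by rw [pm_cancel_right _ h]⟩
  oreNum := fun r _ => r
  oreDenom := fun _ s => s
  ore_eq := by
    rintro r ⟨_, k, rfl⟩
    exact pzk_comm r k

abbrev PLoc (m : ℕ) : Type := OreLocalization (Submonoid.powers (pz m)) (PM m)

noncomputable def pNum (m : ℕ) : PM m →* PLoc m := OreLocalization.numeratorHom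

theorem pNum_inj (m : ℕ) : Function.Injective (pNum m) := by
  intro x y h
  have h' : (x /ₒ (1 : Submonoid.powers (pz m)) : PLoc m) = y /ₒ 1 := h
  rw [OreLocalization.oreDiv_eq_iff] at h'
  obtain ⟨u, v, h1, h2⟩ := h'
  simp [Submonoid.smul_def] at h1 h2
  rw [h2] at h1
  exact (pm_cancel _ h1).symm

theorem pNum_unit {m : ℕ} (i : Fin m) : IsUnit (pNum m (ps i)) := by
  obtain ⟨y, k, h⟩ := pm_dvd_pz (ps i)
  have h' : y * ps i = pz m ^ k := by
    apply pm_cancel (ps i)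
    rw [← mul_assoc, h, pzk_comm]
  have hu : IsUnit (pNum m (pz m ^ k)) :=
    OreLocalization.numerator_isUnit (⟨pz m ^ k, k, rfl⟩ : Submonoid.powers (pz m))
  obtain ⟨u, hu⟩ := hu
  have e1 : pNum m (ps i) * pNum m y = u := by rw [← map_mul, h, hu]
  have e2 : pNum m y * pNum m (ps i) = u := by rw [← map_mul, h', hu]
  rw [isUnit_iff_exists_and_exists]
  refine ⟨⟨pNum m y * (u⁻¹ : (PLoc m)ˣ), ?_⟩, ⟨(u⁻¹ : (PLoc m)ˣ) * pNum m y, ?_⟩⟩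
  · rw [← mul_assoc, e1, Units.mul_inv]
  · rw [mul_assoc, e2, Units.inv_mul]

abbrev BG (m : ℕ) : Type := PresentedGroup (braidRels m)

def bs {m : ℕ} (i : Fin m) : BG m := PresentedGroup.of i

theorem bs_braid {m : ℕ} {i j : Fin m} (h : (j : ℕ) = (i : ℕ) + 1) :
    bs i * bs j * bs i = bs j * bs i * bs j := by
  have := PresentedGroup.mk_eq_mk_of_mul_inv_mem (rels := braidRels m) (Or.inl ⟨i, j, h, rfl⟩)
  simp only [map_mul] at this
  exact this

theorem bs_comm {m : ℕ} {i j : Fin m} (h : (i : ℕ) + 1 < (j : ℕ)) :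
    bs i * bs j = bs j * bs i := by
  have := PresentedGroup.mk_eq_mk_of_mul_inv_mem (rels := braidRels m) (Or.inr ⟨i, j, h, rfl⟩)
  simp only [map_mul] at this
  exact this

noncomputable def pI (m : ℕ) : PM m →* BG m :=
  PresentedMonoid.lift (rels := pRel m) (fun i : Fin m => (bs i : BG m)) (by
    rintro a b (⟨i, j, h, rfl, rfl⟩ | ⟨i, j, h, rfl, rfl⟩)
    · simpa using bs_braid h
    · simpa using bs_comm h)

theorem pI_ps {m : ℕ} (i : Fin m) : pI m (ps i) = bs i := rfl

noncomputable def pU {m : ℕ} (i : Fin m) : (PLoc m)ˣ := (pNum_unit i).unit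

theorem pU_val {m : ℕ} (i : Fin m) : (pU i : PLoc m) = pNum m (ps i) := rfl

noncomputable def bJ (m : ℕ) : BG m →* (PLoc m)ˣ :=
  PresentedGroup.toGroup (rels := braidRels m) (f := fun i : Fin m => pU i) (by
    rintro r (⟨i, j, h, rfl⟩ | ⟨i, j, h, rfl⟩)
    · rw [map_mul, map_inv, mul_inv_eq_one]
      simp only [map_mul, FreeGroup.lift_apply_of]
      ext
      simp only [Units.val_mul, pU_val, ← map_mul]
      rw [pm_braid' h]
    · rw [map_mul, map_inv, mul_inv_eq_one]
      simp only [map_mul, FreeGroup.lift_apply_of]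
      ext
      simp only [Units.val_mul, pU_val, ← map_mul]
      rw [pm_comm' h])

theorem bJ_pI {m : ℕ} (x : PM m) : ((bJ m (pI m x) : (PLoc m)ˣ) : PLoc m) = pNum m x := by
  induction x using pm_ind with
  | h1 => simp
  | h2 i y ih =>
    rw [map_mul, map_mul, Units.val_mul, ih, map_mul, pI_ps]
    congr 1
    rw [← pU_val]
    congr 1
    exact PresentedGroup.toGroup.of _

theorem pI_inj (m : ℕ) : Function.Injective (pI m) := by
  intro x y h
  apply pNum_inj
  rw [← bJ_pI, ← bJ_pI, h]

noncomputable def bz (m : ℕ) : BG m := pI m (pz m)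

theorem bz_central (m : ℕ) : bz m ∈ Subgroup.center (BG m) := by
  have : (⊤ : Subgroup (BG m)) ≤ Subgroup.centralizer {bz m} := by
    rw [← PresentedGroup.closure_range_of, Subgroup.closure_le]
    rintro _ ⟨i, rfl⟩
    rw [SetLike.mem_coe, Subgroup.mem_centralizer_singleton_iff]
    change bs i * bz m = bz m * bs i
    rw [bz, ← pI_ps, ← map_mul, ← map_mul, pz_comm]
  rw [Subgroup.mem_center_iff]
  intro g
  exact Subgroup.mem_centralizer_singleton_iff.1 (this (Subgroup.mem_top g))

theorem bz_comm {m : ℕ} (g : BG m) (k : ℤ) : bz m ^ k * g = g * bz m ^ k :=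
  ((Subgroup.mem_center_iff.1 (Subgroup.zpow_mem _ (bz_central m) k)) g).symm

theorem bg_form {m : ℕ} (g : BG m) : ∃ (x : PM m) (k : ℤ), g = pI m x * bz m ^ k := by
  have hg : g ∈ Subgroup.closure (Set.range (PresentedGroup.of (rels := braidRels m))) := by
    rw [PresentedGroup.closure_range_of]; trivial
  induction hg using Subgroup.closure_induction with
  | mem x hx =>
    obtain ⟨i, rfl⟩ := hx
    exact ⟨ps i, 0, by rw [pI_ps]; simp; rfl⟩
  | one => exact ⟨1, 0, by simp⟩
  | mul g h _ _ ih1 ih2 =>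
    obtain ⟨x, k, rfl⟩ := ih1
    obtain ⟨y, l, rfl⟩ := ih2
    refine ⟨x * y, k + l, ?_⟩
    rw [map_mul, zpow_add, mul_assoc, ← mul_assoc (bz m ^ k), bz_comm]
    simp only [mul_assoc]
  | inv g _ ih =>
    obtain ⟨x, k, rfl⟩ := ih
    obtain ⟨y, l, h⟩ := pm_dvd_pz x
    refine ⟨y, -k - l, ?_⟩
    have h' := congrArg (pI m) h
    rw [map_mul, map_pow] at h'
    change _ = bz m ^ l at h'
    apply inv_eq_of_mul_eq_one_right
    rw [mul_assoc, ← mul_assoc (bz m ^ k), bz_comm, mul_assoc, ← mul_assoc, h', ← zpow_natCast,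
      ← zpow_add, ← zpow_add]
    convert zpow_zero (bz m) using 2
    ring

theorem bg_center {m : ℕ} (hm : 2 ≤ m) {g : BG m} (hg : g ∈ Subgroup.center (BG m)) :
    ∃ k : ℤ, g = bz m ^ k := by
  obtain ⟨x, k, rfl⟩ := bg_form g
  have hx : pI m x ∈ Subgroup.center (BG m) := by
    have := Subgroup.mul_mem _ hg (Subgroup.zpow_mem _ (bz_central m) (-k))
    simpa using this
  rw [Subgroup.mem_center_iff] at hx
  obtain ⟨j, rfl⟩ := pm_central hm x (fun i => pI_inj m (by
    rw [map_mul, map_mul]; exact hx _))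
  refine ⟨j + k, ?_⟩
  rw [zpow_add, zpow_natCast, map_pow]
  rfl

theorem pe_list {m k : ℕ} : (List.ofFn (fun i : Fin k => pa m i)).prod = pe m k := by
  induction k with
  | zero => simp [pe]
  | succ k ih => rw [List.ofFn_succ', List.concat_eq_append, List.prod_append, pe, ← ih]; simp

theorem fullTwist_eq (m : ℕ) : fullTwist (m + 1) = bz m := by
  have h : (List.ofFn (σ (n := m + 1))).prod = pI m (pe m m) := by
    rw [← pe_list, map_list_prod, List.map_ofFn]
    congr 2
    funext i
    change σ i = pI m (pa m i)
    rw [pa_fin]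
    rfl
  rw [fullTwist, h, bz, pz, map_pow]

theorem length_fullTwist (m : ℕ) : lengthHom (m + 1) (fullTwist (m + 1)) =
    Multiplicative.ofAdd (((m : ℤ) + 1) * m) := by
  have h : ∀ i : Fin m, lengthHom (m + 1) (σ (n := m + 1) i) = Multiplicative.ofAdd (1 : ℤ) :=
    fun i => PresentedGroup.toGroup.of _
  rw [fullTwist, map_pow, map_list_prod, List.map_ofFn]
  have : (lengthHom (m + 1) ∘ σ (n := m + 1)) = fun _ => Multiplicative.ofAdd (1 : ℤ) := funext h
  rw [this, List.ofFn_const, List.prod_replicate]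
  rw [← ofAdd_nsmul, ← ofAdd_nsmul]
  simp

section final
variable {n : ℕ}

theorem fullTwist_central (hn : 4 ≤ n) : fullTwist n ∈ Subgroup.center (BraidGroup n) := by
  obtain ⟨m, rfl⟩ : ∃ m, n = m + 1 := ⟨n - 1, by omega⟩
  rw [fullTwist_eq]
  exact bz_central m

theorem center_form (hn : 4 ≤ n) {g : BraidGroup n} (hg : g ∈ Subgroup.center (BraidGroup n)) :
    ∃ k : ℤ, g = fullTwist n ^ k := by
  obtain ⟨m, rfl⟩ : ∃ m, n = m + 1 := ⟨n - 1, by omega⟩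
  rw [fullTwist_eq]
  exact bg_center (by omega) hg

theorem len_tw (hn : 4 ≤ n) (k : ℤ) : Multiplicative.toAdd (lengthHom n (fullTwist n ^ k)) =
    k * ((n : ℤ) * ((n : ℤ) - 1)) := by
  obtain ⟨m, rfl⟩ : ∃ m, n = m + 1 := ⟨n - 1, by omega⟩
  rw [map_zpow, length_fullTwist, toAdd_zpow, toAdd_ofAdd, smul_eq_mul]
  push_cast
  ring

theorem mem_lengthKer (hn : 4 ≤ n) (g : BraidGroup n) : g ∈ lengthKer n ↔
    ((n : ℤ) * ((n : ℤ) - 1)) ∣ Multiplicative.toAdd (lengthHom n g) := by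
  have : ((n : ℤ) * ((n : ℤ) - 1)) = ((n * (n - 1) : ℕ) : ℤ) := by
    rw [Nat.cast_mul, Nat.cast_sub (by omega)]; simp
  rw [this, ← ZMod.intCast_zmod_eq_zero_iff_dvd, lengthKer, MonoidHom.mem_ker]
  rfl
end final

/-- STATEMENT 4: for `n ≥ 4`, the subgroup `K = ker (B_n → ℤ/n(n-1)ℤ)` has finite
index, contains the center `Z` of `B_n`, the map `g ↦ z^{L(g)/n(n-1)}` is a
homomorphism `K → Z` splitting `1 → Z → K → K/Z → 1`, hence `K ≅ (K/Z) × Z` where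
`K/Z` is a finite index subgroup of `B_n/Z`; in particular `B_n` is abstractly
commensurable to `(K/Z) × ℤ`. -/
theorem braid_commensurable_with_product (n : ℕ) (hn : 4 ≤ n) :
    (lengthKer n).FiniteIndex ∧
      Subgroup.center (BraidGroup n) ≤ lengthKer n ∧
      (∃ s : lengthKer n →* BraidGroup n,
        (∀ g : lengthKer n,
          s g = fullTwist n ^
            (Multiplicative.toAdd (lengthHom n (g : BraidGroup n)) / ((n : ℤ) * ((n : ℤ) - 1)))) ∧
        (∀ g : lengthKer n, s g ∈ Subgroup.center (BraidGroup n)) ∧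
        (∀ g : lengthKer n,
          (g : BraidGroup n) ∈ Subgroup.center (BraidGroup n) → s g = (g : BraidGroup n))) ∧
      Nonempty ((lengthKer n) ≃*
        (Subgroup.map (QuotientGroup.mk' (Subgroup.center (BraidGroup n))) (lengthKer n)) ×
          (Subgroup.center (BraidGroup n))) ∧
      (Subgroup.map (QuotientGroup.mk' (Subgroup.center (BraidGroup n)))
        (lengthKer n)).FiniteIndex ∧
      Nonempty ((lengthKer n) ≃*
        (Subgroup.map (QuotientGroup.mk' (Subgroup.center (BraidGroup n))) (lengthKer n)) ×
          Multiplicative ℤ) := by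
  have hN : (0 : ℤ) < (n : ℤ) * ((n : ℤ) - 1) := by
    have : (4 : ℤ) ≤ n := by exact_mod_cast hn
    apply mul_pos <;> linarith
  haveI : NeZero (n * (n - 1)) := ⟨by
    apply Nat.mul_ne_zero <;> omega⟩
  have hfin : (lengthKer n).FiniteIndex := by
    haveI : Finite (Multiplicative (ZMod (n * (n - 1)))) :=
      inferInstanceAs (Finite (ZMod (n * (n - 1))))
    unfold lengthKer
    exact Subgroup.finiteIndex_ker _
  have hcen : Subgroup.center (BraidGroup n) ≤ lengthKer n := by
    intro g hg
    obtain ⟨k, rfl⟩ := center_form hn hg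
    rw [mem_lengthKer hn, len_tw hn]
    exact Dvd.intro_left _ rfl
  let s : lengthKer n →* BraidGroup n :=
    { toFun := fun g => fullTwist n ^
            (Multiplicative.toAdd (lengthHom n (g : BraidGroup n)) / ((n : ℤ) * ((n : ℤ) - 1)))
      map_one' := by simp
      map_mul' := by
        intro g h
        rw [← zpow_add, Subgroup.coe_mul, map_mul, toAdd_mul,
          Int.add_ediv_of_dvd_left ((mem_lengthKer hn _).1 g.2)] }
  have hs1 : ∀ g : lengthKer n, s g ∈ Subgroup.center (BraidGroup n) := fun g =>
    Subgroup.zpow_mem _ (fullTwist_central hn) _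
  have hs2 : ∀ g : lengthKer n,
      (g : BraidGroup n) ∈ Subgroup.center (BraidGroup n) → s g = (g : BraidGroup n) := by
    rintro ⟨g, hg'⟩ hg
    obtain ⟨k, rfl⟩ := center_form hn hg
    change fullTwist n ^ (Multiplicative.toAdd (lengthHom n (fullTwist n ^ k)) /
      ((n : ℤ) * ((n : ℤ) - 1))) = fullTwist n ^ k
    rw [len_tw hn, Int.mul_ediv_cancel _ hN.ne']
  let q := QuotientGroup.mk' (Subgroup.center (BraidGroup n))
  have hiso : Nonempty ((lengthKer n) ≃*
        (Subgroup.map (QuotientGroup.mk' (Subgroup.center (BraidGroup n))) (lengthKer n)) ×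
          (Subgroup.center (BraidGroup n))) := by
    let F : lengthKer n →* (Subgroup.map q (lengthKer n)) × (Subgroup.center (BraidGroup n)) :=
      (q.subgroupMap (lengthKer n)).prod (s.codRestrict (Subgroup.center (BraidGroup n)) hs1)
    refine ⟨MulEquiv.ofBijective F ⟨?_, ?_⟩⟩
    · rw [injective_iff_map_eq_one]
      intro g hg
      have h1 : q (g : BraidGroup n) = 1 := congrArg (fun t => t.1.1) hg
      have h2 : s g = 1 := congrArg (fun t => t.2.1) hg
      have h3 : (g : BraidGroup n) ∈ Subgroup.center (BraidGroup n) :=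
        (QuotientGroup.eq_one_iff _).1 h1
      rw [hs2 g h3] at h2
      exact Subtype.ext h2
    · rintro ⟨⟨_, g, hg, rfl⟩, ⟨c, hc⟩⟩
      let t : lengthKer n := ⟨s ⟨g, hg⟩, hcen (hs1 _)⟩
      let c' : lengthKer n := ⟨c, hcen hc⟩
      refine ⟨⟨g, hg⟩ * t⁻¹ * c', ?_⟩
      refine Prod.ext (Subtype.ext ?_) (Subtype.ext ?_)
      · change q (g * (s ⟨g, hg⟩)⁻¹ * c) = q g
        have e1 : q (s ⟨g, hg⟩) = 1 := (QuotientGroup.eq_one_iff _).2 (hs1 _)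
        have e2 : q c = 1 := (QuotientGroup.eq_one_iff _).2 hc
        rw [map_mul, map_mul, map_inv, e1, e2]
        simp
      · change s (⟨g, hg⟩ * t⁻¹ * c') = c
        rw [map_mul, map_mul, map_inv, hs2 t (hs1 _), hs2 c' hc]
        simp [t, c']
  refine ⟨hfin, hcen, ⟨s, fun _ => rfl, hs1, hs2⟩, hiso, ?_, ?_⟩
  · constructor
    intro h0
    have := (lengthKer n).index_map_dvd
      (QuotientGroup.mk'_surjective (Subgroup.center (BraidGroup n)))
    rw [h0] at this
    exact hfin.index_ne_zero (Nat.eq_zero_of_zero_dvd this)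
  · obtain ⟨e⟩ := hiso
    let f : Multiplicative ℤ →* Subgroup.center (BraidGroup n) :=
      zpowersHom _ ⟨fullTwist n, fullTwist_central hn⟩
    have hf : ∀ k, ((f k : Subgroup.center (BraidGroup n)) : BraidGroup n) =
        fullTwist n ^ (Multiplicative.toAdd k) := fun k => by simp [f, zpowersHom_apply]
    have hb : Function.Bijective f := by
      constructor
      · rw [injective_iff_map_eq_one]
        intro k hk
        have h1 := hf k
        rw [hk] at h1
        have h2 := len_tw hn (Multiplicative.toAdd k)
        rw [← h1] at h2
        simp only [Subgroup.coe_one, map_one, toAdd_one] at h2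
        rcases mul_eq_zero.1 h2.symm with h3 | h3
        · exact h3
        · exact absurd h3 hN.ne'
      · rintro ⟨c, hc⟩
        obtain ⟨k, rfl⟩ := center_form hn hc
        exact ⟨Multiplicative.ofAdd k, Subtype.ext (hf _)⟩
    exact ⟨e.trans (MulEquiv.prodCongr (MulEquiv.refl _) (MulEquiv.ofBijective f hb).symm)⟩
end

section
/- For n ≥ 4, every finite index subgroup of the quotient group B_n/Z(B_n) has trivial center. -/
namespace BraidAux

def Adj {m : ℕ} (a b : Fin m) : Prop := (a : ℕ) + 1 = b ∨ (b : ℕ) + 1 = a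
def Far {m : ℕ} (a b : Fin m) : Prop := (a : ℕ) + 1 < b ∨ (b : ℕ) + 1 < a

lemma tri {m : ℕ} (a b : Fin m) : a = b ∨ Far a b ∨ Adj a b := by
  unfold Far Adj; rw [Fin.ext_iff]; omega

inductive BR (m : ℕ) : FreeMonoid (Fin m) → FreeMonoid (Fin m) → Prop
  | braid (a b : Fin m) (h : Adj a b) :
      BR m (.of a * .of b * .of a) (.of b * .of a * .of b)
  | far (a b : Fin m) (h : Far a b) : BR m (.of a * .of b) (.of b * .of a)

abbrev BM (m : ℕ) : Type := PresentedMonoid (BR m)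

variable {m : ℕ}

def s (a : Fin m) : BM m := PresentedMonoid.of (BR m) a

lemma Far.symm {a b : Fin m} (h : Far a b) : Far b a := Or.symm h
lemma Adj.symm {a b : Fin m} (h : Adj a b) : Adj b a := Or.symm h

lemma s_comm {a b : Fin m} (h : Far a b) : s a * s b = s b * s a :=
  PresentedMonoid.mk_eq_mk_of_rel (BR.far a b h)

lemma s_braid {a b : Fin m} (h : Adj a b) : s a * s b * s a = s b * s a * s b :=
  PresentedMonoid.mk_eq_mk_of_rel (BR.braid a b h)

lemma s_comm' {a b : Fin m} (h : Far a b) (z : BM m) : s a * (s b * z) = s b * (s a * z) := by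
  rw [← mul_assoc, s_comm h, mul_assoc]

lemma s_braid' {a b : Fin m} (h : Adj a b) (z : BM m) :
    s a * (s b * (s a * z)) = s b * (s a * (s b * z)) := by
  have := congrArg (· * z) (s_braid h)
  simpa only [mul_assoc] using this

def len : BM m →* Multiplicative ℕ :=
  PresentedMonoid.lift (fun _ => Multiplicative.ofAdd 1) (by
    rintro _ _ (⟨a, b, h⟩ | ⟨a, b, h⟩) <;> simp)

def ln (x : BM m) : ℕ := (len x).toAdd

@[simp] lemma ln_one : ln (1 : BM m) = 0 := by simp [ln]
@[simp] lemma ln_mul (x y : BM m) : ln (x * y) = ln x + ln y := by simp [ln]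
@[simp] lemma ln_s (a : Fin m) : ln (s a) = 1 := by simp [ln, len, s]
@[simp] lemma ln_pow (x : BM m) (k : ℕ) : ln (x ^ k) = k * ln x := by simp [ln]

lemma cases_BM (x : BM m) : x = 1 ∨ ∃ a y, x = s a * y := by
  obtain ⟨w, rfl⟩ := PresentedMonoid.surjective_mk x
  induction w using FreeMonoid.casesOn with
  | one => left; exact map_one _
  | of_mul a w => right; exact ⟨a, PresentedMonoid.mk _ w, map_mul _ _ _⟩

lemma eq_one_of_ln {x : BM m} (h : ln x = 0) : x = 1 := by
  rcases cases_BM x with h1 | ⟨a, y, rfl⟩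
  · exact h1
  · simp at h

def LP (a b : Fin m) (X Y : BM m) : Prop :=
  (a = b ∧ X = Y) ∨ (Far a b ∧ ∃ Z, X = s b * Z ∧ Y = s a * Z) ∨
  (Adj a b ∧ ∃ Z, X = s b * (s a * Z) ∧ Y = s a * (s b * Z))

lemma LP.symm {a b : Fin m} {X Y : BM m} (h : LP a b X Y) : LP b a Y X := by
  rcases h with ⟨h, h'⟩ | ⟨h, Z, h1, h2⟩ | ⟨h, Z, h1, h2⟩
  · exact Or.inl ⟨h.symm, h'.symm⟩
  · exact Or.inr (Or.inl ⟨h.symm, Z, h2, h1⟩)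
  · exact Or.inr (Or.inr ⟨h.symm, Z, h2, h1⟩)

lemma LP.mul {a b : Fin m} {X Y : BM m} (h : LP a b X Y) (W : BM m) :
    LP a b (X * W) (Y * W) := by
  rcases h with ⟨h, rfl⟩ | ⟨h, Z, rfl, rfl⟩ | ⟨h, Z, rfl, rfl⟩
  · exact Or.inl ⟨h, rfl⟩
  · exact Or.inr (Or.inl ⟨h, Z * W, by simp [mul_assoc]⟩)
  · exact Or.inr (Or.inr ⟨h, Z * W, by simp [mul_assoc]⟩)

lemma not_FA {a b : Fin m} (h : Far a b) (h' : Adj a b) : False := by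
  unfold Far Adj at *; omega

lemma not_F {a : Fin m} (h : Far a a) : False := by unfold Far at *; omega
lemma not_A {a : Fin m} (h : Adj a a) : False := by unfold Adj at *; omega

def HL (L : ℕ) (m : ℕ) : Prop := ∀ (a b : Fin m) (X Y : BM m), ln X < L → s a * X = s b * Y →
  LP a b X Y

lemma HL.cancel {L : ℕ} (H : HL L m) {a : Fin m} {X Y : BM m} (hX : ln X < L)
    (h : s a * X = s a * Y) : X = Y := by
  rcases H a a X Y hX h with ⟨_, h⟩ | ⟨h, _⟩ | ⟨h, _⟩
  · exact h
  · exact (not_F h).elim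
  · exact (not_A h).elim

lemma HL.far {L : ℕ} (H : HL L m) {a b : Fin m} {X Y : BM m} (hX : ln X < L) (hf : Far a b)
    (h : s a * X = s b * Y) : ∃ Z, X = s b * Z ∧ Y = s a * Z := by
  rcases H a b X Y hX h with ⟨rfl, h⟩ | ⟨_, h⟩ | ⟨h, _⟩
  · exact (not_F hf).elim
  · exact h
  · exact (not_FA hf h).elim

lemma HL.adj {L : ℕ} (H : HL L m) {a b : Fin m} {X Y : BM m} (hX : ln X < L) (hf : Adj a b)
    (h : s a * X = s b * Y) : ∃ Z, X = s b * (s a * Z) ∧ Y = s a * (s b * Z) := by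
  rcases H a b X Y hX h with ⟨rfl, h⟩ | ⟨h, _⟩ | ⟨_, h⟩
  · exact (not_A hf).elim
  · exact (not_FA h hf).elim
  · exact h

/-- far/adj/far type -/
lemma cube1 {L : ℕ} (H : HL L m) {a b c : Fin m} {Z1 Z2 : BM m} (hca : Adj c a) (hcb : Far c b)
    (hab : Far a b) (hl : ln (s c * Z1) < L) (h : s a * (s c * Z1) = s b * Z2) :
    LP a b (s c * (s a * Z1)) (s c * Z2) := by
  obtain ⟨Z, h1, rfl⟩ := H.far hl hab h
  simp at hl
  obtain ⟨W, rfl, rfl⟩ := H.far (by omega) hcb h1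
  refine Or.inr (Or.inl ⟨hab, s c * (s a * W), ?_, ?_⟩)
  · rw [s_comm' hab, s_comm' hcb]
  · rw [s_braid' hca]

lemma cube2 {L : ℕ} (H : HL L m) {a b c : Fin m} {Z1 Z2 : BM m} (hca : Adj c a) (hcb : Far c b)
    (hab : Adj a b) (hl : ln (s c * Z1) < L) (h : s a * (s c * Z1) = s b * Z2) :
    LP a b (s c * (s a * Z1)) (s c * Z2) := by
  obtain ⟨Z, h1, rfl⟩ := H.adj hl hab h
  have hl2 := congrArg ln h1
  simp at hl hl2
  obtain ⟨W, rfl, h2⟩ := H.far (by omega) hcb h1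
  obtain ⟨V, rfl, rfl⟩ := H.adj (by omega) hca.symm h2
  refine Or.inr (Or.inr ⟨hab, s c * (s a * (s b * V)), ?_, ?_⟩)
  · rw [s_braid' hab, s_comm' hcb, ← s_comm' hcb V, s_braid' hca]
  · rw [← s_comm' hcb, s_braid' hca, s_braid' hab, s_comm' hcb]

lemma cube3 {L : ℕ} (H : HL L m) {a b c : Fin m} {Z1 Z2 : BM m} (hca : Adj c a) (hcb : Adj c b)
    (hab : Far a b) (hl : ln (s c * Z1) < L) (h : s a * (s c * Z1) = s b * (s c * Z2)) :
    LP a b (s c * (s a * Z1)) (s c * (s b * Z2)) := by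
  have hl3 := congrArg ln h
  obtain ⟨Z, h1, h1'⟩ := H.far hl hab h
  have hl2 := congrArg ln h1
  simp at hl hl2 hl3
  obtain ⟨W, rfl, rfl⟩ := H.adj (by omega) hcb h1
  obtain ⟨W', rfl, h2⟩ := H.adj (by omega) hca h1'
  simp at hl hl2 hl3
  have h3 := H.cancel (by simp; omega) h2
  obtain ⟨U, rfl, rfl⟩ := H.far (by omega) hab.symm h3
  refine Or.inr (Or.inl ⟨hab, s c * (s b * (s a * (s c * U))), ?_, ?_⟩)
  · rw [s_comm' hab, ← s_braid' hca, s_braid' hcb]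
  · rw [← s_comm' hab, ← s_braid' hcb, s_braid' hca, ← s_comm' hab]

lemma cube {L : ℕ} (H : HL L m) {a b c : Fin m} {X V Y : BM m} (hX : ln X ≤ L)
    (hV : ln V = ln X)
    (h1 : LP a c X V) (h2 : LP c b V Y) : LP a b X Y := by
  rcases h1 with ⟨rfl, rfl⟩ | ⟨hac, Z1, rfl, rfl⟩ | ⟨hac, Z1, rfl, rfl⟩
  · exact h2
  · rcases h2 with ⟨rfl, rfl⟩ | ⟨hcb, Z2, h, rfl⟩ | ⟨hcb, Z2, h, rfl⟩
    · exact Or.inr (Or.inl ⟨hac, Z1, rfl, rfl⟩)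
    · simp at hX
      rcases tri a b with rfl | hab | hab
      · exact Or.inl ⟨rfl, by rw [H.cancel (by omega) h]⟩
      · obtain ⟨Z, rfl, rfl⟩ := H.far (by omega) hab h
        exact Or.inr (Or.inl ⟨hab, s c * Z, s_comm' hcb _, s_comm' hac.symm _⟩)
      · obtain ⟨Z, rfl, rfl⟩ := H.adj (by omega) hab h
        refine Or.inr (Or.inr ⟨hab, s c * Z, ?_, ?_⟩)
        · rw [s_comm' hcb, s_comm' hac.symm]
        · rw [s_comm' hac.symm, s_comm' hcb]
    · have hl := congrArg ln h
      simp at hX hl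
      rcases tri a b with rfl | hab | hab
      · exact (not_FA hac hcb.symm).elim
      · exact (cube1 H hcb hac.symm hab.symm (by simp; omega) h.symm).symm
      · exact (cube2 H hcb hac.symm hab.symm (by simp; omega) h.symm).symm
  · rcases h2 with ⟨rfl, rfl⟩ | ⟨hcb, Z2, h, rfl⟩ | ⟨hcb, Z2, h, rfl⟩
    · exact Or.inr (Or.inr ⟨hac, Z1, rfl, rfl⟩)
    · simp at hX
      rcases tri a b with rfl | hab | hab
      · exact (not_FA hcb hac.symm).elim
      · exact cube1 H hac.symm hcb hab (by simp; omega) h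
      · exact cube2 H hac.symm hcb hab (by simp; omega) h
    · simp at hX
      rcases tri a b with rfl | hab | hab
      · exact Or.inl ⟨rfl, by rw [H.cancel (by omega) (H.cancel (by simp; omega) h)]⟩
      · exact cube3 H hac.symm hcb hab (by simp; omega) h
      · exfalso; unfold Adj at *; omega

lemma ind_BM {p : BM m → Prop} (x : BM m) (h1 : p 1) (h2 : ∀ a y, p y → p (s a * y)) : p x := by
  obtain ⟨w, rfl⟩ := PresentedMonoid.surjective_mk x
  induction w using FreeMonoid.inductionOn' with
  | one => simpa using h1
  | of_mul a w ih => rw [map_mul]; exact h2 a _ ih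

lemma fm_cons_inj {a b : Fin m} {X Y : FreeMonoid (Fin m)}
    (h : FreeMonoid.of a * X = FreeMonoid.of b * Y) : a = b ∧ X = Y :=
  ⟨(List.cons.inj h).1, (List.cons.inj h).2⟩

lemma fm_ne {a : Fin m} {X : FreeMonoid (Fin m)}
    (h : 1 = FreeMonoid.of a * X) : False := by
  have := congrArg FreeMonoid.length h
  simp at this
  omega

abbrev mkB (w : FreeMonoid (Fin m)) : BM m := PresentedMonoid.mk (BR m) w

lemma mkB_of (a : Fin m) : mkB (FreeMonoid.of a) = s a := rfl

lemma ln_mkB (w : FreeMonoid (Fin m)) : ln (mkB w) = w.length := by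
  induction w using FreeMonoid.inductionOn' with
  | one => simp [mkB]
  | of_mul a w ih => rw [mkB, map_mul, ln_mul, ih]; change ln (s a) + _ = _; simp

lemma rel_len {w w' : FreeMonoid (Fin m)} (h : ConGen.Rel (BR m) w w') : w.length = w'.length := by
  rw [← ln_mkB, ← ln_mkB]; congr 1; exact PresentedMonoid.mk_eq_mk_iff.2 h

lemma key {L : ℕ} (H : HL L m) {w w' : FreeMonoid (Fin m)} (h : ConGen.Rel (BR m) w w') :
    w.length ≤ L + 1 → ∀ a X b Y, w = .of a * X → w' = .of b * Y → LP a b (mkB X) (mkB Y) := by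
  induction h with
  | of x y h =>
    intro hl a X b Y hx hy
    rcases h with ⟨c, d, h⟩ | ⟨c, d, h⟩
    · rw [mul_assoc] at hx hy
      obtain ⟨rfl, rfl⟩ := fm_cons_inj hx
      obtain ⟨rfl, rfl⟩ := fm_cons_inj hy
      refine Or.inr (Or.inr ⟨h, 1, ?_, ?_⟩) <;> simp [mkB, ← mkB_of]
    · obtain ⟨rfl, rfl⟩ := fm_cons_inj hx
      obtain ⟨rfl, rfl⟩ := fm_cons_inj hy
      refine Or.inr (Or.inl ⟨h, 1, ?_, ?_⟩) <;> simp [mkB, ← mkB_of]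
  | refl x =>
    intro hl a X b Y hx hy
    obtain ⟨rfl, rfl⟩ := fm_cons_inj (hx.symm.trans hy)
    exact Or.inl ⟨rfl, rfl⟩
  | symm h ih =>
    intro hl a X b Y hx hy
    exact (ih (by rw [rel_len h]; exact hl) b Y a X hy hx).symm
  | @trans x y z h1 h2 ih1 ih2 =>
    intro hl a X b Y hx hy
    have e1 := rel_len h1
    induction y using FreeMonoid.casesOn with
    | one => subst hx; simp at e1
    | of_mul c V =>
      have i1 := ih1 hl a X c V hx rfl
      have i2 := ih2 (by omega) c V b Y rfl hy
      subst hx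
      simp at e1 hl
      exact cube H (by rw [ln_mkB]; omega) (by rw [ln_mkB, ln_mkB]; omega) i1 i2
  | @mul w x y z h1 h2 ih1 ih2 =>
    intro hl a X b Y hx hy
    have e1 := rel_len h1
    have e2 := rel_len h2
    simp at hl
    induction w using FreeMonoid.casesOn with
    | one =>
      have : x = 1 := FreeMonoid.length_eq_zero.1 (by simpa using e1.symm)
      subst this
      rw [one_mul] at hx hy
      exact ih2 (by omega) a X b Y hx hy
    | of_mul c U =>
      induction x using FreeMonoid.casesOn with
      | one => simp at e1
      | of_mul d V =>
        have := ih1 (by omega) c U d V rfl rfl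
        rw [mul_assoc] at hx hy
        obtain ⟨rfl, rfl⟩ := fm_cons_inj hx
        obtain ⟨rfl, rfl⟩ := fm_cons_inj hy
        have e : mkB y = mkB z := PresentedMonoid.mk_eq_mk_iff.2 h2
        simp only [mkB, map_mul] at e this ⊢
        rw [← e]
        exact this.mul _

lemma HL_all (L : ℕ) : HL L m := by
  induction L with
  | zero => intro a b X Y h; omega
  | succ L ih =>
    intro a b X Y hl h
    obtain ⟨X, rfl⟩ := PresentedMonoid.surjective_mk X
    obtain ⟨Y, rfl⟩ := PresentedMonoid.surjective_mk Y
    have : mkB (.of a * X) = mkB (.of b * Y) := by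
      simp only [mkB, map_mul]; exact h
    have hl' : ln (mkB X) < L + 1 := hl
    rw [ln_mkB] at hl'
    exact key ih (PresentedMonoid.mk_eq_mk_iff.1 this) (by simp; omega) a X b Y rfl rfl

lemma gcancel {a : Fin m} {X Y : BM m} (h : s a * X = s a * Y) : X = Y :=
  (HL_all _).cancel (Nat.lt_succ_self _) h

lemma gfar {a b : Fin m} {X Y : BM m} (hf : Far a b)
    (h : s a * X = s b * Y) : ∃ Z, X = s b * Z ∧ Y = s a * Z :=
  (HL_all _).far (Nat.lt_succ_self _) hf h

lemma gadj {a b : Fin m} {X Y : BM m} (hf : Adj a b)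
    (h : s a * X = s b * Y) : ∃ Z, X = s b * (s a * Z) ∧ Y = s a * (s b * Z) :=
  (HL_all _).adj (Nat.lt_succ_self _) hf h

lemma lcancel {x X Y : BM m} (h : x * X = x * Y) : X = Y := by
  induction x using ind_BM with
  | h1 => simpa using h
  | h2 a y ih => rw [mul_assoc, mul_assoc] at h; exact ih (gcancel h)

/-- a generator `c` dividing `b^k v` -/
lemma dvd_pow_mul {b c : Fin m} (hbc : Adj c b) (k : ℕ) : ∀ {u v : BM m},
    s c * u = s b ^ (k + 1) * v → ∃ z, v = s c * (s b * z) := by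
  induction k with
  | zero =>
    intro u v h
    rw [zero_add, pow_one] at h
    obtain ⟨Z, _, h⟩ := gadj hbc h
    exact ⟨Z, h⟩
  | succ k ih =>
    intro u v h
    rw [pow_succ', mul_assoc] at h
    obtain ⟨Z, _, h⟩ := gadj hbc h
    exact ih h.symm

lemma pow_eq {a b : Fin m} (k : ℕ) (h : s b ^ (k + 1) = s a ^ (k + 1)) : b = a := by
  rcases tri a b with hab | hab | hab
  · exact hab.symm
  · exfalso
    have : ∀ k : ℕ, ∀ u : BM m, s a * u ≠ s b ^ k := by
      intro k
      induction k with
      | zero => intro u h; have := congrArg ln h; simp at this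
      | succ k ih =>
        intro u h
        rw [pow_succ'] at h
        obtain ⟨Z, _, h⟩ := gfar hab h
        exact ih _ h.symm
    exact this (k + 1) (s a ^ k) (by rw [h, pow_succ'])
  · exfalso
    obtain ⟨z, hz⟩ := dvd_pow_mul hab k (u := s a ^ k) (v := 1) (by rw [mul_one, h, pow_succ'])
    have := congrArg ln hz
    simp at this
    omega

/-- conjugation of powers -/
lemma conj_pow (k : ℕ) (L : ℕ) : ∀ (x : BM m) (a b : Fin m), ln x = L →
    s b ^ (k + 1) * x = x * s a ^ (k + 1) → s b * x = x * s a := by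
  induction L using Nat.strong_induction_on with
  | _ L ih =>
  intro x a b hL h
  rcases cases_BM x with rfl | ⟨c, y, rfl⟩
  · simp only [mul_one, one_mul] at h ⊢
    rw [pow_eq k h]
  · simp at hL
    rcases tri b c with rfl | hbc | hbc
    · have : s b * (s b ^ (k + 1) * y) = s b * (y * s a ^ (k + 1)) := by
        rw [← mul_assoc, ← mul_assoc, ← h, ← pow_succ', ← mul_assoc, ← pow_succ]
      rw [mul_assoc (s b) y, ← ih (ln y) (by omega) y a b rfl (gcancel this)]
    · have hc : Commute (s b) (s c) := s_comm hbc
      have : s c * (s b ^ (k + 1) * y) = s c * (y * s a ^ (k + 1)) := by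
        rw [← mul_assoc, ← mul_assoc, ← h, ← mul_assoc, (hc.pow_left (k + 1)).eq]
      rw [s_comm' hbc, ih (ln y) (by omega) y a b rfl (gcancel this), mul_assoc]
    · obtain ⟨z, hz⟩ := dvd_pow_mul hbc.symm k (u := y * s a ^ (k + 1)) (v := s c * y)
        (by rw [h, mul_assoc])
      have hz := gcancel hz
      subst hz
      have hs : SemiconjBy (s c * s b) (s c) (s b) := by
        unfold SemiconjBy
        rw [s_braid hbc.symm, mul_assoc]
      have hs' := (hs.pow_right (k + 1)).eq
      simp at hL
      have : (s c * s b) * (s c ^ (k + 1) * z) = (s c * s b) * (z * s a ^ (k + 1)) := by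
        rw [← mul_assoc, hs', mul_assoc, mul_assoc (s c), h]
        simp only [mul_assoc]
      have i := ih (ln z) (by omega) z a c rfl (lcancel this)
      rw [s_braid' hbc, i]
      simp only [mul_assoc]

/-! lcm -/

def IsL (u v l : BM m) : Prop := ∀ w, (u ∣ w ∧ v ∣ w) ↔ l ∣ w

lemma isL_gen (a b : Fin m) : ∃ a' b' : BM m, s a * a' = s b * b' ∧ 
    ∀ X Y, s a * X = s b * Y → ∃ Z, X = a' * Z ∧ Y = b' * Z := by
  rcases tri a b with rfl | hab | hab
  · exact ⟨1, 1, rfl, fun X Y h => ⟨X, by simp, by simp [gcancel h]⟩⟩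
  · exact ⟨s b, s a, s_comm hab, fun X Y h => gfar hab h⟩
  · refine ⟨s b * s a, s a * s b, by simpa [mul_assoc] using s_braid hab, fun X Y h => ?_⟩
    simpa only [mul_assoc] using gadj hab h

lemma dvd_cancel {a u v : BM m} : a * u ∣ a * v ↔ u ∣ v := by
  constructor
  · rintro ⟨c, h⟩; rw [mul_assoc] at h; exact ⟨c, lcancel h⟩
  · rintro ⟨c, rfl⟩; exact ⟨c, by rw [mul_assoc]⟩

lemma exists_lcm (L : ℕ) : ∀ (w u v : BM m), ln w = L → u ∣ w → v ∣ w → ∃ l, IsL u v l := by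
  induction L using Nat.strong_induction_on with
  | _ L ih =>
  intro w u v hL hu hv
  rcases cases_BM u with rfl | ⟨a, u, rfl⟩
  · exact ⟨v, fun w => ⟨fun h => h.2, fun h => ⟨⟨w, by simp⟩, h⟩⟩⟩
  rcases cases_BM v with rfl | ⟨b, v, rfl⟩
  · exact ⟨s a * u, fun w => ⟨fun h => h.1, fun h => ⟨h, ⟨w, by simp⟩⟩⟩⟩
  obtain ⟨a', b', hab, huniv⟩ := isL_gen a b
  obtain ⟨w1, rfl⟩ := hu
  obtain ⟨w2, hw⟩ := hv
  rw [mul_assoc, mul_assoc] at hw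
  obtain ⟨w3, h1, h2⟩ := huniv _ _ hw
  have l1 := congrArg ln h1
  have l2 := congrArg ln h2
  have l3 := congrArg ln hw
  simp at hL l1 l2 l3
  obtain ⟨e', he⟩ := ih (ln (u * w1)) (by simp; omega) (u * w1) u a' rfl ⟨w1, rfl⟩ ⟨w3, h1⟩
  obtain ⟨f', hf⟩ := ih (ln (v * w2)) (by simp; omega) (v * w2) v b' rfl ⟨w2, rfl⟩ ⟨w3, h2⟩
  obtain ⟨e, rfl⟩ : a' ∣ e' := ((he _).2 dvd_rfl).2
  obtain ⟨f, rfl⟩ : b' ∣ f' := ((hf _).2 dvd_rfl).2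
  have he3 : e ∣ w3 := by
    rw [← dvd_cancel (a := a')]; rw [← he, ← h1]; exact ⟨⟨w1, rfl⟩, ⟨w3, h1⟩⟩
  have hf3 : f ∣ w3 := by
    rw [← dvd_cancel (a := b')]; rw [← hf, ← h2]; exact ⟨⟨w2, rfl⟩, ⟨w3, h2⟩⟩
  obtain ⟨g, hg⟩ := ih (ln w3) (by omega) w3 e f rfl he3 hf3
  refine ⟨s a * (a' * g), fun w => ⟨?_, ?_⟩⟩
  · rintro ⟨⟨x, rfl⟩, ⟨y, hy⟩⟩
    rw [mul_assoc, mul_assoc] at hy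
    obtain ⟨z, h1, h2⟩ := huniv _ _ hy
    rw [mul_assoc, dvd_cancel, h1, dvd_cancel, ← hg]
    constructor
    · rw [← dvd_cancel (a := a'), ← he, ← h1]; exact ⟨⟨x, rfl⟩, ⟨z, h1⟩⟩
    · rw [← dvd_cancel (a := b'), ← hf, ← h2]; exact ⟨⟨y, rfl⟩, ⟨z, h2⟩⟩
  · rintro ⟨z, rfl⟩
    have hg' := (hg (g * z)).2 ⟨z, rfl⟩
    constructor
    · rw [mul_assoc, dvd_cancel, mul_assoc]
      exact ((he _).2 (dvd_cancel.2 hg'.1)).1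
    · have : s a * (a' * g) * z = s b * (b' * (g * z)) := by
        rw [← mul_assoc (s b), ← hab]; simp only [mul_assoc]
      rw [this, dvd_cancel]
      exact ((hf _).2 (dvd_cancel.2 hg'.2)).1

/-! quasi-central elements -/

def QC (p : BM m) : Prop := ∀ a : Fin m, ∃ b : Fin m, s a * p = p * s b

lemma QC.adj {p : BM m} (hp : QC p) {c d : Fin m} (h : Adj c d) (hc : s c ∣ p) : s d ∣ p := by
  obtain ⟨y, hy⟩ := hc
  obtain ⟨d', hd⟩ := hp d
  obtain ⟨c', hc⟩ := hp c
  have : s c * (y * s d') = s d * p := by rw [hd, hy, mul_assoc]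
  obtain ⟨z, -, hz⟩ := gadj h this
  have : s c * p = s c * (s d * (z * s c')) := by
    rw [hc]; nth_rw 1 [hz]; simp only [mul_assoc]
  exact ⟨_, gcancel this⟩

lemma QC.all {p : BM m} (hp : QC p) (h1 : p ≠ 1) (d : Fin m) : s d ∣ p := by
  rcases cases_BM p with h | ⟨c, y, hy⟩
  · exact (h1 h).elim
  have hc : s c ∣ p := ⟨y, hy⟩
  have up : ∀ k : ℕ, ∀ c d : Fin m, (c : ℕ) + k = d → s c ∣ p → s d ∣ p := by
    intro k
    induction k with
    | zero => intro c d h hc; rwa [← show c = d from Fin.ext h]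
    | succ k ih =>
      intro c d h hc
      have hd := d.2
      exact ih ⟨c + 1, by omega⟩ d (by simp; omega) (hp.adj (Or.inl rfl) hc)
  have dn : ∀ k : ℕ, ∀ c d : Fin m, (d : ℕ) + k = c → s c ∣ p → s d ∣ p := by
    intro k
    induction k with
    | zero => intro c d h hc; rwa [show d = c from Fin.ext h]
    | succ k ih =>
      intro c d h hc
      have hd := c.2
      exact ih ⟨c - 1, by omega⟩ d (by simp; omega) (hp.adj (Or.inr (by simp; omega)) hc)
  rcases le_total (c : ℕ) d with h | h
  · exact up (d - c) c d (by omega) hc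
  · exact dn (c - d) c d (by omega) hc

lemma ln_le_of_dvd {x y : BM m} (h : x ∣ y) : ln x ≤ ln y := by
  obtain ⟨c, rfl⟩ := h; simp

lemma eq_of_dvd_ln {x y : BM m} (h : x ∣ y) (hl : ln y ≤ ln x) : x = y := by
  obtain ⟨c, rfl⟩ := h
  simp at hl
  rw [eq_one_of_ln hl, mul_one]

lemma ln1 {x : BM m} (h : ln x = 1) : ∃ b, x = s b := by
  rcases cases_BM x with rfl | ⟨c, y, rfl⟩
  · simp at h
  · simp at h
    exact ⟨c, by rw [eq_one_of_ln h, mul_one]⟩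

lemma s_inj {a b : Fin m} (h : s a = s b) : a = b := (pow_eq 0 (by simpa using h))

lemma QC.eq (rc : ∀ a (x y : BM m), x * a = y * a → x = y) [NeZero m]
    {p q : BM m} (hp : QC p) (hq : QC q) (hl : ln p = ln q) : p = q := by
  -- maximal common divisor
  obtain ⟨d, ⟨hdp, hdq⟩, hmax⟩ : ∃ d, (d ∣ p ∧ d ∣ q) ∧ ∀ e, e ∣ p → e ∣ q → ln e ≤ ln d := by
    by_contra hcon
    push Not at hcon
    have : ∀ k : ℕ, ∃ d, (d ∣ p ∧ d ∣ q) ∧ k ≤ ln d := by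
      intro k
      induction k with
      | zero => exact ⟨1, ⟨⟨p, by simp⟩, ⟨q, by simp⟩⟩, by simp⟩
      | succ k ih =>
        obtain ⟨d, hd, hk⟩ := ih
        obtain ⟨e, h1, h2, h3⟩ := hcon d hd
        exact ⟨e, ⟨h1, h2⟩, by omega⟩
    obtain ⟨d, ⟨h1, _⟩, hk⟩ := this (ln p + 1)
    have := ln_le_of_dvd h1
    omega
  have hd : QC d := by
    intro a
    obtain ⟨a1, h1⟩ := hp a
    obtain ⟨a2, h2⟩ := hq a
    have d1 : d ∣ s a * p := by rw [h1]; exact hdp.mul_right _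
    have d2 : d ∣ s a * q := by rw [h2]; exact hdq.mul_right _
    obtain ⟨l, hL⟩ := exists_lcm _ (s a * p) d (s a * d) rfl d1 (dvd_cancel.2 hdp)
    obtain ⟨l', hl'⟩ : s a * d ∣ l := ((hL _).2 dvd_rfl).2
    have e1 := (hL _).1 ⟨d1, dvd_cancel.2 hdp⟩
    have e2 := (hL _).1 ⟨d2, dvd_cancel.2 hdq⟩
    rw [hl', mul_assoc, dvd_cancel] at e1 e2
    have := hmax _ e1 e2
    simp at this
    rw [eq_one_of_ln this, mul_one] at hl'
    have hdl : d ∣ s a * d := hl' ▸ ((hL _).2 dvd_rfl).1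
    obtain ⟨b, hb⟩ := hdl
    have hb' := congrArg ln hb
    simp at hb'
    obtain ⟨b, rfl⟩ := ln1 (x := b) (by omega)
    exact ⟨b, hb⟩
  choose f hf using hd
  have finj : Function.Injective f := by
    intro a b h
    apply s_inj
    apply rc d
    rw [hf, hf, h]
  have fsurj := Finite.injective_iff_surjective.1 finj
  have hqc : ∀ (p u : BM m), QC p → p = d * u → QC u := by
    intro p u hp h a
    obtain ⟨a, rfl⟩ := fsurj a
    obtain ⟨b, hb⟩ := hp a
    refine ⟨b, ?_⟩
    apply lcancel (x := d)
    rw [← mul_assoc, ← hf, mul_assoc, ← h, hb, h, mul_assoc]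
  obtain ⟨u, hu⟩ := hdp
  obtain ⟨v, hv⟩ := hdq
  have lu := congrArg ln hu
  have lv := congrArg ln hv
  simp at lu lv
  by_cases h0 : ln u = 0
  · rw [hu, hv, eq_one_of_ln h0, eq_one_of_ln (x := v) (by omega)]
  · exfalso
    have u1 : u ≠ 1 := by rintro rfl; simp at h0
    have v1 : v ≠ 1 := by rintro rfl; simp at lv; omega
    have hu2 := (hqc p u hp hu).all u1 0
    have hv2 := (hqc q v hq hv).all v1 0
    have := hmax (d * s 0) (by rw [hu, dvd_cancel]; exact hu2) (by rw [hv, dvd_cancel]; exact hv2)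
    simp at this

/-! the full twist -/

def t (m : ℕ) (i : ℕ) : BM m := if h : i < m then s ⟨i, h⟩ else 1

lemma t_val (a : Fin m) : t m a = s a := by simp [t]

lemma t_comm {i j : ℕ} (h : i + 1 < j) : Commute (t m i) (t m j) := by
  unfold t
  split_ifs
  · exact s_comm (Or.inl h)
  all_goals simp

lemma t_braid {i : ℕ} (h : i + 1 < m) :
    t m i * t m (i + 1) * t m i = t m (i + 1) * t m i * t m (i + 1) := by
  unfold t
  rw [dif_pos h, dif_pos (by omega)]
  exact s_braid (Or.inl rfl)

def P (m j : ℕ) : ℕ → BM m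
  | 0 => 1
  | k + 1 => P m j k * t m (j + k)

lemma P_comm {i j k : ℕ} (h : j + k < i) : Commute (P m j k) (t m i) := by
  induction k with
  | zero => exact Commute.one_left _
  | succ k ih => exact (ih (by omega)).mul_left (t_comm (by omega))

lemma P_shift {i j k : ℕ} (hj : j ≤ i) (hi : i + 1 < j + k) (hk : j + k ≤ m) :
    P m j k * t m i = t m (i + 1) * P m j k := by
  induction k with
  | zero => omega
  | succ k ih =>
    rcases Nat.lt_or_ge (i + 1) (j + k) with h | h
    · rw [P, mul_assoc, ← (t_comm h).eq, ← mul_assoc, ih h (by omega), mul_assoc]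
    · obtain _ | k := k
      · omega
      · have e : i = j + k := by omega
        subst e
        have e2 : j + (k + 1) = j + k + 1 := by omega
        rw [P, P, e2, mul_assoc, mul_assoc, ← mul_assoc (t m (j+k)), t_braid (by omega),
          ← mul_assoc, ← mul_assoc, (P_comm (m := m) (j := j) (k := k) (i := j + k + 1) (by omega)).eq]
        simp only [mul_assoc]

lemma P_succ' (k : ℕ) : P m 0 (k + 1) = t m 0 * P m 1 k := by
  induction k with
  | zero => simp [P]
  | succ k ih => rw [P, ih, P, mul_assoc, zero_add, add_comm 1 k]

def dl (m : ℕ) : BM m := P m 0 m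

lemma dl_t {i : ℕ} (h : i + 1 < m) : dl m * t m i = t m (i + 1) * dl m :=
  P_shift (by omega) (by omega) (by omega)

lemma dl_P {k : ℕ} (h : k < m) : dl m * P m 0 k = P m 1 k * dl m := by
  induction k with
  | zero => simp [P]
  | succ k ih =>
    rw [P, ← mul_assoc, ih (by omega), mul_assoc, zero_add, dl_t h, P, ← mul_assoc, add_comm 1 k]

lemma dl_pow {i j : ℕ} (h : i + j < m) : dl m ^ j * t m i = t m (i + j) * dl m ^ j := by
  induction j with
  | zero => simp
  | succ j ih =>
    rw [pow_succ', mul_assoc, ih (by omega), ← mul_assoc, dl_t (by omega), mul_assoc, add_assoc]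

lemma dl_sq (r : ℕ) : dl (r + 1) ^ 2 * t (r + 1) r = t (r + 1) 0 * dl (r + 1) ^ 2 := by
  have h1 : dl (r + 1) = P (r + 1) 0 r * t (r + 1) r := by
    rw [dl, P, zero_add]
  have h2 : dl (r + 1) = t (r + 1) 0 * P (r + 1) 1 r := P_succ' r
  have h3 : dl (r + 1) ^ 2 = P (r + 1) 1 r * dl (r + 1) * t (r + 1) r := by
    rw [← dl_P (by omega), mul_assoc, ← h1, sq]
  rw [h3, ← mul_assoc, ← mul_assoc, ← h2, ← sq, h3]

def C (r : ℕ) : BM (r + 1) := dl (r + 1) ^ (r + 2)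

lemma C_t (r i : ℕ) (hi : i < r + 1) : C r * t (r + 1) i = t (r + 1) i * C r := by
  have e : C r = dl (r + 1) ^ i * (dl (r + 1) ^ 2 * dl (r + 1) ^ (r - i)) := by
    rw [C, ← pow_add, ← pow_add]; congr 1; omega
  have h1 : dl (r + 1) ^ (r - i) * t (r + 1) i = t (r + 1) r * dl (r + 1) ^ (r - i) := by
    rw [dl_pow (by omega)]; congr 2; omega
  have h2 : dl (r + 1) ^ i * t (r + 1) 0 = t (r + 1) i * dl (r + 1) ^ i := by
    rw [dl_pow (by omega), zero_add]
  rw [e, mul_assoc, mul_assoc, h1, ← mul_assoc (dl (r+1) ^ 2), dl_sq, mul_assoc, ← mul_assoc, h2]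
  simp only [mul_assoc]

lemma C_comm {r : ℕ} (x : BM (r + 1)) : Commute (C r) x := by
  induction x using ind_BM with
  | h1 => exact Commute.one_right _
  | h2 a y ih => rw [← t_val]; exact (show Commute _ _ from C_t r a a.2).mul_right ih

lemma s_dvd_C {r : ℕ} (a : Fin (r + 1)) : s a ∣ C r := by
  have h2 : dl (r + 1) ^ (a : ℕ) * t (r + 1) 0 = t (r + 1) a * dl (r + 1) ^ (a : ℕ) := by
    rw [dl_pow (by omega), zero_add]
  have h3 : dl (r + 1) = t (r + 1) 0 * P (r + 1) 1 r := P_succ' r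
  have e : C r = dl (r + 1) ^ (a : ℕ) * (dl (r + 1) * dl (r + 1) ^ (r + 1 - a)) := by
    rw [C, ← pow_succ', ← pow_add]; congr 1; omega
  rw [← t_val, e]
  nth_rw 2 [h3]
  rw [mul_assoc, ← mul_assoc, h2, mul_assoc]
  exact ⟨_, rfl⟩

lemma dvd_C_pow {r : ℕ} (x : BM (r + 1)) : ∃ k, x ∣ C r ^ k := by
  induction x using ind_BM with
  | h1 => exact ⟨0, by simp⟩
  | h2 a y ih =>
    obtain ⟨k, z, hz⟩ := ih
    obtain ⟨w, hw⟩ := s_dvd_C a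
    refine ⟨k + 1, z * w, ?_⟩
    rw [mul_assoc, ← mul_assoc y, ← hz, ((C_comm w).pow_left k).eq, ← mul_assoc, ← hw, pow_succ']

lemma rcancel {r : ℕ} (a x y : BM (r + 1)) (h : x * a = y * a) : x = y := by
  obtain ⟨k, z, hz⟩ := dvd_C_pow a
  have : x * C r ^ k = y * C r ^ k := by rw [hz, ← mul_assoc, h, mul_assoc]
  rw [← ((C_comm x).pow_left k).eq, ← ((C_comm y).pow_left k).eq] at this
  exact lcancel this

/-! embedding -/

open OreLocalization in
noncomputable instance oreS (r : ℕ) : OreSet (Submonoid.powers (C r)) where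
  ore_right_cancel := fun x y a h => ⟨1, by rw [rcancel _ _ _ h]⟩
  oreNum := fun x _ => x
  oreDenom := fun _ a => a
  ore_eq := by
    rintro x ⟨_, k, rfl⟩
    exact ((C_comm x).pow_left k).eq

abbrev OL (r : ℕ) : Type := OreLocalization (Submonoid.powers (C r)) (BM (r + 1))

noncomputable def nh (r : ℕ) : BM (r + 1) →* OL r := OreLocalization.numeratorHom

lemma nh_inj {r : ℕ} : Function.Injective (nh r) := by
  intro x y h
  have h' : x /ₒ (1 : Submonoid.powers (C r)) = y /ₒ 1 := h
  rw [OreLocalization.oreDiv_eq_iff] at h'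
  obtain ⟨u, v, h1, h2⟩ := h'
  simp only [OneMemClass.coe_one, mul_one] at h2
  rw [← h2] at h1
  exact (lcancel (x := (u : BM (r + 1))) h1).symm

lemma nh_unit {r : ℕ} (a : Fin (r + 1)) : IsUnit (nh r (s a)) := by
  obtain ⟨w, hw⟩ := s_dvd_C a
  have hw' : C r = w * s a := by
    apply rcancel w
    rw [mul_assoc, ← hw, (C_comm w).eq]
  have hC : IsUnit (nh r (C r)) :=
    OreLocalization.numerator_isUnit (⟨C r, Submonoid.mem_powers _⟩ : Submonoid.powers (C r))
  obtain ⟨c, hc⟩ := hC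
  have e1 : nh r (s a) * nh r w = c := by rw [← map_mul, ← hw, hc]
  have e2 : nh r w * nh r (s a) = c := by rw [← map_mul, ← hw', hc]
  refine isUnit_iff_exists.2 ⟨nh r w * ↑c⁻¹, ?_, ?_⟩
  · rw [← mul_assoc, e1]; simp
  · have : nh r w * ↑c⁻¹ = ↑c⁻¹ * nh r w := by
      have hcw : Commute (c : OL r) (nh r w) := by
        rw [hc]; exact (C_comm w).map (nh r)
      exact (hcw.units_inv_left).eq.symm
    rw [this, mul_assoc, e2]; simp

abbrev BG (m : ℕ) : Type := PresentedGroup (braidRels m)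

def g (a : Fin m) : BG m := PresentedGroup.of a

lemma g_braid0 {a b : Fin m} (h : (b : ℕ) = a + 1) : g a * g b * g a = g b * g a * g b := by
  have : PresentedGroup.mk (braidRels m) (.of a * .of b * .of a * (.of b * .of a * .of b)⁻¹) = 1 :=
    PresentedGroup.one_of_mem (Or.inl ⟨a, b, h, rfl⟩)
  rw [map_mul, map_inv, mul_inv_eq_one] at this
  exact this

lemma g_far0 {a b : Fin m} (h : (a : ℕ) + 1 < b) : g a * g b = g b * g a := by
  have : PresentedGroup.mk (braidRels m) (.of a * .of b * (.of b * .of a)⁻¹) = 1 :=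
    PresentedGroup.one_of_mem (Or.inr ⟨a, b, h, rfl⟩)
  rw [map_mul, map_inv, mul_inv_eq_one] at this
  exact this

def io (m : ℕ) : BM m →* BG m := PresentedMonoid.lift g (by
  rintro _ _ (⟨a, b, h | h⟩ | ⟨a, b, h | h⟩)
  · simpa using g_braid0 h.symm
  · simpa using (g_braid0 h.symm).symm
  · simpa using g_far0 h
  · simpa using (g_far0 h).symm)

@[simp] lemma io_s (a : Fin m) : io m (s a) = g a := rfl

lemma lift_rels {G : Type*} [Group G] (f : Fin m → G)
    (h1 : ∀ a b : Fin m, Adj a b → f a * f b * f a = f b * f a * f b)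
    (h2 : ∀ a b : Fin m, Far a b → f a * f b = f b * f a) :
    ∀ r ∈ braidRels m, FreeGroup.lift f r = 1 := by
  rintro _ (⟨a, b, h, rfl⟩ | ⟨a, b, h, rfl⟩)
  · rw [map_mul, map_inv, mul_inv_eq_one]
    simpa using h1 a b (Or.inl h.symm)
  · rw [map_mul, map_inv, mul_inv_eq_one]
    simpa using h2 a b (Or.inl h)

noncomputable def gs {r : ℕ} (a : Fin (r + 1)) : (OL r)ˣ := (nh_unit a).unit

lemma gs_val {r : ℕ} (a : Fin (r + 1)) : (gs a : OL r) = nh r (s a) := rfl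

noncomputable def back (r : ℕ) : BG (r + 1) →* (OL r)ˣ :=
  PresentedGroup.toGroup (f := gs) (lift_rels _
    (fun a b h => by ext; simp only [Units.val_mul, gs_val, ← map_mul, s_braid h])
    (fun a b h => by ext; simp only [Units.val_mul, gs_val, ← map_mul, s_comm h]))

lemma back_io {r : ℕ} (x : BM (r + 1)) : ((back r (io _ x) : (OL r)ˣ) : OL r) = nh r x := by
  induction x using ind_BM with
  | h1 => simp
  | h2 a y ih =>
    rw [map_mul, map_mul, Units.val_mul, ih, map_mul]
    congr 1
    have : back r (g a) = gs a := PresentedGroup.toGroup.of _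
    rw [io_s, this, gs_val]

lemma io_inj {r : ℕ} : Function.Injective (io (r + 1)) := by
  intro x y h
  apply nh_inj
  rw [← back_io, ← back_io, h]

def ex (m : ℕ) : BG m →* Multiplicative ℤ :=
  PresentedGroup.toGroup (f := fun _ => Multiplicative.ofAdd 1) (lift_rels _
    (fun _ _ _ => rfl) (fun _ _ _ => rfl))

lemma ex_io (x : BM m) : ex m (io m x) = Multiplicative.ofAdd (ln x : ℤ) := by
  induction x using ind_BM with
  | h1 => simp
  | h2 a y ih =>
    have : ex m (g a) = Multiplicative.ofAdd 1 := PresentedGroup.toGroup.of _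
    rw [map_mul, map_mul, ih, io_s, this, ← ofAdd_add]
    simp

lemma ind_BG {p : BG m → Prop} (x : BG m) (h1 : p 1) (h2 : ∀ a y, p y → p (g a * y))
    (h3 : ∀ a y, p y → p ((g a)⁻¹ * y)) : p x := by
  have hx : x ∈ Subgroup.closure (Set.range (PresentedGroup.of (rels := braidRels m))) := by
    rw [PresentedGroup.closure_range_of]; trivial
  induction hx using Subgroup.closure_induction_left with
  | one => exact h1
  | mul_left x hx y _ ih => obtain ⟨a, rfl⟩ := hx; exact h2 a y ih
  | inv_mul_cancel x hx y _ ih => obtain ⟨a, rfl⟩ := hx; exact h3 a y ih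

lemma mem_center_of_g {x : BG m} (h : ∀ a, Commute (g a) x) : x ∈ Subgroup.center (BG m) := by
  rw [Subgroup.mem_center_iff]
  intro y
  change Commute y x
  induction y using ind_BG with
  | h1 => exact Commute.one_left _
  | h2 a y ih => exact (h a).mul_left ih
  | h3 a y ih => exact (h a).inv_left.mul_left ih

lemma C_center (r k : ℕ) : io _ (C r ^ k) ∈ Subgroup.center (BG (r + 1)) :=
  mem_center_of_g fun a => (((C_comm (s a)).symm.pow_right k).map (io _))

lemma exists_pos {r : ℕ} (x : BG (r + 1)) : ∃ k X, x * io _ (C r ^ k) = io _ X := by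
  induction x using ind_BG with
  | h1 => exact ⟨0, 1, by simp⟩
  | h2 a y ih =>
    obtain ⟨k, X, h⟩ := ih
    exact ⟨k, s a * X, by rw [mul_assoc, h, map_mul, io_s]⟩
  | h3 a y ih =>
    obtain ⟨k, X, h⟩ := ih
    obtain ⟨w, hw⟩ := s_dvd_C a
    refine ⟨k + 1, w * X, ?_⟩
    rw [pow_succ, map_mul, mul_assoc, ← mul_assoc y, h, ← map_mul, ← (C_comm X).eq, hw, mul_assoc,
      map_mul, io_s, inv_mul_cancel_left]

lemma center_ex {r : ℕ} {z : BG (r + 1)} (hz : z ∈ Subgroup.center (BG (r + 1)))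
    (he : ex _ z = 1) : z = 1 := by
  obtain ⟨k, p, hp⟩ := exists_pos z
  have hpc : io _ p ∈ Subgroup.center (BG (r + 1)) := hp ▸ mul_mem hz (C_center r k)
  have hl : ln p = ln (C r ^ k) := by
    have := congrArg (ex _) hp
    rw [map_mul, he, one_mul, ex_io, ex_io] at this
    exact_mod_cast (Multiplicative.ofAdd.injective this).symm
  have : p = C r ^ k := by
    apply QC.eq rcancel _ _ hl
    · intro a
      refine ⟨a, io_inj ?_⟩
      rw [map_mul, map_mul, Subgroup.mem_center_iff.1 hpc]
    · intro a
      exact ⟨a, ((C_comm (s a)).pow_left k).eq.symm⟩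
  rw [this] at hp
  exact mul_eq_right.1 hp

lemma comm_of_pow {r : ℕ} {x : BG (r + 1)} {a : Fin (r + 1)} (k : ℕ)
    (h : g a ^ (k + 1) * x = x * g a ^ (k + 1)) : g a * x = x * g a := by
  obtain ⟨j, X, hX⟩ := exists_pos x
  have hc := Subgroup.mem_center_iff.1 (C_center r j)
  have h1 : s a ^ (k + 1) * X = X * s a ^ (k + 1) := by
    apply io_inj
    rw [map_mul, map_mul, map_pow, io_s, ← hX, ← mul_assoc, h, mul_assoc, mul_assoc, hc]
  have h2 := congrArg (io _) (conj_pow k _ X a a rfl h1)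
  rw [map_mul, map_mul, io_s, ← hX, mul_assoc, ← hc (g a), ← mul_assoc, ← mul_assoc] at h2
  exact mul_right_cancel h2

lemma main {r : ℕ} (Γ : Subgroup (BG (r + 1) ⧸ Subgroup.center (BG (r + 1))))
    (hΓ : Γ.FiniteIndex) : Subgroup.center Γ = ⊥ := by
  rw [eq_bot_iff]
  rintro ⟨z, hzΓ⟩ hz
  obtain ⟨x, rfl⟩ := QuotientGroup.mk_surjective z
  rw [Subgroup.mem_bot, Subtype.ext_iff]
  change (QuotientGroup.mk x : BG (r + 1) ⧸ Subgroup.center (BG (r + 1))) = 1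
  rw [QuotientGroup.eq_one_iff]
  apply mem_center_of_g
  intro a
  obtain ⟨N, hN, -, hmem⟩ := Subgroup.exists_pow_mem_of_index_ne_zero hΓ.index_ne_zero
    (QuotientGroup.mk (g a) : BG (r + 1) ⧸ Subgroup.center (BG (r + 1)))
  obtain ⟨k, rfl⟩ : ∃ k, N = k + 1 := ⟨N - 1, by omega⟩
  have hcm := congrArg Subtype.val (Subgroup.mem_center_iff.1 hz ⟨_, hmem⟩)
  have hcm' : (QuotientGroup.mk (g a ^ (k + 1) * x) : BG (r + 1) ⧸ Subgroup.center (BG (r + 1)))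
      = QuotientGroup.mk (x * g a ^ (k + 1)) := hcm
  rw [QuotientGroup.eq] at hcm'
  have h1 := center_ex hcm' (by
    simp only [map_mul, map_inv, mul_comm, mul_inv_cancel])
  rw [inv_mul_eq_one] at h1
  exact comm_of_pow k h1

end BraidAux

/-- STATEMENT 5: for `n ≥ 4`, every finite index subgroup of `B_n / Z(B_n)` has
trivial center. -/
theorem center_finiteIndex_subgroup_quotient_braid (n : ℕ) (hn : 4 ≤ n)
    (Γ : Subgroup (BraidGroup n ⧸ Subgroup.center (BraidGroup n)))
    (hΓ : Γ.FiniteIndex) :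
    Subgroup.center Γ = ⊥ := by
  obtain ⟨r, rfl⟩ : ∃ r, n = r + 2 := ⟨n - 2, by omega⟩
  exact BraidAux.main (r := r) Γ hΓ
end

section
/- Let H be a group such that every finite index subgroup of H has trivial center, and let G = H × ℤ. Then for every finite index subgroup Γ of G, the center of Γ equals Γ ∩ ({1} × ℤ). -/
/-- STATEMENT 6: if every finite index subgroup of `H` has trivial center and
`G = H × ℤ`, then the center of any finite index subgroup `Γ` of `G` is
`Γ ∩ ({1} × ℤ)`. -/
theorem center_of_finiteIndex_subgroup_of_prod (H : Type*) [Group H]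
    (hH : ∀ K : Subgroup H, K.FiniteIndex → Subgroup.center K = ⊥)
    (Γ : Subgroup (H × Multiplicative ℤ)) (hΓ : Γ.FiniteIndex) :
    Subgroup.map Γ.subtype (Subgroup.center Γ) =
      Γ ⊓ (⊥ : Subgroup H).prod (⊤ : Subgroup (Multiplicative ℤ)) := by
  have hK : (Γ.map (MonoidHom.fst H (Multiplicative ℤ))).FiniteIndex := by
    constructor
    have hd := Subgroup.index_map_dvd Γ (f := MonoidHom.fst H (Multiplicative ℤ))
      (fun h => ⟨(h, 1), rfl⟩)
    exact fun h0 => hΓ.index_ne_zero (by rw [h0] at hd; exact zero_dvd_iff.mp hd)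
  have hc := hH _ hK
  ext ⟨h, n⟩
  rw [Subgroup.mem_inf, Subgroup.mem_prod]
  constructor
  · rintro ⟨⟨x, hx⟩, hxc, rfl⟩
    refine ⟨hx, ?_, Subgroup.mem_top _⟩
    have hm : (⟨h, ⟨_, hx, rfl⟩⟩ : Γ.map (MonoidHom.fst H (Multiplicative ℤ))) ∈
        Subgroup.center (Γ.map (MonoidHom.fst H (Multiplicative ℤ))) := by
      rw [Subgroup.mem_center_iff]
      rintro ⟨_, ⟨y, hy, rfl⟩⟩
      have := Subgroup.mem_center_iff.mp hxc ⟨y, hy⟩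
      exact Subtype.ext (congrArg (fun z : Γ => z.1.1) this)
    rw [hc, Subgroup.mem_bot] at hm
    exact Subgroup.mem_bot.mpr (congrArg Subtype.val hm)
  · rintro ⟨hg, h1, -⟩
    have h1' : h = 1 := Subgroup.mem_bot.mp h1
    subst h1'
    refine ⟨⟨_, hg⟩, ?_, rfl⟩
    refine Subgroup.mem_center_iff.mpr ?_
    rintro ⟨⟨a, b⟩, hy⟩
    apply Subtype.ext
    simp [mul_comm]
end

section
/- Let H be a group such that every finite index subgroup of H has trivial center, and let G = H × ℤ. Then every finite index subgroup Γ of G contains a finite index subgroup Γ' of the form Γ' = Ĥ' × Z(Γ), where Ĥ' is a finite index subgroup of H × {1} and Z(Γ) = Γ ∩ ({1} × ℤ) is the center of Γ. -/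
theorem aux_comap_fi {A B : Type*} [Group A] [Group B] (f : A →* B) (K : Subgroup B)
    (hK : K.FiniteIndex) : (K.comap f).FiniteIndex := by
  constructor
  rw [Subgroup.index_comap]
  exact (inferInstance : (K.subgroupOf f.range).FiniteIndex).index_ne_zero

/-- STATEMENT 9: if every finite index subgroup of `H` has trivial center and
`G = H × ℤ`, then every finite index subgroup `Γ` of `G` contains a finite index
subgroup `Γ'` of the form `Ĥ' × Z(Γ)`, where `Ĥ'` is a finite index subgroup of
`H × {1}` and `Z(Γ) = Γ ∩ ({1} × ℤ)` is the center of `Γ`. -/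
theorem finiteIndex_subgroup_of_prod_contains_product (H : Type*) [Group H]
    (hH : ∀ K : Subgroup H, K.FiniteIndex → Subgroup.center K = ⊥)
    (Γ : Subgroup (H × Multiplicative ℤ)) (hΓ : Γ.FiniteIndex) :
    Subgroup.map Γ.subtype (Subgroup.center Γ) =
        Γ ⊓ (⊥ : Subgroup H).prod (⊤ : Subgroup (Multiplicative ℤ)) ∧
      ∃ K : Subgroup H, K.FiniteIndex ∧
        K.prod (⊥ : Subgroup (Multiplicative ℤ)) ⊔
            Subgroup.map Γ.subtype (Subgroup.center Γ) ≤ Γ ∧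
        ((K.prod (⊥ : Subgroup (Multiplicative ℤ)) ⊔
            Subgroup.map Γ.subtype (Subgroup.center Γ)).subgroupOf Γ).FiniteIndex := by
  have hc : Subgroup.map Γ.subtype (Subgroup.center Γ) =
        Γ ⊓ (⊥ : Subgroup H).prod (⊤ : Subgroup (Multiplicative ℤ)) := by
    ext ⟨h, n⟩
    constructor
    · rintro ⟨z, hz, hzz⟩
      have hzz' : (z : H × Multiplicative ℤ) = (h, n) := hzz
      have hmem : (h, n) ∈ Γ := hzz' ▸ z.2
      have hP : (Γ.map (MonoidHom.fst H (Multiplicative ℤ))).FiniteIndex := by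
        constructor
        intro h0
        have hd := Subgroup.index_map_dvd Γ
          (f := MonoidHom.fst H (Multiplicative ℤ)) Prod.fst_surjective
        rw [h0] at hd
        exact hΓ.index_ne_zero (Nat.eq_zero_of_zero_dvd hd)
      have hb := hH _ hP
      have hx : h ∈ Γ.map (MonoidHom.fst H (Multiplicative ℤ)) := ⟨(h, n), hmem, rfl⟩
      have hxc : (⟨h, hx⟩ : Γ.map (MonoidHom.fst H (Multiplicative ℤ))) ∈
          Subgroup.center (Γ.map (MonoidHom.fst H (Multiplicative ℤ))) := by
        rw [Subgroup.mem_center_iff]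
        rintro ⟨_, ⟨⟨a, m⟩, ham, rfl⟩⟩
        have h1 := Subgroup.mem_center_iff.1 hz ⟨(a, m), ham⟩
        have h2 := congrArg Subtype.val h1
        simp only [Subgroup.coe_mul, hzz'] at h2
        exact Subtype.ext (congrArg Prod.fst h2)
      rw [hb, Subgroup.mem_bot] at hxc
      have h1 : h = 1 := congrArg Subtype.val hxc
      exact ⟨hmem, by simp [Subgroup.mem_prod, h1]⟩
    · rintro ⟨hmem, hp⟩
      have h1 : h = 1 := by simpa [Subgroup.mem_prod] using hp
      subst h1
      refine ⟨⟨_, hmem⟩, ?_, rfl⟩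
      refine Subgroup.mem_center_iff.2 ?_
      rintro ⟨⟨a, m⟩, ham⟩
      apply Subtype.ext
      simp [mul_comm]
  refine ⟨hc, Γ.comap (MonoidHom.inl H (Multiplicative ℤ)), ?_, ?_, ?_⟩
  · exact aux_comap_fi _ _ hΓ
  · refine sup_le ?_ (hc ▸ inf_le_left)
    rintro ⟨a, m⟩ ⟨ha, hm⟩
    have : m = 1 := by simpa using hm
    subst this
    exact ha
  · rw [hc]
    have hf : ((Γ.comap (MonoidHom.inl H (Multiplicative ℤ))).comap
        (MonoidHom.fst H (Multiplicative ℤ)) ⊓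
        (Γ.comap (MonoidHom.inr H (Multiplicative ℤ))).comap
        (MonoidHom.snd H (Multiplicative ℤ))).FiniteIndex := by
      have h1 := aux_comap_fi (MonoidHom.fst H (Multiplicative ℤ)) _
        (aux_comap_fi (MonoidHom.inl H (Multiplicative ℤ)) Γ hΓ)
      have h2 := aux_comap_fi (MonoidHom.snd H (Multiplicative ℤ)) _
        (aux_comap_fi (MonoidHom.inr H (Multiplicative ℤ)) Γ hΓ)
      infer_instance
    have hle : (Γ.comap (MonoidHom.inl H (Multiplicative ℤ))).comap
        (MonoidHom.fst H (Multiplicative ℤ)) ⊓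
        (Γ.comap (MonoidHom.inr H (Multiplicative ℤ))).comap
        (MonoidHom.snd H (Multiplicative ℤ)) ≤
        (Γ.comap (MonoidHom.inl H (Multiplicative ℤ))).prod ⊥ ⊔
          Γ ⊓ (⊥ : Subgroup H).prod ⊤ := by
      rintro ⟨a, m⟩ ⟨ha, hm⟩
      have e : ((a, m) : H × Multiplicative ℤ) = (a, 1) * (1, m) := by simp
      rw [e]
      refine Subgroup.mul_mem_sup ⟨ha, by simp⟩ ⟨hm, by simp [Subgroup.mem_prod]⟩
    have := Subgroup.finiteIndex_of_le hle
    infer_instance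
end

section
/- Let H be any group. The restriction map Hom(Γ_1, ℤ) → Hom(Γ_2, ℤ) is injective whenever Γ_2 ≤ Γ_1 are finite index subgroups of H, and the direct limit of the direct system of abelian groups Hom(Γ, ℤ), taken over all finite index subgroups Γ of H directed by reverse inclusion with restriction maps as connecting homomorphisms, is a torsion-free divisible abelian group. -/
/-- The finite index subgroups of `H`, ordered by *reverse* inclusion. -/
def FinIndexSubgroup (H : Type*) [Group H] : Type _ := {Γ : Subgroup H // Γ.FiniteIndex}

namespace FinIndexSubgroup

variable {H : Type*} [Group H]

instance : Preorder (FinIndexSubgroup H) :=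
  Preorder.lift fun a => OrderDual.toDual a.1

/-- In the reverse-inclusion order, `i ≤ j` means `j` is a subgroup of `i`. -/
theorem le_iff {i j : FinIndexSubgroup H} (h : i ≤ j) : j.1 ≤ i.1 := h

instance : IsDirected (FinIndexSubgroup H) (· ≤ ·) :=
  ⟨fun a b => ⟨⟨a.1 ⊓ b.1, by haveI := a.2; haveI := b.2; infer_instance⟩,
    by exact (inf_le_left : a.1 ⊓ b.1 ≤ a.1), by exact (inf_le_right : a.1 ⊓ b.1 ≤ b.1)⟩⟩

noncomputable instance : DecidableEq (FinIndexSubgroup H) := Classical.decEq _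

end FinIndexSubgroup

/-- The abelian group `Hom(Γ, ℤ)` of homomorphisms from a finite index subgroup `Γ`
of `H` to `ℤ`. -/
abbrev HomToZ {H : Type*} [Group H] (i : FinIndexSubgroup H) : Type _ :=
  Additive i.1 →+ ℤ

/-- The connecting maps of the direct system: restriction of homomorphisms along the
inclusion of a smaller finite index subgroup. -/
def restrictHomToZ {H : Type*} [Group H] (i j : FinIndexSubgroup H) (hij : i ≤ j) :
    HomToZ i →+ HomToZ j where
  toFun φ := φ.comp (MonoidHom.toAdditive (Subgroup.inclusion (FinIndexSubgroup.le_iff hij)))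
  map_zero' := by ext; rfl
  map_add' φ ψ := by ext; rfl

instance {H : Type*} [Group H] :
    DirectedSystem (fun i : FinIndexSubgroup H => HomToZ i)
      (fun i j hij φ => restrictHomToZ i j hij φ) where
  map_self := by intro i x; ext; rfl
  map_map := by intro i j k hij hjk x; ext; rfl

/-- The direct limit of the groups `Hom(Γ, ℤ)` over all finite index subgroups `Γ`
of `H`, directed by reverse inclusion, with restriction as connecting maps. -/
abbrev HomDirectLimit (H : Type*) [Group H] : Type _ :=
  AddCommGroup.DirectLimit (fun i : FinIndexSubgroup H => HomToZ i)
    (fun i j hij => restrictHomToZ i j hij)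

theorem restrictHomToZ_inj {H : Type*} [Group H] (i j : FinIndexSubgroup H) (hij : i ≤ j) :
    Function.Injective (restrictHomToZ i j hij) := by
  rw [injective_iff_map_eq_zero]
  intro φ hφ
  refine AddMonoidHom.ext fun g => ?_
  obtain ⟨n, hn, -, hg⟩ := Subgroup.exists_pow_mem_of_index_ne_zero j.2.index_ne_zero
    ((Additive.toMul g : i.1) : H)
  have h1 : φ (n • g) = 0 := DFunLike.congr_fun hφ (Additive.ofMul (⟨_, hg⟩ : j.1))
  rw [map_nsmul] at h1
  rcases smul_eq_zero.1 h1 with h | h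
  · omega
  · exact h

theorem exists_div_restrict {H : Type*} [Group H] (i : FinIndexSubgroup H) (φ : HomToZ i)
    (q : ℕ) (hq : 0 < q) :
    ∃ (j : FinIndexSubgroup H) (hij : i ≤ j) (ψ : HomToZ j),
      (q : ℤ) • ψ = restrictHomToZ i j hij φ := by
  haveI : NeZero q := ⟨hq.ne'⟩
  let f : i.1 →* Multiplicative (ZMod q) :=
    AddMonoidHom.toMultiplicativeRight ((Int.castAddHom (ZMod q)).comp φ)
  have hf : ∀ g : i.1, g ∈ f.ker → (q : ℤ) ∣ φ (Additive.ofMul g) := by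
    intro g hg
    rw [← ZMod.intCast_zmod_eq_zero_iff_dvd]
    exact hg
  haveI : Finite (Multiplicative (ZMod q)) := inferInstanceAs (Finite (ZMod q))
  have hfin : (f.ker.map i.1.subtype).FiniteIndex := by
    constructor
    rw [Subgroup.index_map_subtype]
    exact mul_ne_zero (Subgroup.FiniteIndex.index_ne_zero) i.2.index_ne_zero
  have hle : f.ker.map i.1.subtype ≤ i.1 := Subgroup.map_subtype_le _
  let j : FinIndexSubgroup H := ⟨f.ker.map i.1.subtype, hfin⟩
  have hij : i ≤ j := hle
  have hdvd : ∀ g, (q : ℤ) ∣ restrictHomToZ i j hij φ g := by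
    intro g
    obtain ⟨x, hx, hxg⟩ := (Additive.toMul g : j.1).2
    have h := hf x hx
    have he : x = Subgroup.inclusion hle (Additive.toMul g) := Subtype.ext hxg
    rw [he] at h
    exact h
  refine ⟨j, hij, AddMonoidHom.mk' (fun g => restrictHomToZ i j hij φ g / q) ?_, ?_⟩
  · intro a b
    rw [map_add, Int.add_ediv_of_dvd_left (hdvd a)]
  · ext g
    exact Int.mul_ediv_cancel' (hdvd g)

/-- STATEMENT 12: for any group `H`, restriction `Hom(Γ₁, ℤ) → Hom(Γ₂, ℤ)` is
injective whenever `Γ₂ ≤ Γ₁` are finite index subgroups of `H` (here `i ≤ j` means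
`Γ_j ⊆ Γ_i`), and the direct limit of the `Hom(Γ, ℤ)` over all finite index
subgroups, with restriction as connecting maps, is a torsion-free divisible abelian
group. -/
theorem homDirectLimit_torsionFree_divisible (H : Type*) [Group H] :
    (∀ (i j : FinIndexSubgroup H) (hij : i ≤ j),
      Function.Injective (restrictHomToZ i j hij)) ∧
      (∀ (x : HomDirectLimit H) (n : ℤ), n ≠ 0 → n • x = 0 → x = 0) ∧
      (∀ (x : HomDirectLimit H) (q : ℕ), 0 < q → ∃ y : HomDirectLimit H, (q : ℤ) • y = x) := by
  haveI : Nonempty (FinIndexSubgroup H) := ⟨⟨⊤, inferInstance⟩⟩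
  refine ⟨restrictHomToZ_inj, ?_, ?_⟩
  · intro x n hn
    induction x using AddCommGroup.DirectLimit.induction_on with
    | ih i φ =>
      intro h
      rw [← map_zsmul] at h
      obtain ⟨j, hij, h⟩ := AddCommGroup.DirectLimit.of.zero_exact _ _ h
      have h2 := (injective_iff_map_eq_zero _).1 (restrictHomToZ_inj i j hij) _ h
      have h3 : φ = 0 := by
        ext g
        have h4 : n • φ g = 0 := DFunLike.congr_fun h2 g
        exact (smul_eq_zero.1 h4).resolve_left hn
      rw [h3, map_zero]
  · intro x q hq
    induction x using AddCommGroup.DirectLimit.induction_on with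
    | ih i φ =>
      obtain ⟨j, hij, ψ, h⟩ := exists_div_restrict i φ q hq
      refine ⟨AddCommGroup.DirectLimit.of _ _ j ψ, ?_⟩
      rw [← map_zsmul, h, AddCommGroup.DirectLimit.of_f]
end

section
/- For n ≥ 3 and every positive integer k, there exists a finite index subgroup Γ of B_n such that Hom(Γ, ℤ) contains a free abelian subgroup of rank k; equivalently, the first Betti number of Γ is at least k. In particular, the virtual first Betti number of B_n is infinite. -/
namespace BVB

/-- virtual surjection onto `ℤ^k` -/
def VB (G : Type) [Group G] (k : ℕ) : Prop :=
  ∃ Γ : Subgroup G, Γ.FiniteIndex ∧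
    ∃ φ : Γ →* Multiplicative (Fin k → ℤ), Function.Surjective φ

/-- permutations of `X × Q` commuting with right translations -/
def E (X Q : Type) [Group Q] : Subgroup (Equiv.Perm (X × Q)) where
  carrier := {p | ∀ x q h, p (x, q * h) = ((p (x, q)).1, (p (x, q)).2 * h)}
  one_mem' := by intro x q h; rfl
  mul_mem' := by
    intro a b ha hb x q h
    simp only [Equiv.Perm.mul_apply]
    rw [hb, ha]
  inv_mem' := by
    intro a ha x q h
    rw [Equiv.Perm.inv_eq_iff_eq, ha]
    simp

def mk {X Q : Type} [Group Q] (π : Equiv.Perm X) (l : X → Q) : E X Q :=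
  ⟨⟨fun p => (π p.1, l p.1 * p.2), fun p => (π.symm p.1, (l (π.symm p.1))⁻¹ * p.2),
    fun p => by simp, fun p => by simp⟩, fun x q h => by simp [mul_assoc]⟩

theorem mk_apply {X Q : Type} [Group Q] (π : Equiv.Perm X) (l : X → Q) (p : X × Q) :
    (mk π l).1 p = (π p.1, l p.1 * p.2) := rfl

theorem mk_mul {X Q : Type} [Group Q] (π π' : Equiv.Perm X) (l l' : X → Q) :
    mk π l * mk π' l' = mk (π * π') (fun x => l (π' x) * l' x) := by
  apply Subtype.ext
  apply Equiv.ext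
  intro p
  simp [mk_apply, mul_assoc]

theorem mk_inv_apply {X Q : Type} [Group Q] (π : Equiv.Perm X) (l : X → Q) (p : X × Q) :
    ((mk π l)⁻¹).1 p = (π.symm p.1, (l (π.symm p.1))⁻¹ * p.2) := rfl

theorem mk_one {X Q : Type} [Group Q] : mk (1 : Equiv.Perm X) (fun _ => (1 : Q)) = 1 := by
  apply Subtype.ext
  apply Equiv.ext
  intro p
  simp [mk_apply]

theorem E_fst {X Q : Type} [Group Q] (p : E X Q) (x : X) (q : Q) :
    p.1 (x, q) = ((p.1 (x, 1)).1, (p.1 (x, 1)).2 * q) := by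
  have := p.2 x 1 q
  rwa [one_mul] at this

@[reducible] def act {X Q : Type} [Group Q] {G : Type} [Group G] (ρ : G →* E X Q) : MulAction G X where
  smul g x := ((ρ g).1 (x, 1)).1
  one_smul x := by change ((ρ 1).1 (x, 1)).1 = x; simp
  mul_smul g h x := by
    change ((ρ (g * h)).1 (x, 1)).1 = ((ρ g).1 (((ρ h).1 (x, 1)).1, 1)).1
    rw [map_mul]
    change ((ρ g).1 ((ρ h).1 (x, 1))).1 = _
    conv_lhs => rw [← Prod.mk.eta (p := (ρ h).1 (x, 1)), E_fst]

theorem transfer {X Q G : Type} [Group Q] [Group G] [Finite X] (ρ : G →* E X Q) (x0 : X)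
    (S : Set Q) (hS : Subgroup.closure S = ⊤)
    (hg : ∀ s ∈ S, ∃ g, (ρ g).1 (x0, 1) = (x0, s)) (k : ℕ) (h : VB Q k) : VB G k := by
  let _ := act ρ
  have hsm : ∀ (g : G) (x : X), g • x = ((ρ g).1 (x, 1)).1 := fun _ _ => rfl
  let H : Subgroup G := MulAction.stabilizer G x0
  have hHm : ∀ g, g ∈ H ↔ ((ρ g).1 (x0, 1)).1 = x0 := fun g => by
    rw [MulAction.mem_stabilizer_iff, hsm]
  have hHf : H.FiniteIndex := by
    have : Finite (MulAction.orbit G x0) := inferInstance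
    have e := MulAction.orbitEquivQuotientStabilizer G x0
    have : Finite (G ⧸ H) := Finite.of_equiv _ e
    exact Subgroup.finiteIndex_of_finite_quotient
  let π : H →* Q :=
    { toFun := fun g => ((ρ g.1).1 (x0, 1)).2
      map_one' := by simp
      map_mul' := by
        intro a b
        have hb : (ρ b.1).1 (x0, 1) = (x0, ((ρ b.1).1 (x0, 1)).2) :=
          Prod.ext ((hHm _).1 b.2) rfl
        rw [Subgroup.coe_mul, map_mul]
        change ((ρ a.1).1 ((ρ b.1).1 (x0, 1))).2 = _
        rw [hb, E_fst] }
  have hπ : Function.Surjective π := by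
    rw [← MonoidHom.range_eq_top, eq_top_iff, ← hS, Subgroup.closure_le]
    intro s hs
    obtain ⟨g, hg⟩ := hg s hs
    exact ⟨⟨g, (hHm g).2 (by rw [hg])⟩, by simp [π, hg]⟩
  obtain ⟨Γ, hΓ, φ, hφ⟩ := h
  let K : Subgroup H := Γ.comap π
  have hK : K.FiniteIndex :=
    ⟨by rw [Subgroup.index_comap_of_surjective _ hπ]; exact hΓ.index_ne_zero⟩
  let e : K ≃* K.map H.subtype := K.equivMapOfInjective H.subtype H.subtype_injective
  let ψ : K →* Γ := (π.subgroupComap Γ)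
  have hψ : Function.Surjective ψ := by
    rintro ⟨q, hq⟩
    obtain ⟨g, rfl⟩ := hπ q
    exact ⟨⟨g, hq⟩, rfl⟩
  refine ⟨K.map H.subtype, ?_, φ.comp (ψ.comp e.symm.toMonoidHom), ?_⟩
  · constructor
    rw [Subgroup.index_map_subtype]
    exact mul_ne_zero hK.index_ne_zero hHf.index_ne_zero
  · exact hφ.comp (hψ.comp e.symm.surjective)

theorem closure_ab (k : ℕ) : Subgroup.closure
    (Set.range fun j : Fin k => (Multiplicative.ofAdd (Pi.single j 1 : Fin k → ℤ))) = ⊤ := by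
  rw [eq_top_iff]
  intro v _
  have : v = ∏ j, (Multiplicative.ofAdd (Pi.single j 1 : Fin k → ℤ)) ^ (v.toAdd j) := by
    apply Multiplicative.toAdd.injective
    rw [toAdd_prod]
    funext i
    simp [Finset.sum_apply, Pi.single_apply]
  rw [this]
  refine Subgroup.prod_mem _ fun j _ => Subgroup.zpow_mem _ (Subgroup.subset_closure ?_) _
  exact ⟨j, rfl⟩

theorem vb_ab (k : ℕ) : VB (Multiplicative (Fin k → ℤ)) k :=
  ⟨⊤, inferInstance, (Subgroup.topEquiv (G := Multiplicative (Fin k → ℤ))).toMonoidHom,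
    (Subgroup.topEquiv (G := Multiplicative (Fin k → ℤ))).surjective⟩

open Fin.CommRing in
theorem vb_free (k : ℕ) (hk : 0 < k) : VB (FreeGroup Bool) k := by
  have : NeZero k := ⟨hk.ne'⟩
  let A : E (Fin k) (Multiplicative (Fin k → ℤ)) := mk (Equiv.addRight 1) (fun _ => 1)
  let B : E (Fin k) (Multiplicative (Fin k → ℤ)) :=
    mk 1 (fun j => Multiplicative.ofAdd (Pi.single j 1))
  have hA : ∀ (n : ℕ), A ^ n = mk (Equiv.addRight (n : Fin k)) (fun _ => 1) := by
    intro n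
    induction n with
    | zero =>
      rw [pow_zero, ← mk_one]
      congr 1
      ext; simp
    | succ n ih =>
      rw [pow_succ, ih, mk_mul]
      congr 1
      · refine Equiv.ext fun x => ?_
        change x + 1 + (n : Fin k) = x + ((n + 1 : ℕ) : Fin k)
        push_cast; ring
  refine transfer (FreeGroup.lift fun b => if b then A else B) (0 : Fin k) _ (closure_ab k)
    ?_ k (vb_ab k)
  rintro _ ⟨j, rfl⟩
  refine ⟨(FreeGroup.of true ^ (j : ℕ))⁻¹ * FreeGroup.of false * FreeGroup.of true ^ (j : ℕ), ?_⟩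
  simp only [map_mul, map_inv, map_pow, FreeGroup.lift_apply_of, if_true, hA]
  simp only [Subgroup.coe_mul, Equiv.Perm.mul_apply, mk_apply, mk_inv_apply]
  simp [B, mk_apply]

/-- the labels on the index-six cover -/
def lab (i : Fin 3) : FreeGroup Bool :=
  if i = 1 then FreeGroup.of true else if i = 2 then FreeGroup.of false else 1

def x6 : E (Fin 3 × Bool) (FreeGroup Bool) :=
  mk (Equiv.prodCongr (Equiv.refl _) Equiv.boolNot)
    (fun p => if p.2 then (lab p.1)⁻¹ else lab p.1)

def y6 : E (Fin 3 × Bool) (FreeGroup Bool) :=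
  mk (Equiv.prodCongr (Equiv.addRight 1) (Equiv.refl _)) (fun _ => 1)

theorem x6_sq : x6 * x6 = 1 := by
  rw [x6, mk_mul, ← mk_one]
  congr 1
  · ext p <;> simp
  · funext p
    rcases p with ⟨i, s⟩
    cases s <;> simp

theorem y6_cube : y6 * y6 * y6 = 1 := by
  rw [y6, mk_mul, mk_mul, ← mk_one]
  congr 1
  · ext ⟨i, s⟩ <;> fin_cases i <;> simp

theorem exists_braid (k : ℕ) (hk : 0 < k) : ∃ (Q : Type) (_ : Group Q) (a b : Q),
    a * b * a = b * a * b ∧ Subgroup.closure {a, b} = ⊤ ∧ VB Q k := by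
  let a := y6⁻¹ * x6
  let b := x6 * y6⁻¹
  have hx := x6_sq
  have hy := y6_cube
  have hxi : x6⁻¹ = x6 := inv_eq_of_mul_eq_one_left hx
  have hyi : y6⁻¹ = y6 * y6 := inv_eq_of_mul_eq_one_left hy
  have h1 : a * b * a = x6 := by
    calc a * b * a = y6⁻¹ * (x6 * x6) * y6⁻¹ * y6⁻¹ * x6 := by simp only [a, b]; group
      _ = (y6 * y6 * y6)⁻¹ * x6 := by rw [hx]; group
      _ = x6 := by rw [hy]; group
  have h2 : b * a * b = x6 := by
    calc b * a * b = x6 * y6⁻¹ * y6⁻¹ * (x6 * x6) * y6⁻¹ := by simp only [a, b]; group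
      _ = x6 * (y6 * y6 * y6)⁻¹ := by rw [hx]; group
      _ = x6 := by rw [hy]; group
  have h3 : a * b = y6 := by
    calc a * b = y6⁻¹ * (x6 * x6) * y6⁻¹ := by simp only [a, b]; group
      _ = (y6 * y6 * y6)⁻¹ * y6 := by rw [hx]; group
      _ = y6 := by rw [hy]; group
  let Q := Subgroup.closure {a, b}
  have ha : a ∈ Q := Subgroup.subset_closure (by simp)
  have hb : b ∈ Q := Subgroup.subset_closure (by simp)
  have hxQ : x6 ∈ Q := by rw [← h1]; exact mul_mem (mul_mem ha hb) ha
  have hyQ : y6 ∈ Q := by rw [← h3]; exact mul_mem ha hb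
  refine ⟨Q, inferInstance, ⟨a, ha⟩, ⟨b, hb⟩, Subtype.ext (h1.trans h2.symm), ?_, ?_⟩
  · have := Subgroup.closure_closure_coe_preimage (k := ({a, b} : Set (E (Fin 3 × Bool) (FreeGroup Bool))))
    convert this using 2
    ext ⟨z, hz⟩
    simp only [Set.mem_insert_iff, Set.mem_singleton_iff, Set.mem_preimage, Subtype.mk.injEq]
  · refine transfer Q.subtype ((0 : Fin 3), false) _ (FreeGroup.closure_range_of Bool) ?_ k
      (vb_free k hk)
    rintro _ ⟨s, rfl⟩
    cases s
    · refine ⟨⟨x6 * y6 * x6 * (y6 * y6),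
        mul_mem (mul_mem (mul_mem hxQ hyQ) hxQ) (mul_mem hyQ hyQ)⟩, ?_⟩
      simp [x6, y6, mk_apply, lab]
    · refine ⟨⟨x6 * (y6 * y6) * x6 * y6,
        mul_mem (mul_mem (mul_mem hxQ (mul_mem hyQ hyQ)) hxQ) hyQ⟩, ?_⟩
      simp [x6, y6, mk_apply, lab]


def sw {n : ℕ} (u v : Fin n) : Equiv.Perm (Fin n → Bool) where
  toFun c j := c (Equiv.swap u v j)
  invFun c j := c (Equiv.swap u v j)
  left_inv c := by funext j; simp
  right_inv c := by funext j; simp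

theorem sw_apply {n : ℕ} (u v : Fin n) (c : Fin n → Bool) (j : Fin n) :
    sw u v c j = c (Equiv.swap u v j) := rfl

theorem sw_left {n : ℕ} (u v : Fin n) (c : Fin n → Bool) : sw u v c u = c v := by
  simp [sw_apply]

theorem sw_right {n : ℕ} (u v : Fin n) (c : Fin n → Bool) : sw u v c v = c u := by
  simp [sw_apply]

theorem sw_ne {n : ℕ} {u v j : Fin n} (c : Fin n → Bool) (h1 : j ≠ u) (h2 : j ≠ v) :
    sw u v c j = c j := by
  simp [sw_apply, Equiv.swap_apply_of_ne_of_ne h1 h2]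

def tot {n : ℕ} (c : Fin n → Bool) : ℕ := ∑ j, (c j).toNat

def bef {n : ℕ} (u : Fin n) (c : Fin n → Bool) : Bool := decide (∃ j < u, c j = true)

theorem tot_sw {n : ℕ} (u v : Fin n) (c : Fin n → Bool) : tot (sw u v c) = tot c :=
  Equiv.sum_comp (Equiv.swap u v) (fun j => (c j).toNat)

theorem bef_sw {n : ℕ} {u v x : Fin n} (c : Fin n → Bool)
    (h : (x ≤ u ∧ x ≤ v) ∨ (u < x ∧ v < x)) : bef x (sw u v c) = bef x c := by
  have key : ∀ j, j < x ↔ Equiv.swap u v j < x := by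
    intro j
    rw [Equiv.swap_apply_def]
    split_ifs <;> grind
  unfold bef
  rw [decide_eq_decide]
  constructor
  · rintro ⟨j, hj, hc⟩
    exact ⟨Equiv.swap u v j, (key j).1 hj, hc⟩
  · rintro ⟨j, hj, hc⟩
    exact ⟨Equiv.swap u v j, (key j).1 hj, by simpa [sw_apply] using hc⟩

theorem bef_succ {n : ℕ} {u v : Fin n} (h : (v : ℕ) = u + 1) (c : Fin n → Bool) :
    bef v c = true ↔ bef u c = true ∨ c u = true := by
  simp only [bef, decide_eq_true_eq]
  constructor
  · rintro ⟨j, hj, hc⟩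
    rcases lt_or_eq_of_le (show j ≤ u by rw [Fin.le_def]; rw [Fin.lt_def] at hj; omega) with h | h
    · exact Or.inl ⟨j, h, hc⟩
    · exact Or.inr (h ▸ hc)
  · rintro (⟨j, hj, hc⟩ | hc)
    · exact ⟨j, by rw [Fin.lt_def] at *; omega, hc⟩
    · exact ⟨u, by rw [Fin.lt_def]; omega, hc⟩

theorem four_le {n : ℕ} (c : Fin n → Bool) {p q r s : Fin n} (h1 : p < q) (h2 : q < r)
    (h3 : r < s) (hp : c p = true) (hq : c q = true) (hr : c r = true) (hs : c s = true) :
    4 ≤ tot c := by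
  have hcard : ({p, q, r, s} : Finset (Fin n)).card = 4 := by
    have e1 : p ≠ q := by grind
    have e2 : p ≠ r := by grind
    have e3 : p ≠ s := by grind
    have e4 : q ≠ r := by grind
    have e5 : q ≠ s := by grind
    have e6 : r ≠ s := by grind
    simp [*]
  calc 4 = ∑ j ∈ ({p, q, r, s} : Finset (Fin n)), 1 := by simp [hcard]
    _ ≤ ∑ j ∈ ({p, q, r, s} : Finset (Fin n)), (c j).toNat := by
      apply Finset.sum_le_sum
      intro j hj
      simp only [Finset.mem_insert, Finset.mem_singleton] at hj
      rcases hj with rfl | rfl | rfl | rfl <;> simp [*]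
    _ ≤ tot c := Finset.sum_le_sum_of_subset (Finset.subset_univ _)

def L {n : ℕ} {Q : Type} [Group Q] (a b : Q) (u v : Fin n) (c : Fin n → Bool) : Q :=
  if tot c ≤ 3 ∧ c u = true ∧ c v = true then (if bef u c = true then b else a) else 1

def gen {n : ℕ} {Q : Type} [Group Q] (a b : Q) (u v : Fin n) :
    E (Fin n → Bool) Q := mk (sw u v) (L a b u v)

theorem gen_braid {n : ℕ} {Q : Type} [Group Q] (a b : Q) (hab : a * b * a = b * a * b)
    (u v w : Fin n) (hv : (v : ℕ) = u + 1) (hw : (w : ℕ) = v + 1) :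
    gen a b u v * gen a b v w * gen a b u v = gen a b v w * gen a b u v * gen a b v w := by
  have huv : u < v := by rw [Fin.lt_def]; omega
  have hvw : v < w := by rw [Fin.lt_def]; omega
  have huw : u < w := huv.trans hvw
  simp only [gen, mk_mul]
  congr 1
  · refine Equiv.ext fun c => funext fun j => ?_
    have e1 := Equiv.swap_mul_swap_mul_swap (x := w) (y := v) (z := u) hvw.ne' huw.ne'
    have e2 := Equiv.swap_mul_swap_mul_swap (x := u) (y := v) (z := w) huv.ne huw.ne
    rw [Equiv.swap_comm v u, Equiv.swap_comm w v] at e1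
    rw [Equiv.swap_comm w u] at e2
    have e3 := Equiv.ext_iff.1 (e1.trans e2.symm) j
    simp only [Equiv.Perm.mul_apply] at e3
    simp only [Equiv.Perm.mul_apply, sw_apply, e3]
  · funext c
    have b1 : ∀ c : Fin n → Bool, bef u (sw u v c) = bef u c :=
      fun c => bef_sw c (Or.inl ⟨le_rfl, huv.le⟩)
    have b2 : ∀ c : Fin n → Bool, bef u (sw v w c) = bef u c :=
      fun c => bef_sw c (Or.inl ⟨huv.le, huw.le⟩)
    have s1 : ∀ c : Fin n → Bool, sw u v c w = c w := fun c => sw_ne c huw.ne' hvw.ne'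
    have s2 : ∀ c : Fin n → Bool, sw v w c u = c u := fun c => sw_ne c huv.ne huw.ne
    simp only [L, Equiv.Perm.mul_apply, tot_sw, bef_succ hv, b1, b2, s1, s2, sw_left, sw_right]
    by_cases ht : tot c ≤ 3
    · by_cases hb : bef u c = true
      · have : ¬ (c u = true ∧ c v = true ∧ c w = true) := by
          rintro ⟨h1, h2, h3⟩
          obtain ⟨j, hj, hc⟩ := of_decide_eq_true hb
          have := four_le c hj huv hvw hc h1 h2 h3
          omega
        cases c u <;> cases c v <;> cases c w <;> simp_all
      · cases c u <;> cases c v <;> cases c w <;> simp_all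
    · simp [ht]

theorem gen_comm {n : ℕ} {Q : Type} [Group Q] (a b : Q)
    (u v x y : Fin n) (hv : (v : ℕ) = u + 1) (hx : (v : ℕ) < x) (hy : (y : ℕ) = x + 1) :
    gen a b u v * gen a b x y = gen a b x y * gen a b u v := by
  have huv : u < v := by rw [Fin.lt_def]; omega
  have hvx : v < x := hx
  have hxy : x < y := by rw [Fin.lt_def]; omega
  simp only [gen, mk_mul]
  congr 1
  · refine Equiv.ext fun c => funext fun j => ?_
    simp only [Equiv.Perm.mul_apply, sw_apply, Equiv.swap_apply_def]
    congr 1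
    split_ifs <;> grind
  · funext c
    have b1 : bef x (sw u v c) = bef x c := bef_sw c (Or.inr ⟨huv.trans hvx, hvx⟩)
    have b2 : bef u (sw x y c) = bef u c :=
      bef_sw c (Or.inl ⟨(huv.trans hvx).le, (huv.trans (hvx.trans hxy)).le⟩)
    have s1 : sw u v c x = c x := sw_ne c (by grind) (by grind)
    have s2 : sw u v c y = c y := sw_ne c (by grind) (by grind)
    have s3 : sw x y c u = c u := sw_ne c (by grind) (by grind)
    have s4 : sw x y c v = c v := sw_ne c (by grind) (by grind)
    simp only [L, tot_sw, b1, b2, s1, s2, s3, s4]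
    by_cases ht : tot c ≤ 3
    · have : ¬ (c u = true ∧ c v = true ∧ c x = true ∧ c y = true) := by
        rintro ⟨h1, h2, h3, h4⟩
        have := four_le c huv hvx hxy h1 h2 h3 h4
        omega
      clear s1 s2 s3 s4
      revert this
      cases c u <;> cases c v <;> cases c x <;> cases c y <;> simp_all
    · simp [ht]

theorem vb_braid (n : ℕ) (hn : 3 ≤ n) (k : ℕ) (hk : 0 < k) : VB (BraidGroup n) k := by
  obtain ⟨Q, _, a, b, hab, hcl, hQ⟩ := exists_braid k hk
  let F : Fin (n - 1) → E (Fin n → Bool) Q := fun i =>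
    gen a b ⟨i, by omega⟩ ⟨i + 1, by omega⟩
  have hF : ∀ r ∈ braidRels (n - 1), FreeGroup.lift F r = 1 := by
    rintro r (⟨i, j, hij, rfl⟩ | ⟨i, j, hij, rfl⟩)
    · simp only [map_mul, map_inv, FreeGroup.lift_apply_of]
      rw [mul_inv_eq_one]
      have hj : F j = gen a b ⟨i + 1, by omega⟩ ⟨i + 1 + 1, by omega⟩ := by
        simp only [F, hij]
      rw [hj]
      exact gen_braid a b hab _ _ _ rfl rfl
    · simp only [map_mul, map_inv, FreeGroup.lift_apply_of]
      rw [mul_inv_eq_one]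
      exact gen_comm a b _ _ _ _ rfl hij rfl
  let c0 : Fin n → Bool := fun j => decide ((j : ℕ) < 3)
  have hc0 : tot c0 ≤ 3 := by
    unfold tot
    rw [Fin.sum_univ_eq_sum_range (fun j => (decide (j < 3)).toNat) n]
    obtain ⟨m, rfl⟩ := Nat.exists_eq_add_of_le hn
    rw [Finset.sum_range_add]
    simp [Finset.sum_range_succ]
  refine transfer (PresentedGroup.toGroup hF) c0 _ hcl ?_ k hQ
  rintro s (rfl | rfl)
  · refine ⟨PresentedGroup.of ⟨0, by omega⟩, ?_⟩
    rw [PresentedGroup.toGroup.of]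
    simp only [F, gen, mk_apply]
    refine Prod.ext ?_ ?_
    · funext j
      simp only [sw_apply, Equiv.swap_apply_def, c0]
      split_ifs <;> simp_all
    · have : ¬ bef (⟨0, by omega⟩ : Fin n) c0 = true := by
        intro h
        obtain ⟨j, hj, _⟩ := of_decide_eq_true h
        exact absurd hj (by simp [Fin.lt_def])
      simp [L, hc0, this]
      simp [c0]
  · refine ⟨PresentedGroup.of ⟨1, by omega⟩, ?_⟩
    rw [PresentedGroup.toGroup.of]
    simp only [F, gen, mk_apply]
    refine Prod.ext ?_ ?_
    · funext j
      simp only [sw_apply, Equiv.swap_apply_def, c0]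
      split_ifs <;> simp_all
    · have : bef (⟨1, by omega⟩ : Fin n) c0 = true :=
        decide_eq_true ⟨⟨0, by omega⟩, by simp [Fin.lt_def], by simp [c0]⟩
      simp [L, hc0, this]
      simp [c0]

end BVB

/-- STATEMENT 14: for `n ≥ 3` and every positive integer `k` there is a finite index
subgroup `Γ` of `B_n` such that `Hom(Γ, ℤ)` contains a free abelian subgroup of rank
`k` (equivalently, the first Betti number of `Γ` is at least `k`); hence the virtual
first Betti number of `B_n` is infinite. -/
theorem braid_virtual_betti_infinite (n : ℕ) (hn : 3 ≤ n) (k : ℕ) (hk : 0 < k) :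
    ∃ Γ : Subgroup (BraidGroup n), Γ.FiniteIndex ∧
      ∃ f : (Fin k → ℤ) →+ (Additive Γ →+ ℤ), Function.Injective f := by
  obtain ⟨Γ, hΓ, φ, hφ⟩ := BVB.vb_braid n hn k hk
  refine ⟨Γ, hΓ, AddMonoidHom.mk' (fun v => AddMonoidHom.mk'
    (fun γ => ∑ j, v j * (φ γ.toMul).toAdd j) ?_) ?_, ?_⟩
  · intro x y
    simp [mul_add, Finset.sum_add_distrib]
  · intro v w
    ext x
    simp [add_mul, Finset.sum_add_distrib]
  · intro v w h
    funext i
    obtain ⟨γ, hγ⟩ := hφ (Multiplicative.ofAdd (Pi.single i 1))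
    have := DFunLike.congr_fun h (Additive.ofMul γ)
    simpa [hγ, Pi.single_apply] using this
end

section
/- For n ≥ 4 and any finite index subgroup Ĝ of B_n/Z(B_n), the direct limit of the abelian groups Hom(Ĥ, ℤ), taken over all finite index subgroups Ĥ of Ĝ directed by reverse inclusion with restriction maps as connecting homomorphisms, is isomorphic as an abelian group to the direct sum ⊕_{i∈ℕ} ℚ of countably infinitely many copies of ℚ. -/
section braid
variable {L : Type*} [Group L] (a b : L)

/-- position after adjacent transposition -/
def adjS (i p : ℕ) : ℕ := if p = i then i + 1 else if p = i + 1 then i else p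

/-- label of a crossing -/
def lab (i p q r : ℕ) : L :=
  if p = i ∧ q = i + 1 then a
  else if q = i ∧ r = i + 1 then b
  else if p = i ∧ r = i + 1 then (if i < q then (a * b)⁻¹ else (b * a)⁻¹)
  else 1

theorem pos_cases (i p : ℕ) : p = i ∨ p = i + 1 ∨ p = i + 2 ∨
    (p ≠ i ∧ p ≠ i + 1 ∧ p ≠ i + 2 ∧ i < p ∧ i + 1 < p ∧ adjS i p = p ∧ adjS (i+1) p = p) ∨
    (p ≠ i ∧ p ≠ i + 1 ∧ p ≠ i + 2 ∧ ¬ i < p ∧ ¬ i + 1 < p ∧ adjS i p = p ∧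
      adjS (i+1) p = p) := by
  unfold adjS
  split_ifs <;> omega

set_option maxHeartbeats 2000000 in
theorem lab_braid (i p q r : ℕ) (h1 : p ≠ q) (h2 : q ≠ r) (h3 : p ≠ r) :
    lab a b i p q r * (lab a b (i+1) (adjS i p) (adjS i q) (adjS i r) *
      lab a b i (adjS (i+1) (adjS i p)) (adjS (i+1) (adjS i q)) (adjS (i+1) (adjS i r))) =
    lab a b (i+1) p q r * (lab a b i (adjS (i+1) p) (adjS (i+1) q) (adjS (i+1) r) *
      lab a b (i+1) (adjS i (adjS (i+1) p)) (adjS i (adjS (i+1) q)) (adjS i (adjS (i+1) r))) := by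
  have S1 : adjS i i = i + 1 := by simp [adjS]
  have S2 : adjS i (i+1) = i := by simp [adjS]
  have S3 : adjS i (i+2) = i+2 := by simp [adjS]
  have S4 : adjS (i+1) i = i := by unfold adjS; split_ifs <;> omega
  have S5 : adjS (i+1) (i+1) = i+2 := by simp [adjS]
  have S6 : adjS (i+1) (i+2) = i+1 := by simp [adjS]
  have T1 : ¬ (i = i + 2) := by omega
  have T2 : i + 1 + 1 = i + 2 := rfl
  rcases pos_cases i p with hp | hp | hp | ⟨p1, p2, p3, p4, p5, p6, p7⟩ |
      ⟨p1, p2, p3, p4, p5, p6, p7⟩ <;>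
  rcases pos_cases i q with hq | hq | hq | ⟨q1, q2, q3, q4, q5, q6, q7⟩ |
      ⟨q1, q2, q3, q4, q5, q6, q7⟩ <;>
  rcases pos_cases i r with hr | hr | hr | ⟨r1, r2, r3, r4, r5, r6, r7⟩ |
      ⟨r1, r2, r3, r4, r5, r6, r7⟩ <;>
  first
  | (exfalso; omega)
  | simp [lab, *]

theorem lab_far (i j p q r : ℕ) (hij : i + 1 < j ∨ j + 1 < i) :
    lab a b j (adjS i p) (adjS i q) (adjS i r) = lab a b j p q r := by
  have h1 : ∀ x, adjS i x = j ↔ x = j := by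
    intro x; unfold adjS; split_ifs <;> omega
  have h2 : ∀ x, adjS i x = j + 1 ↔ x = j + 1 := by
    intro x; unfold adjS; split_ifs <;> omega
  have h3 : ∀ x, j < adjS i x ↔ j < x := by
    intro x; unfold adjS; split_ifs <;> omega
  simp only [lab, h1, h2, h3]

theorem lab_comm (i j p q r : ℕ) (hij : i + 1 < j) :
    lab a b i p q r * lab a b j (adjS i p) (adjS i q) (adjS i r)  =
    lab a b j p q r * lab a b i (adjS j p) (adjS j q) (adjS j r) := by
  have e3 : lab a b i p q r = 1 ∨ lab a b j p q r = 1 := by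
    unfold lab
    split_ifs <;> first | omega | simp
  rw [lab_far a b i j p q r (.inl hij), lab_far a b j i p q r (.inr hij)]
  rcases e3 with h | h <;> simp [h]

end braid

theorem vs_iso (V : Type*) [AddCommGroup V] [Module ℚ V] [Countable V]
    (h : ∀ m : ℕ, ∃ v : Fin m → V, LinearIndependent ℤ v) : Nonempty (V ≃+ (ℕ →₀ ℚ)) := by
  let b := Module.Basis.ofVectorSpace ℚ V
  have hc : Countable (Module.Basis.ofVectorSpaceIndex ℚ V) := inferInstance
  have hi : Infinite (Module.Basis.ofVectorSpaceIndex ℚ V) := by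
    by_contra hfin
    rw [not_infinite_iff_finite] at hfin
    have : Module.Finite ℚ V := Module.Finite.of_basis b
    obtain ⟨v, hv⟩ := h (Module.finrank ℚ V + 1)
    have hv' := (LinearIndependent.iff_fractionRing ℤ ℚ).1 hv
    have := hv'.fintype_card_le_finrank
    simp at this
  obtain ⟨e⟩ := nonempty_equiv_of_countable (α := Module.Basis.ofVectorSpaceIndex ℚ V) (β := ℕ)
  exact ⟨(b.repr.trans (Finsupp.domLCongr e)).toAddEquiv⟩

theorem loc_iso {R M : Type*} [CommRing R] [AddCommGroup M] [Module R M] (S : Submonoid R)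
    (h : IsLocalizedModule S (LinearMap.id : M →ₗ[R] M)) : Nonempty (M ≃+ LocalizedModule S M) :=
  ⟨(IsLocalizedModule.iso S (LinearMap.id : M →ₗ[R] M)).symm.toAddEquiv⟩

theorem div_iso (V : Type*) [AddCommGroup V] [Countable V]
    (hdiv : ∀ (d : ℤ), d ≠ 0 → ∀ x : V, ∃ y : V, d • y = x)
    (htf : ∀ (d : ℤ), d ≠ 0 → ∀ x : V, d • x = 0 → x = 0)
    (h : ∀ m : ℕ, ∃ v : Fin m → V, LinearIndependent ℤ v) : Nonempty (V ≃+ (ℕ →₀ ℚ)) := by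
  have hloc : IsLocalizedModule (nonZeroDivisors ℤ) (LinearMap.id : V →ₗ[ℤ] V) := by
    refine ⟨?_, fun y => ⟨⟨y, 1⟩, by simp⟩, fun {x y} h => ⟨1, by simpa using h⟩⟩
    rintro ⟨d, hd⟩
    have hd0 : d ≠ 0 := nonZeroDivisors.ne_zero hd
    rw [Module.End.isUnit_iff]
    constructor
    · rw [injective_iff_map_eq_zero]
      intro x hx
      exact htf d hd0 x (by simpa [Module.algebraMap_end_apply] using hx)
    · intro x
      obtain ⟨y, hy⟩ := hdiv d hd0 x
      exact ⟨y, by simpa [Module.algebraMap_end_apply] using hy⟩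
  obtain ⟨e⟩ := loc_iso _ hloc
  let W := LocalizedModule (nonZeroDivisors ℤ) V
  let _ : Module ℚ W := LocalizedModule.moduleOfIsLocalization
  have : Countable W := e.toEquiv.countable_iff.1 inferInstance
  obtain ⟨f⟩ := vs_iso W (fun m => by
    obtain ⟨v, hv⟩ := h m
    let e' : V ≃ₗ[ℤ] W := e.toIntLinearEquiv
    exact ⟨e' ∘ v, hv.map' e'.toLinearMap e'.ker⟩)
  exact ⟨e.trans f⟩

/-- Infinite virtual first Betti number, in a hands-on form. -/
def Big (G : Type*) [Group G] : Prop :=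
  ∀ m : ℕ, ∃ K : Subgroup G, K.FiniteIndex ∧ ∃ (f : Fin m → (Additive K →+ ℤ)) (x : Fin m → K),
    (∀ i, f i (Additive.ofMul (x i)) ≠ 0) ∧ ∀ i j, i ≠ j → f i (Additive.ofMul (x j)) = 0

theorem Big.subgroup {G : Type*} [Group G] (h : Big G) (A : Subgroup G) (hA : A.FiniteIndex) :
    Big A := by
  intro m
  obtain ⟨K, hK, f, x, h1, h2⟩ := h m
  have := fun i => Subgroup.exists_pow_mem_of_index_ne_zero hA.index_ne_zero (x i : G)
  choose d hd0 _ hd using this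
  refine ⟨K.subgroupOf A, inferInstance, fun i => (f i).comp
    (MonoidHom.toAdditive ((A.subtype.subgroupComap K))), fun i =>
    ⟨⟨(x i : G) ^ d i, hd i⟩, ?_⟩, ?_, ?_⟩
  · exact K.pow_mem (x i).2 _
  · intro i
    have : (f i) (Additive.ofMul (x i ^ d i)) ≠ 0 := by
      rw [ofMul_pow, map_nsmul]
      exact smul_ne_zero (hd0 i).ne' (h1 i)
    exact this
  · intro i j hij
    have : (f i) (Additive.ofMul (x j ^ d j)) = 0 := by
      rw [ofMul_pow, map_nsmul, h2 i j hij, smul_zero]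
    exact this

section
variable {G : Type*} [Group G]

instance : Nonempty (FinIndexSubgroup G) := ⟨⟨⊤, inferInstance⟩⟩

theorem of_inj (i : FinIndexSubgroup G) (φ : HomToZ i)
    (h : AddCommGroup.DirectLimit.of (fun i : FinIndexSubgroup G => HomToZ i)
      (fun i j hij => restrictHomToZ i j hij) i φ = 0) : φ = 0 := by
  obtain ⟨j, hij, hj⟩ := AddCommGroup.DirectLimit.of.zero_exact _ _ h
  refine AddMonoidHom.ext fun x => ?_
  have := j.2
  obtain ⟨d, hd0, _, hd⟩ := Subgroup.exists_pow_mem_of_index_ne_zero j.2.index_ne_zero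
    (x.toMul : G)
  have h3 : φ (d • x) = 0 := DFunLike.congr_fun hj
    (Additive.ofMul (⟨(x.toMul : G) ^ d, hd⟩ : j.1))
  rw [map_nsmul] at h3
  simpa [hd0.ne'] using h3

theorem countable_fi [Countable G] [Group.FG G] : Countable (FinIndexSubgroup G) := by
  have : ∀ i : FinIndexSubgroup G, ∃ s : Finset G, Subgroup.closure (s : Set G) = i.1 := by
    intro i
    have := i.2
    have h : Group.FG i.1 := inferInstance
    exact (Group.fg_iff_subgroup_fg _).1 h
  choose s hs using this
  refine Function.Injective.countable (f := s) ?_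
  intro i j hij
  apply Subtype.ext
  rw [← hs i, ← hs j, hij]

theorem countable_hom (H : Type*) [Group H] [Group.FG H] : Countable (Additive H →+ ℤ) := by
  obtain ⟨s, hs⟩ := Group.fg_def.1 (inferInstance : Group.FG H)
  refine Function.Injective.countable (f := fun (φ : Additive H →+ ℤ) (x : s) =>
    φ (Additive.ofMul x.1)) ?_
  intro φ ψ h
  have : AddMonoidHom.toMultiplicativeRight φ = AddMonoidHom.toMultiplicativeRight ψ := by
    refine MonoidHom.eq_of_eqOn_dense hs ?_
    intro x hx
    exact congrArg Multiplicative.ofAdd (congrFun h ⟨x, hx⟩)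
  exact AddMonoidHom.toMultiplicativeRight.injective this

theorem limit_iso [Countable G] [Group.FG G] (hG : Big G) : Nonempty (HomDirectLimit G ≃+ (ℕ →₀ ℚ)) := by
  let o := fun i => AddCommGroup.DirectLimit.of (fun i : FinIndexSubgroup G => HomToZ i)
      (fun i j hij => restrictHomToZ i j hij) i
  have hc : Countable (HomDirectLimit G) := by
    have := countable_fi (G := G)
    have : ∀ i : FinIndexSubgroup G, Countable (HomToZ i) := fun i => by
      have := i.2
      exact countable_hom i.1
    refine Function.Surjective.countable (f := fun p : (Σ i : FinIndexSubgroup G, HomToZ i) =>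
      o p.1 p.2) ?_
    intro z
    induction z using AddCommGroup.DirectLimit.induction_on with
    | _ i x => exact ⟨⟨i, x⟩, rfl⟩
  refine div_iso _ ?_ ?_ ?_
  · intro d hd z
    induction z using AddCommGroup.DirectLimit.induction_on with
    | _ i φ =>
    have hi := i.2
    have : NeZero d.natAbs := ⟨by simpa using hd⟩
    let N : Subgroup i.1 := (AddMonoidHom.toMultiplicativeRight
      ((Int.castAddHom (ZMod d.natAbs)).comp φ)).ker
    have hN : N.FiniteIndex := by
      have : Finite (Multiplicative (ZMod d.natAbs)) := inferInstance
      infer_instance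
    have hmem : ∀ x : i.1, x ∈ N → d ∣ φ (Additive.ofMul x) := by
      intro x hx
      have h1 : ((φ (Additive.ofMul x) : ℤ) : ZMod d.natAbs) = 0 := hx
      rw [ZMod.intCast_zmod_eq_zero_iff_dvd] at h1
      exact Int.natAbs_dvd.1 h1
    let j : FinIndexSubgroup G := ⟨N.map i.1.subtype, ⟨by
      rw [Subgroup.index_map_subtype]
      exact mul_ne_zero hN.index_ne_zero hi.index_ne_zero⟩⟩
    have hij : i ≤ j := show N.map i.1.subtype ≤ i.1 from Subgroup.map_subtype_le N
    have hdv : ∀ x : Additive j.1, d ∣ restrictHomToZ i j hij φ x := by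
      intro x
      obtain ⟨y, hy, hyx⟩ := (x.toMul).2
      have : Subgroup.inclusion (FinIndexSubgroup.le_iff hij) x.toMul = y :=
        Subtype.ext hyx.symm
      have h2 := hmem y hy
      rw [← this] at h2
      exact h2
    let ψ : HomToZ j :=
      { toFun := fun x => restrictHomToZ i j hij φ x / d
        map_zero' := by simp
        map_add' := fun x y => by
          rw [map_add, Int.add_ediv_of_dvd_left (hdv x)] }
    refine ⟨o j ψ, ?_⟩
    rw [← map_zsmul, ← AddCommGroup.DirectLimit.of_f hij]
    congr 1
    ext x
    exact Int.mul_ediv_cancel' (hdv x)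
  · intro d hd z
    induction z using AddCommGroup.DirectLimit.induction_on with
    | _ i φ =>
    intro h
    rw [← map_zsmul] at h
    have := of_inj _ _ h
    have h3 : φ = 0 := by
      refine AddMonoidHom.ext fun x => ?_
      have := DFunLike.congr_fun this x
      have h5 : d • φ x = 0 := this
      simpa [hd] using h5
    rw [h3, map_zero]
  · intro m
    obtain ⟨K, hK, f, x, h1, h2⟩ := hG m
    let i : FinIndexSubgroup G := ⟨K, hK⟩
    refine ⟨fun t => o i (f t), ?_⟩
    rw [Fintype.linearIndependent_iff]
    intro c hc t
    have h3 : o i (∑ t, c t • f t) = 0 := by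
      rw [map_sum, ← hc]
      simp only [map_zsmul]
    have h4 := DFunLike.congr_fun (of_inj _ _ h3) (Additive.ofMul (x t))
    rw [AddMonoidHom.finsetSum_apply, Finset.sum_eq_single t] at h4
    · simpa [h1 t] using h4
    · intro s _ hs
      simp [h2 s t hs]
    · simp

end

section braidHom
variable {L : Type*} [Group L] (a b : L)

/-- Image of a standard generator in the wreath product. -/
def genImg (n : ℕ) (hn : 4 ≤ n) (i : Fin (n - 1)) : RegularWreathProduct L (Equiv.Perm (Fin n)) :=
  ⟨fun x => lab a b i (x ⟨0, by omega⟩) (x ⟨1, by omega⟩) (x ⟨2, by omega⟩),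
    Equiv.swap ⟨i, by omega⟩ ⟨i + 1, by omega⟩⟩

theorem swap_val {n : ℕ} (i : ℕ) (h : i < n) (h' : i + 1 < n) (x : Fin n) :
    ((Equiv.swap (⟨i, h⟩ : Fin n) ⟨i + 1, h'⟩ x : Fin n) : ℕ) = adjS i x := by
  rw [Equiv.swap_apply_def]
  unfold adjS
  simp only [Fin.ext_iff]
  split_ifs <;> simp_all

theorem adjS_comm (i j x : ℕ) (h : i + 1 < j) : adjS i (adjS j x) = adjS j (adjS i x) := by
  rcases (by omega : x = i ∨ x = i + 1 ∨ x = j ∨ x = j + 1 ∨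
    (x ≠ i ∧ x ≠ i + 1 ∧ x ≠ j ∧ x ≠ j + 1)) with h1 | h1 | h1 | h1 | ⟨h1, h2, h3, h4⟩
  all_goals
    unfold adjS
    grind

theorem genImg_rels (n : ℕ) (hn : 4 ≤ n) :
    ∀ r ∈ braidRels (n - 1), FreeGroup.lift (genImg a b n hn) r = 1 := by
  have key : ∀ (x : Equiv.Perm (Fin n)) (u v : Fin n), u ≠ v → ((x u : Fin n) : ℕ) ≠ x v := by
    intro x u v huv h
    exact huv (x.injective (Fin.ext h))
  rintro r (⟨i, j, hij, rfl⟩ | ⟨i, j, hij, rfl⟩)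
  · rw [map_mul, map_inv, mul_inv_eq_one]
    simp only [map_mul, FreeGroup.lift_apply_of]
    obtain ⟨j, hj⟩ := j
    simp only at hij
    subst hij
    apply RegularWreathProduct.ext
    · funext x
      simp only [genImg, RegularWreathProduct.mul_left,
        Pi.mul_apply, Equiv.swap_inv, Equiv.Perm.mul_apply, swap_val, mul_assoc]
      exact lab_braid a b i _ _ _ (key x _ _ (by simp)) (key x _ _ (by simp))
        (key x _ _ (by simp))
    · simp only [genImg, RegularWreathProduct.mul_right]
      ext x
      simp only [Equiv.Perm.mul_apply, swap_val]
      unfold adjS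
      split_ifs <;> omega
  · rw [map_mul, map_inv, mul_inv_eq_one]
    simp only [map_mul, FreeGroup.lift_apply_of]
    apply RegularWreathProduct.ext
    · funext x
      simp only [genImg, RegularWreathProduct.mul_left,
        Pi.mul_apply, Equiv.swap_inv, Equiv.Perm.mul_apply, swap_val]
      exact lab_comm a b i j _ _ _ hij
    · simp only [genImg, RegularWreathProduct.mul_right]
      ext x
      simp only [Equiv.Perm.mul_apply, swap_val]
      exact adjS_comm i j x hij

/-- The homomorphism to the wreath product. -/
def bigHom (n : ℕ) (hn : 4 ≤ n) : BraidGroup n →* RegularWreathProduct L (Equiv.Perm (Fin n)) :=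
  PresentedGroup.toGroup (genImg_rels a b n hn)

/-- The pure braid group. -/
def pureB (n : ℕ) (hn : 4 ≤ n) : Subgroup (BraidGroup n) :=
  (RegularWreathProduct.rightHom.comp (bigHom a b n hn)).ker

theorem mem_pureB {n : ℕ} {hn : 4 ≤ n} {g : BraidGroup n} :
    g ∈ pureB a b n hn ↔ (bigHom a b n hn g).right = 1 := Iff.rfl

/-- The homomorphism from the pure braid group. -/
def pureHom (n : ℕ) (hn : 4 ≤ n) : pureB a b n hn →* L where
  toFun g := (bigHom a b n hn g.1).left 1
  map_one' := by simp
  map_mul' g h := by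
    have := (mem_pureB a b).1 g.2
    simp [this]

theorem exists_pure (n : ℕ) (hn : 4 ≤ n) :
    (∃ g : pureB a b n hn, pureHom a b n hn g = a) ∧
    (∃ g : pureB a b n hn, pureHom a b n hn g = b) := by
  have h : ∀ i : Fin (n-1), bigHom a b n hn (PresentedGroup.of i) = genImg a b n hn i :=
    fun i => PresentedGroup.toGroup.of _
  have h2 : ∀ i : Fin (n-1), PresentedGroup.of i ^ 2 ∈ pureB a b n hn := by
    intro i
    rw [mem_pureB, map_pow, h, pow_two, RegularWreathProduct.mul_right]
    simp [genImg]
  refine ⟨⟨⟨PresentedGroup.of ⟨0, by omega⟩ ^ 2, h2 _⟩, ?_⟩,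
    ⟨⟨PresentedGroup.of ⟨1, by omega⟩ ^ 2, h2 _⟩, ?_⟩⟩
  · show (bigHom a b n hn (PresentedGroup.of ⟨0, by omega⟩ ^ 2)).left 1 = a
    rw [map_pow, h, pow_two, RegularWreathProduct.mul_left]
    simp only [genImg, Pi.mul_apply, Equiv.swap_inv, Equiv.Perm.mul_apply, swap_val]
    simp [lab, adjS]
  · show (bigHom a b n hn (PresentedGroup.of ⟨1, by omega⟩ ^ 2)).left 1 = b
    rw [map_pow, h, pow_two, RegularWreathProduct.mul_left]
    simp only [genImg, Pi.mul_apply, Equiv.swap_inv, Equiv.Perm.mul_apply, swap_val]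
    simp [lab, adjS]

end braidHom

theorem conj_single {D Q : Type*} [Group D] [Group Q] [DecidableEq Q] (r : Q) (d : D) :
    (RegularWreathProduct.inl r : RegularWreathProduct D Q) * ⟨Pi.mulSingle 1 d, 1⟩ *
      (RegularWreathProduct.inl r)⁻¹ = ⟨Pi.mulSingle r d, 1⟩ := by
  apply RegularWreathProduct.ext
  · funext x
    simp [Pi.mulSingle_apply, inv_mul_eq_one, @eq_comm _ r x]
  · simp

set_option maxHeartbeats 1000000 in
theorem big_of_lamp {B : Type*} [Group B]
    (h : ∀ (L : Type) [Group L] (a b : L), ∃ (P : Subgroup B) (_ : P.FiniteIndex) (ψ : P →* L),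
      (∃ g, ψ g = a) ∧ ∃ g, ψ g = b) : Big (B ⧸ Subgroup.center B) := by
  intro m
  let Q := Multiplicative (ZMod (m + 1))
  let q : Q := Multiplicative.ofAdd 1
  let bb : RegularWreathProduct (Multiplicative ℤ) Q :=
    ⟨Pi.mulSingle 1 (Multiplicative.ofAdd 1), 1⟩
  obtain ⟨P, hP, ψ, ⟨ga, hga⟩, gb, hgb⟩ := h (RegularWreathProduct (Multiplicative ℤ) Q)
    (RegularWreathProduct.inl q) bb
  let N : Subgroup P := (RegularWreathProduct.rightHom.comp ψ).ker
  have hNi : ∀ g : P, g ∈ N ↔ (ψ g).right = 1 := fun g => Iff.rfl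
  have hN : N.FiniteIndex := by
    have : Finite Q := inferInstanceAs (Finite (ZMod (m + 1)))
    infer_instance
  let pr : N →* B ⧸ Subgroup.center B :=
    (QuotientGroup.mk' (Subgroup.center B)).comp (P.subtype.comp N.subtype)
  let c : Q → (N →* Multiplicative ℤ) := fun j =>
    { toFun := fun g => (ψ g.1).left j
      map_one' := by simp
      map_mul' := fun g h => by
        have := (hNi _).1 g.2
        simp [this] }
  have hc : ∀ j g, c j g = (ψ g.1).left j := fun _ _ => rfl
  let cc : Fin m → (N →* Multiplicative ℤ) := fun i => c (q ^ ((i : ℕ) + 1)) / c 1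
  have hcen : ∀ (i : ℕ) (g : N), ((g : P) : B) ∈ Subgroup.center B → c (q ^ i) g = c 1 g := by
    intro i g hg
    have hcomm : (g : P) * ga = ga * (g : P) :=
      Subtype.ext (Subgroup.mem_center_iff.1 hg ga).symm
    have h1 := congrArg ψ hcomm
    rw [map_mul, map_mul, hga] at h1
    have h2 := congrArg RegularWreathProduct.left h1
    induction i with
    | zero => simp
    | succ i ih =>
      rw [← ih, hc, hc]
      have h3 := congrFun h2 (q ^ (i + 1))
      simp only [RegularWreathProduct.mul_left, RegularWreathProduct.left_inl,
        RegularWreathProduct.right_inl, Pi.mul_apply, Pi.one_apply, mul_one, one_mul] at h3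
      rw [h3, pow_succ']
      simp
  have hker : ∀ i, pr.rangeRestrict.ker ≤ (cc i).ker := by
    intro i g hg
    rw [MonoidHom.ker_rangeRestrict, MonoidHom.mem_ker] at hg
    have hg' : ((g : P) : B) ∈ Subgroup.center B := (QuotientGroup.eq_one_iff _).1 hg
    rw [MonoidHom.mem_ker, MonoidHom.div_apply, div_eq_one]
    exact hcen _ g hg'
  let f : Fin m → (pr.range →* Multiplicative ℤ) := fun i =>
    pr.rangeRestrict.liftOfSurjective pr.rangeRestrict_surjective ⟨cc i, hker i⟩
  have hf : ∀ i g, f i (pr.rangeRestrict g) = cc i g := fun i g =>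
    MonoidHom.liftOfRightInverse_comp_apply _ _ _ ⟨cc i, hker i⟩ g
  have hx : ∀ i : ℕ, ∃ g : N, (ψ g.1).left = Pi.mulSingle (q ^ i) (Multiplicative.ofAdd 1) := by
    intro i
    have e : ψ (ga ^ i * gb * (ga ^ i)⁻¹) =
        ⟨Pi.mulSingle (q ^ i) (Multiplicative.ofAdd 1), 1⟩ := by
      rw [map_mul, map_mul, map_inv, map_pow, hga, hgb, ← map_pow]
      exact conj_single _ _
    exact ⟨⟨ga ^ i * gb * (ga ^ i)⁻¹, by rw [hNi, e]⟩, by rw [e]⟩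
  choose x hx using hx
  have hq : ∀ i j : ℕ, i < m + 1 → j < m + 1 → q ^ i = q ^ j → i = j := by
    intro i j hi hj hij
    have h1 : ((i : ℕ) : ZMod (m+1)) = (j : ZMod (m+1)) := by
      have h0 : (i • (1 : ZMod (m+1))) = j • (1 : ZMod (m+1)) := hij
      simpa using h0
    rw [ZMod.natCast_eq_natCast_iff'] at h1
    rwa [Nat.mod_eq_of_lt hi, Nat.mod_eq_of_lt hj] at h1
  have hval : ∀ i j : ℕ, i < m + 1 → j < m + 1 →
      c (q ^ i) (x j) = if i = j then Multiplicative.ofAdd 1 else 1 := by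
    intro i j hi hj
    rw [hc, hx, Pi.mulSingle_apply]
    congr 1
    exact propext ⟨hq i j hi hj, fun h => by rw [h]⟩
  have hcc : ∀ i j : Fin m, cc i (x (j + 1)) = if i = j then Multiplicative.ofAdd 1 else 1 := by
    intro i j
    have h0 := hval 0 (j + 1) (by omega) (by omega)
    rw [pow_zero] at h0
    simp only [cc, MonoidHom.div_apply]
    rw [h0, hval (i+1) (j+1) (by omega) (by omega)]
    simp [Fin.ext_iff]
  refine ⟨pr.range, ?_, fun i => MonoidHom.toAdditiveLeft (f i),
    fun j => pr.rangeRestrict (x (j + 1)), ?_, ?_⟩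
  · have e : pr.range = (N.map P.subtype).map (QuotientGroup.mk' (Subgroup.center B)) := by
      rw [Subgroup.map_map, MonoidHom.range_eq_map]
      ext y
      simp [pr]
    rw [e]
    have h1 : (N.map P.subtype).index ≠ 0 := by
      rw [Subgroup.index_map_subtype]
      exact mul_ne_zero hN.index_ne_zero hP.index_ne_zero
    exact ⟨ne_zero_of_dvd_ne_zero h1
      (Subgroup.index_map_dvd _ (QuotientGroup.mk'_surjective _))⟩
  · intro i
    have : f i (pr.rangeRestrict (x (i + 1))) = Multiplicative.ofAdd 1 := by
      rw [hf, hcc, if_pos rfl]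
    have h2 : (MonoidHom.toAdditiveLeft (f i)) (Additive.ofMul (pr.rangeRestrict (x (i + 1)))) =
      (1 : ℤ) := this
    rw [h2]
    exact one_ne_zero
  · intro i j hij
    have : f i (pr.rangeRestrict (x (j + 1))) = 1 := by
      rw [hf, hcc, if_neg hij]
    exact this

theorem big_braid (n : ℕ) (hn : 4 ≤ n) : Big (BraidGroup n ⧸ Subgroup.center (BraidGroup n)) := by
  apply big_of_lamp
  intro L _ a b
  refine ⟨pureB a b n hn, ?_, pureHom a b n hn, exists_pure a b n hn⟩
  unfold pureB
  infer_instance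

/-- STATEMENT 15: for `n ≥ 4` and any finite index subgroup `Ghat` of `B_n/Z(B_n)`, the
direct limit of the groups `Hom(Ĥ, ℤ)` over all finite index subgroups `Ĥ` of `Ghat`
(directed by reverse inclusion, with restriction as connecting maps) is isomorphic to
`⊕_{i ∈ ℕ} ℚ`. -/
theorem homDirectLimit_of_braid_quotient_iso_QInfty (n : ℕ) (hn : 4 ≤ n)
    (Ghat : Subgroup (BraidGroup n ⧸ Subgroup.center (BraidGroup n)))
    (hGhat : Ghat.FiniteIndex) :
    Nonempty (HomDirectLimit Ghat ≃+ (ℕ →₀ ℚ)) := by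
  have h1 : Group.FG (BraidGroup n) := by
    rw [Group.fg_iff]
    exact ⟨_, PresentedGroup.closure_range_of _, Set.finite_range _⟩
  have h2 : Group.FG (BraidGroup n ⧸ Subgroup.center (BraidGroup n)) := inferInstance
  have h3 : Group.FG Ghat := inferInstance
  have h4 : Countable (BraidGroup n) :=
    Function.Surjective.countable (PresentedGroup.mk_surjective (braidRels (n - 1)))
  have h5 : Countable (BraidGroup n ⧸ Subgroup.center (BraidGroup n)) := 
    Function.Surjective.countable (QuotientGroup.mk'_surjective _)
  exact limit_iso ((big_braid n hn).subgroup Ghat hGhat)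
end

section
/- Let G be a group with trivial center and A an abelian group, set Γ = G × A, and let ATv(Γ) be the kernel of the natural homomorphism Aut(Γ) → Aut(G) (induced by quotienting by the center Z(Γ) = {1} × A). Then: (1) the map Hom(G, A) → Aut(Γ) sending φ to the automorphism (g, a) ↦ (g, a·φ(g)) is an injective group homomorphism with image contained in ATv(Γ); (2) restriction of automorphisms to the center {1} × A ≅ A defines a homomorphism ATv(Γ) → Aut(A) which is surjective and split, a splitting being given by α ↦ id_G × α; (3) the kernel of this restriction homomorphism is exactly the image of Hom(G, A). Hence there is a split short exact sequence 1 → Hom(G, A) → ATv(Γ) → Aut(A) → 1. -/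
/-- STATEMENT 18: let `G` have trivial center, `A` be abelian, `Γ = G × A`, and let
`ATv(Γ)` be the kernel of the natural map `F : Aut(Γ) → Aut(G)` (characterized by
`F f g = (f (g,1)).1`).  Then: (1) `φ ↦ ((g,a) ↦ (g, a·φ(g)))` is an injective
homomorphism `Hom(G,A) → Aut(Γ)` with image inside `ATv(Γ)`; (2) restriction to the
center `{1} × A ≅ A` gives a surjective split homomorphism `ATv(Γ) → Aut(A)`, with
splitting `α ↦ id_G × α`; (3) its kernel is exactly the image of `Hom(G,A)`.  Hence
`1 → Hom(G,A) → ATv(Γ) → Aut(A) → 1` is split exact. -/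
theorem atv_of_prod_split_exact (G A : Type*) [Group G] [CommGroup A]
    (hG : Subgroup.center G = ⊥)
    (F : MulAut (G × A) →* MulAut G)
    (hF : ∀ (f : MulAut (G × A)) (g : G), F f g = (f (g, 1)).1) :
    ∃ j : (G →* A) →* MulAut (G × A),
      (∀ (φ : G →* A) (g : G) (a : A), j φ (g, a) = (g, a * φ g)) ∧
      Function.Injective j ∧
      (∀ φ : G →* A, j φ ∈ F.ker) ∧
      ∃ R : F.ker →* MulAut A,
        (∀ (f : F.ker) (a : A), R f a = ((f : MulAut (G × A)) (1, a)).2) ∧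
        Function.Surjective R ∧
        (∃ s : MulAut A →* F.ker,
          R.comp s = MonoidHom.id (MulAut A) ∧
          ∀ (α : MulAut A) (g : G) (a : A), ((s α : MulAut (G × A)) (g, a)) = (g, α a)) ∧
        ∀ f : F.ker, f ∈ R.ker ↔ ∃ φ : G →* A, (f : MulAut (G × A)) = j φ := by
  have hc : ∀ (f : MulAut (G × A)) (a : A), f (1, a) = (1, (f (1, a)).2) := by
    intro f a
    have h : (f (1, a)).1 ∈ Subgroup.center G := by
      rw [Subgroup.mem_center_iff]
      intro g
      have h1 : f.symm (g, 1) * (1, a) = (1, a) * f.symm (g, 1) := by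
        ext <;> simp [mul_comm]
      have h2 := congrArg (fun x => (f x).1) h1
      simpa using h2
    rw [hG, Subgroup.mem_bot] at h
    exact Prod.ext h rfl
  have hker : ∀ f : MulAut (G × A), f ∈ F.ker ↔ ∀ g, (f (g, 1)).1 = g := by
    intro f
    rw [MonoidHom.mem_ker]
    constructor
    · intro h g
      rw [← hF, h]; rfl
    · intro h
      ext g
      rw [hF, h]; rfl
  let jj : (G →* A) → MulAut (G × A) := fun φ =>
    { toFun := fun x => (x.1, x.2 * φ x.1)
      invFun := fun x => (x.1, x.2 * (φ x.1)⁻¹)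
      left_inv := fun x => by ext <;> simp
      right_inv := fun x => by ext <;> simp
      map_mul' := fun x y => by
        ext
        · simp
        · simp [mul_mul_mul_comm] }
  have hjj : ∀ φ x, jj φ x = (x.1, x.2 * φ x.1) := fun _ _ => rfl
  let j : (G →* A) →* MulAut (G × A) :=
    { toFun := jj
      map_one' := by
        apply MulEquiv.ext
        intro x
        simp [hjj]
      map_mul' := fun φ ψ => by
        apply MulEquiv.ext
        intro x
        rw [MulAut.mul_apply, hjj, hjj, hjj]
        simp [mul_comm, mul_left_comm] }
  have hj : ∀ φ x, j φ x = (x.1, x.2 * φ x.1) := fun _ _ => rfl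
  let RR : MulAut (G × A) → MulAut A := fun f =>
    { toFun := fun a => (f (1, a)).2
      invFun := fun a => (f.symm (1, a)).2
      left_inv := fun a => by
        change (f.symm (1, (f (1, a)).2)).2 = a
        rw [← hc f a]; simp
      right_inv := fun a => by
        change (f (1, (f.symm (1, a)).2)).2 = a
        have := hc f.symm a
        rw [← this]; simp
      map_mul' := fun a b => by
        rw [← Prod.snd_mul, ← map_mul]; simp }
  have hRR : ∀ f a, RR f a = (f (1, a)).2 := fun _ _ => rfl
  let R : F.ker →* MulAut A :=
    { toFun := fun f => RR f
      map_one' := by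
        apply MulEquiv.ext
        intro x
        simp [hRR]
      map_mul' := fun f g => by
        apply MulEquiv.ext
        intro x
        rw [MulAut.mul_apply, hRR, hRR, hRR, ← hc, Subgroup.coe_mul, MulAut.mul_apply] }
  have hR : ∀ (f : F.ker) (a : A), R f a = ((f : MulAut (G × A)) (1, a)).2 := fun _ _ => rfl
  let ss : MulAut A → MulAut (G × A) := fun α => MulEquiv.prodCongr (MulEquiv.refl G) α
  have hss : ∀ α x, ss α x = (x.1, α x.2) := fun _ _ => rfl
  let s : MulAut A →* F.ker :=
    { toFun := fun α => ⟨ss α, (hker _).2 fun g => rfl⟩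
      map_one' := by
        apply Subtype.ext
        apply MulEquiv.ext
        intro x
        rfl
      map_mul' := fun α β => by
        apply Subtype.ext
        apply MulEquiv.ext
        intro x
        rfl }
  have hRs : R.comp s = MonoidHom.id (MulAut A) := by
    apply MonoidHom.ext
    intro α
    apply MulEquiv.ext
    intro a
    rfl
  refine ⟨j, fun φ g a => rfl, ?_, fun φ => (hker _).2 fun g => rfl, R, hR,
    fun α => ⟨s α, DFunLike.congr_fun hRs α⟩, ⟨s, hRs, fun _ _ _ => rfl⟩, ?_⟩
  · intro φ ψ h
    ext g
    have := congrArg (fun f : MulAut (G × A) => (f (g, 1)).2) h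
    simpa [hj] using this
  · intro f
    rw [MonoidHom.mem_ker]
    constructor
    · intro h
      refine ⟨(MonoidHom.snd G A).comp
        ((f : MulAut (G × A)).toMonoidHom.comp (MonoidHom.inl G A)), ?_⟩
      apply MulEquiv.ext
      rintro ⟨g, a⟩
      have h1 : ((g, a) : G × A) = (1, a) * (g, 1) := by simp
      have h2 : ((f : MulAut (G × A)) (1, a)).2 = a := by
        rw [← hR, h]; rfl
      have h3 := (hker _).1 f.2 g
      rw [hj, h1, map_mul, hc, h2]
      ext
      · simp [h3]
      · simp
    · rintro ⟨φ, h⟩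
      apply MulEquiv.ext
      intro a
      rw [hR, h, hj]
      simp
end
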